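/- In the antithetic Milstein setting, for every real p ≥ 2 there exists a constant K_p, depending only on p, T, f and g, such that for every N ≥ 1 (with Δt = T/N), E[ max_{0 ≤ n ≤ N} ‖X̄_n − X^c_n‖^p ] ≤ K_p · Δt^p. -/

import Mathlib

open MeasureTheory ProbabilityTheory

/-- `h_{ijk}(x) = ½ ∑_l g_{lj}(x) ∂g_{ik}/∂x_l (x)`. -/
noncomputable def milsteinH {d m : ℕ} (g : (Fin d → ℝ) → Fin d → Fin m → ℝ)
    (x : Fin d → ℝ) (i : Fin d) (j k : Fin m) : ℝ :=
  1 / 2 * ∑ l : Fin d, g x l j * fderiv ℝ (fun y => g y i k) x (Pi.single l 1)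

/-- One step of the Milstein scheme with the Lévy areas omitted:
`x_i ↦ x_i + f_i(x) dt + ∑_j g_{ij}(x) dw_j + ∑_{j,k} h_{ijk}(x)(dw_j dw_k − δ_{jk} dt)`. -/
noncomputable def milsteinStep {d m : ℕ} (f : (Fin d → ℝ) → Fin d → ℝ)
    (g : (Fin d → ℝ) → Fin d → Fin m → ℝ) (dt : ℝ)
    (x : Fin d → ℝ) (dw : Fin m → ℝ) : Fin d → ℝ :=
  fun i => x i + f x i * dt + (∑ j : Fin m, g x i j * dw j)
    + ∑ j : Fin m, ∑ k : Fin m,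
        milsteinH g x i j k * (dw j * dw k - if j = k then dt else 0)

namespace AM

/-- Bundled probability space. -/
structure PS where
  Ω : Type
  ms : MeasurableSpace Ω
  μ : Measure Ω
  prob : IsProbabilityMeasure μ

attribute [instance] PS.ms PS.prob

/-- `Y` is a family of random variables whose `q`-th moments are bounded by a constant times `B q`. -/
def Bd {ι : Type*} (P : ι → PS) (B : ℕ → ι → ℝ) {E : Type*} [NormedAddCommGroup E]
    [MeasurableSpace E] (Y : ∀ i, (P i).Ω → E) : Prop :=
  (∀ i, Measurable (Y i)) ∧ ∀ q : ℕ, ∃ C : ℝ, 0 ≤ C ∧ ∀ i,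
    Integrable (fun ω => ‖Y i ω‖ ^ q) (P i).μ ∧ ∫ ω, ‖Y i ω‖ ^ q ∂(P i).μ ≤ C * B q i

/-- `Y = O(s^a)` in every `L^q`. -/
def IsO {ι : Type*} (P : ι → PS) (s : ι → ℝ) (a : ℕ) {E : Type*} [NormedAddCommGroup E]
    [MeasurableSpace E] (Y : ∀ i, (P i).Ω → E) : Prop :=
  Bd P (fun q i => (s i ^ a) ^ q) Y

section
variable {ι : Type*} {P : ι → PS} {B : ℕ → ι → ℝ} {s : ι → ℝ} {a b : ℕ}
variable {E F : Type*} [NormedAddCommGroup E] [MeasurableSpace E] [NormedAddCommGroup F]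
  [MeasurableSpace F]

lemma Bd.of_le [OpensMeasurableSpace E] {Y : ∀ i, (P i).Ω → E} {Z : ∀ i, (P i).Ω → F} (hZ : Bd P B Z)
    (hY : ∀ i, Measurable (Y i)) (K : ℝ) (hK : 0 ≤ K) (h : ∀ i ω, ‖Y i ω‖ ≤ K * ‖Z i ω‖) : Bd P B Y := by
  refine ⟨hY, fun q => ?_⟩
  obtain ⟨C, hC, h2⟩ := hZ.2 q
  refine ⟨K ^ q * C, by positivity, fun i => ?_⟩
  have hle : ∀ ω, ‖Y i ω‖ ^ q ≤ K ^ q * ‖Z i ω‖ ^ q := fun ω => by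
    rw [← mul_pow]; exact pow_le_pow_left₀ (norm_nonneg _) (h i ω) q
  have hi : Integrable (fun ω => K ^ q * ‖Z i ω‖ ^ q) (P i).μ := (h2 i).1.const_mul _
  have hi' : Integrable (fun ω => ‖Y i ω‖ ^ q) (P i).μ := by
    refine hi.mono' ((hY i).norm.pow_const q).aestronglyMeasurable (Filter.Eventually.of_forall fun ω => ?_)
    rw [Real.norm_of_nonneg (by positivity)]; exact hle ω
  refine ⟨hi', ?_⟩
  calc _ ≤ ∫ ω, K ^ q * ‖Z i ω‖ ^ q ∂(P i).μ := integral_mono hi' hi hle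
    _ = K ^ q * ∫ ω, ‖Z i ω‖ ^ q ∂(P i).μ := integral_const_mul _ _
    _ ≤ K ^ q * (C * B q i) := by gcongr; exact (h2 i).2
    _ = _ := by ring

lemma Bd.norm [OpensMeasurableSpace E] {Y : ∀ i, (P i).Ω → E} (hY : Bd P B Y) :
    Bd P B (fun i ω => ‖Y i ω‖) :=
  hY.of_le (fun i => (hY.1 i).norm) 1 zero_le_one (by simp)

lemma add_pow_le2 {x y : ℝ} (hx : 0 ≤ x) (hy : 0 ≤ y) (q : ℕ) :
    (x + y) ^ q ≤ 2 ^ q * (x ^ q + y ^ q) := by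
  have h1 : x + y ≤ 2 * max x y := by
    have := le_max_left x y; have := le_max_right x y; linarith
  have h2 : (max x y) ^ q ≤ x ^ q + y ^ q := by
    rcases max_cases x y with h | h <;> rw [h.1] <;> have := pow_nonneg hx q <;>
      have := pow_nonneg hy q <;> linarith
  calc _ ≤ (2 * max x y) ^ q := pow_le_pow_left₀ (by positivity) h1 q
    _ = 2 ^ q * (max x y) ^ q := mul_pow _ _ _
    _ ≤ _ := by gcongr

lemma Bd.add [OpensMeasurableSpace E] [MeasurableAdd₂ E] {Y Z : ∀ i, (P i).Ω → E}
    (hY : Bd P B Y) (hZ : Bd P B Z) : Bd P B (fun i ω => Y i ω + Z i ω) := by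
  refine ⟨fun i => (hY.1 i).add (hZ.1 i), fun q => ?_⟩
  obtain ⟨C, hC, h1⟩ := hY.2 q
  obtain ⟨C', hC', h2⟩ := hZ.2 q
  refine ⟨2 ^ q * (C + C'), by positivity, fun i => ?_⟩
  have hle : ∀ ω, ‖Y i ω + Z i ω‖ ^ q ≤ 2 ^ q * (‖Y i ω‖ ^ q + ‖Z i ω‖ ^ q) := fun ω =>
    (pow_le_pow_left₀ (norm_nonneg _) (norm_add_le _ _) q).trans
      (add_pow_le2 (norm_nonneg _) (norm_nonneg _) q)
  have hi : Integrable (fun ω => 2 ^ q * (‖Y i ω‖ ^ q + ‖Z i ω‖ ^ q)) (P i).μ :=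
    ((h1 i).1.add (h2 i).1).const_mul _
  have hi' : Integrable (fun ω => ‖Y i ω + Z i ω‖ ^ q) (P i).μ := by
    refine hi.mono' (((hY.1 i).add (hZ.1 i)).norm.pow_const q).aestronglyMeasurable
      (Filter.Eventually.of_forall fun ω => ?_)
    rw [Real.norm_of_nonneg (by positivity)]; exact hle ω
  refine ⟨hi', ?_⟩
  calc _ ≤ ∫ ω, 2 ^ q * (‖Y i ω‖ ^ q + ‖Z i ω‖ ^ q) ∂(P i).μ := integral_mono hi' hi hle
    _ = 2 ^ q * (∫ ω, ‖Y i ω‖ ^ q ∂(P i).μ + ∫ ω, ‖Z i ω‖ ^ q ∂(P i).μ) := by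
        rw [integral_const_mul, integral_add (h1 i).1 (h2 i).1]
    _ ≤ 2 ^ q * (C * B q i + C' * B q i) := by
        gcongr
        · exact (h1 i).2
        · exact (h2 i).2
    _ = _ := by ring

lemma Bd.neg [OpensMeasurableSpace E] [MeasurableNeg E] {Y : ∀ i, (P i).Ω → E}
    (hY : Bd P B Y) : Bd P B (fun i ω => - Y i ω) :=
  hY.of_le (fun i => (hY.1 i).neg) 1 zero_le_one (by simp)

lemma Bd.sub [OpensMeasurableSpace E] [MeasurableAdd₂ E] [MeasurableNeg E] {Y Z : ∀ i, (P i).Ω → E}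
    (hY : Bd P B Y) (hZ : Bd P B Z) : Bd P B (fun i ω => Y i ω - Z i ω) := by
  simpa [sub_eq_add_neg] using hY.add hZ.neg

lemma Bd.smul [OpensMeasurableSpace E] [NormedSpace ℝ E] [MeasurableConstSMul ℝ E] {Y : ∀ i, (P i).Ω → E}
    (c : ℝ) (hY : Bd P B Y) : Bd P B (fun i ω => c • Y i ω) :=
  hY.of_le (fun i => (hY.1 i).const_smul c) |c| (abs_nonneg _) (fun i ω => by simp [norm_smul])

lemma Bd.comp {κ : Type*} (φ : κ → ι) {Y : ∀ i, (P i).Ω → E} (hY : Bd P B Y) :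
    Bd (fun k => P (φ k)) (fun q k => B q (φ k)) (fun k => Y (φ k)) :=
  ⟨fun k => hY.1 _, fun q => by
    obtain ⟨C, hC, h⟩ := hY.2 q
    exact ⟨C, hC, fun k => h _⟩⟩

lemma Bd.mono_B {B' : ℕ → ι → ℝ} {Y : ∀ i, (P i).Ω → E} (hY : Bd P B Y)
    (h : ∀ q, ∃ K, 0 ≤ K ∧ ∀ i, B q i ≤ K * B' q i) : Bd P B' Y :=
  ⟨hY.1, fun q => by
    obtain ⟨C, hC, h1⟩ := hY.2 q
    obtain ⟨K, hK, h2⟩ := h q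
    refine ⟨C * K, by positivity, fun i => ⟨(h1 i).1, (h1 i).2.trans ?_⟩⟩
    rw [mul_assoc]; gcongr; exact h2 i⟩

/-- products -/
lemma IsO.mul {Y Z : ∀ i, (P i).Ω → ℝ} (hs : ∀ i, 0 < s i)
    (hY : IsO P s a Y) (hZ : IsO P s b Z) : IsO P s (a + b) (fun i ω => Y i ω * Z i ω) := by
  refine ⟨fun i => (hY.1 i).mul (hZ.1 i), fun q => ?_⟩
  obtain ⟨C, hC, h1⟩ := hY.2 (2 * q)
  obtain ⟨C', hC', h2⟩ := hZ.2 (2 * q)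
  refine ⟨C + C', by positivity, fun i => ?_⟩
  set A := (s i ^ a) ^ q with hA
  set D := (s i ^ b) ^ q with hD
  have hA0 : 0 < A := by have := hs i; positivity
  have hD0 : 0 < D := by have := hs i; positivity
  have hle : ∀ ω, ‖Y i ω * Z i ω‖ ^ q ≤ (D / A) * ‖Y i ω‖ ^ (2 * q) + (A / D) * ‖Z i ω‖ ^ (2 * q) := fun ω => by
    rw [norm_mul, mul_pow, pow_mul', pow_mul']
    set y := ‖Y i ω‖ ^ q
    set z := ‖Z i ω‖ ^ q
    have hy : 0 ≤ y := by positivity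
    have hz : 0 ≤ z := by positivity
    have : (D / A) * y ^ 2 + (A / D) * z ^ 2 - y * z = ((D * y - A * z) ^ 2 + D * A * (y * z)) / (A * D) := by
      field_simp; ring
    have h3 : 0 ≤ ((D * y - A * z) ^ 2 + D * A * (y * z)) / (A * D) := by positivity
    linarith
  have hi : Integrable (fun ω => (D / A) * ‖Y i ω‖ ^ (2 * q) + (A / D) * ‖Z i ω‖ ^ (2 * q)) (P i).μ :=
    ((h1 i).1.const_mul _).add ((h2 i).1.const_mul _)
  have hi' : Integrable (fun ω => ‖Y i ω * Z i ω‖ ^ q) (P i).μ := by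
    refine hi.mono' (((hY.1 i).mul (hZ.1 i)).norm.pow_const q).aestronglyMeasurable
      (Filter.Eventually.of_forall fun ω => ?_)
    rw [Real.norm_of_nonneg (by positivity)]; exact hle ω
  refine ⟨hi', ?_⟩
  calc _ ≤ ∫ ω, ((D / A) * ‖Y i ω‖ ^ (2 * q) + (A / D) * ‖Z i ω‖ ^ (2 * q)) ∂(P i).μ :=
        integral_mono hi' hi hle
    _ = (D / A) * ∫ ω, ‖Y i ω‖ ^ (2 * q) ∂(P i).μ + (A / D) * ∫ ω, ‖Z i ω‖ ^ (2 * q) ∂(P i).μ := by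
        rw [integral_add ((h1 i).1.const_mul _) ((h2 i).1.const_mul _), integral_const_mul, integral_const_mul]
    _ ≤ (D / A) * (C * A ^ 2) + (A / D) * (C' * D ^ 2) := by
        gcongr
        · exact (h1 i).2.trans_eq (by rw [hA]; ring)
        · exact (h2 i).2.trans_eq (by rw [hD]; ring)
    _ = (C + C') * (A * D) := by field_simp
    _ = _ := by rw [hA, hD, ← mul_pow, ← pow_add]

lemma IsO.weaken {Y : ∀ i, (P i).Ω → E} (hs : ∀ i, 0 < s i) (S : ℝ) (hS : ∀ i, s i ≤ S)
    (hab : a ≤ b) (hY : IsO P s b Y) : IsO P s a Y := by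
  refine Bd.mono_B hY fun q => ⟨(|S| ^ (b - a)) ^ q, by positivity, fun i => ?_⟩
  have := hs i
  rw [← mul_pow]
  refine pow_le_pow_left₀ (by positivity) ?_ q
  calc s i ^ b = s i ^ (b - a) * s i ^ a := by rw [← pow_add]; congr 1; omega
    _ ≤ _ := by gcongr; exact (hS i).trans (le_abs_self _)

lemma IsO.const [OpensMeasurableSpace E] (c : ι → E) (K : ℝ) (hK : 0 ≤ K) (h : ∀ i, ‖c i‖ ≤ K * s i ^ a) :
    IsO P s a (fun i _ => c i) := by
  refine ⟨fun i => measurable_const, fun q => ⟨K ^ q, by positivity, fun i => ⟨integrable_const _, ?_⟩⟩⟩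
  simp only [integral_const, probReal_univ, one_smul]
  rw [← mul_pow]
  exact pow_le_pow_left₀ (norm_nonneg _) (h i) q

lemma IsO.congr_exp {Y : ∀ i, (P i).Ω → E} (hY : IsO P s a Y) (h : a = b) : IsO P s b Y := h ▸ hY

/-- all moments finite -/
def AllMom (P : PS) {E : Type*} [NormedAddCommGroup E] [MeasurableSpace E] (Y : P.Ω → E) : Prop :=
  IsO (fun _ : Unit => P) (fun _ => 1) 0 (fun _ => Y)

lemma Bd.allMom {Y : ∀ i, (P i).Ω → E} (hY : Bd P B Y) (i : ι) : AllMom (P i) (Y i) := by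
  refine ⟨fun _ => hY.1 i, fun q => ?_⟩
  obtain ⟨C, hC, h⟩ := hY.2 q
  refine ⟨|C * B q i|, abs_nonneg _, fun _ => ⟨(h i).1, (h i).2.trans ?_⟩⟩
  simpa using le_abs_self (C * B q i)

variable {Q : PS}

lemma allMom_iff {Y : Q.Ω → E} : AllMom Q Y ↔ Measurable Y ∧ ∀ q : ℕ, Integrable (fun ω => ‖Y ω‖ ^ q) Q.μ := by
  constructor
  · intro h
    exact ⟨h.1 (), fun q => by obtain ⟨C, hC, h⟩ := h.2 q; exact (h ()).1⟩
  · rintro ⟨h1, h2⟩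
    refine ⟨fun _ => h1, fun q => ⟨∫ ω, ‖Y ω‖ ^ q ∂Q.μ, integral_nonneg fun _ => by positivity, fun _ => ⟨h2 q, by simp⟩⟩⟩

lemma AllMom.meas {Y : Q.Ω → E} (h : AllMom Q Y) : Measurable Y := (allMom_iff.1 h).1
lemma AllMom.int_pow {Y : Q.Ω → E} (h : AllMom Q Y) (q : ℕ) : Integrable (fun ω => ‖Y ω‖ ^ q) Q.μ :=
  (allMom_iff.1 h).2 q
lemma AllMom.int {Y : Q.Ω → ℝ} (h : AllMom Q Y) : Integrable Y Q.μ := by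
  have := h.int_pow 1
  simp only [pow_one] at this
  exact (integrable_norm_iff h.meas.aestronglyMeasurable).1 this
lemma AllMom.mul {Y Z : Q.Ω → ℝ} (hY : AllMom Q Y) (hZ : AllMom Q Z) : AllMom Q (fun ω => Y ω * Z ω) :=
  IsO.mul (a := 0) (b := 0) (fun _ => one_pos) hY hZ
lemma AllMom.add [OpensMeasurableSpace E] [MeasurableAdd₂ E] {Y Z : Q.Ω → E} (hY : AllMom Q Y) (hZ : AllMom Q Z) : AllMom Q (fun ω => Y ω + Z ω) :=
  Bd.add hY hZ
lemma AllMom.neg [OpensMeasurableSpace E] [MeasurableNeg E] {Y : Q.Ω → E} (hY : AllMom Q Y) : AllMom Q (fun ω => - Y ω) :=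
  Bd.neg hY
lemma AllMom.sub [OpensMeasurableSpace E] [MeasurableAdd₂ E] [MeasurableNeg E] {Y Z : Q.Ω → E} (hY : AllMom Q Y) (hZ : AllMom Q Z) : AllMom Q (fun ω => Y ω - Z ω) :=
  Bd.sub hY hZ
lemma AllMom.norm [OpensMeasurableSpace E] {Y : Q.Ω → E} (hY : AllMom Q Y) : AllMom Q (fun ω => ‖Y ω‖) :=
  Bd.norm hY
lemma AllMom.const [OpensMeasurableSpace E] (c : E) : AllMom Q (fun _ => c) :=
  IsO.const (fun _ => c) ‖c‖ (norm_nonneg _) (by simp)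
lemma AllMom.of_le [OpensMeasurableSpace E] {Y : Q.Ω → E} {Z : Q.Ω → F} (hZ : AllMom Q Z)
    (hY : Measurable Y) (K : ℝ) (hK : 0 ≤ K) (h : ∀ ω, ‖Y ω‖ ≤ K * ‖Z ω‖) : AllMom Q Y :=
  Bd.of_le hZ (fun _ => hY) K hK (fun _ => h)
lemma AllMom.pow {Y : Q.Ω → ℝ} (hY : AllMom Q Y) (n : ℕ) : AllMom Q (fun ω => Y ω ^ n) := by
  induction n with
  | zero => simpa using AllMom.const (1 : ℝ)
  | succ n ih => simpa [pow_succ] using ih.mul hY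
lemma AllMom.sum {κ : Type*} (t : Finset κ) {Y : κ → Q.Ω → ℝ} (hY : ∀ k ∈ t, AllMom Q (Y k)) :
    AllMom Q (fun ω => ∑ k ∈ t, Y k ω) := by
  classical
  induction t using Finset.induction_on with
  | empty => simpa using AllMom.const (0 : ℝ)
  | insert k t hk ih =>
    simp only [Finset.sum_insert hk]
    exact (hY k (by simp)).add (ih fun j hj => hY j (by simp [hj]))
lemma AllMom.apply {d : ℕ} {Y : Q.Ω → Fin d → ℝ} (hY : AllMom Q Y) (i : Fin d) : AllMom Q (fun ω => Y ω i) :=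
  hY.of_le ((measurable_pi_apply i).comp hY.meas) 1 zero_le_one (fun ω => by
    rw [one_mul]; exact norm_le_pi_norm _ i)

/-- `Y` is orthogonal to everything measurable with respect to `m`. -/
def MZ (Q : PS) (m : MeasurableSpace Q.Ω) (Y : Q.Ω → ℝ) : Prop :=
  AllMom Q Y ∧ ∀ A : Q.Ω → ℝ, Measurable[m] A → AllMom Q A → ∫ ω, A ω * Y ω ∂Q.μ = 0

variable {m m' : MeasurableSpace Q.Ω}

lemma MZ.add {Y Z : Q.Ω → ℝ} (hY : MZ Q m Y) (hZ : MZ Q m Z) : MZ Q m (fun ω => Y ω + Z ω) :=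
  ⟨hY.1.add hZ.1, fun A hA hA' => by
    simp only [mul_add]
    rw [integral_add (hA'.mul hY.1).int (hA'.mul hZ.1).int, hY.2 A hA hA', hZ.2 A hA hA', add_zero]⟩
lemma MZ.const_mul {Y : Q.Ω → ℝ} (c : ℝ) (hY : MZ Q m Y) : MZ Q m (fun ω => c * Y ω) :=
  ⟨(AllMom.const c).mul hY.1, fun A hA hA' => by
    have := hY.2 (fun ω => c * A ω) (hA.const_mul c) ((AllMom.const c).mul hA')
    rw [← this]; congr 1; ext ω; ring⟩
lemma MZ.neg {Y : Q.Ω → ℝ} (hY : MZ Q m Y) : MZ Q m (fun ω => - Y ω) := by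
  simpa using hY.const_mul (-1)
lemma MZ.sub {Y Z : Q.Ω → ℝ} (hY : MZ Q m Y) (hZ : MZ Q m Z) : MZ Q m (fun ω => Y ω - Z ω) := by
  simpa [sub_eq_add_neg] using hY.add hZ.neg
lemma MZ.sum {κ : Type*} (t : Finset κ) {Y : κ → Q.Ω → ℝ} (hY : ∀ k ∈ t, MZ Q m (Y k)) :
    MZ Q m (fun ω => ∑ k ∈ t, Y k ω) := by
  classical
  induction t using Finset.induction_on with
  | empty => exact ⟨by simpa using AllMom.const (0 : ℝ), by simp⟩
  | insert k t hk ih =>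
    simp only [Finset.sum_insert hk]
    exact (hY k (by simp)).add (ih fun j hj => hY j (by simp [hj]))
lemma MZ.mul_left {B Y : Q.Ω → ℝ} (hB : Measurable[m] B) (hB' : AllMom Q B) (hY : MZ Q m Y) :
    MZ Q m (fun ω => B ω * Y ω) :=
  ⟨hB'.mul hY.1, fun A hA hA' => by
    have := hY.2 (fun ω => A ω * B ω) (hA.mul hB) (hA'.mul hB')
    rw [← this]; congr 1; ext ω; ring⟩
lemma MZ.mono {Y : Q.Ω → ℝ} (hm : m ≤ m') (hY : MZ Q m' Y) : MZ Q m Y :=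
  ⟨hY.1, fun A hA hA' => hY.2 A (hA.mono hm le_rfl) hA'⟩

lemma indep_integral_mul {m₂ : MeasurableSpace Q.Ω} (hm : m ≤ Q.ms) (hm₂ : m₂ ≤ Q.ms) (hind : Indep m₂ m Q.μ)
    {A Y : Q.Ω → ℝ} (hA : Measurable[m] A) (hY : Measurable[m₂] Y) :
    ∫ ω, A ω * Y ω ∂Q.μ = (∫ ω, A ω ∂Q.μ) * ∫ ω, Y ω ∂Q.μ := by
  have : IndepFun A Y Q.μ := by
    rw [IndepFun_iff_Indep]
    exact indep_of_indep_of_le_left (indep_of_indep_of_le_right hind.symm hY.comap_le) hA.comap_le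
  exact this.integral_fun_mul_eq_mul_integral (hA.mono hm le_rfl).aestronglyMeasurable
    (hY.mono hm₂ le_rfl).aestronglyMeasurable

lemma MZ.of_indep {m₂ : MeasurableSpace Q.Ω} (hm : m ≤ Q.ms) (hm₂ : m₂ ≤ Q.ms) (hind : Indep m₂ m Q.μ)
    {Y : Q.Ω → ℝ} (hY : Measurable[m₂] Y) (hY' : AllMom Q Y) (h0 : ∫ ω, Y ω ∂Q.μ = 0) : MZ Q m Y :=
  ⟨hY', fun A hA hA' => by rw [indep_integral_mul hm hm₂ hind hA hY, h0, mul_zero]⟩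
end
end AM

namespace AM

lemma pow_expand (n : ℕ) : ∃ C : ℝ, 0 ≤ C ∧ ∀ z a : ℝ,
    |(z + a) ^ (n + 2) - z ^ (n + 2) - (n + 2) * z ^ (n + 1) * a| ≤ C * a ^ 2 * (|z| + |a|) ^ n := by
  induction n with
  | zero => exact ⟨1, zero_le_one, fun z a => by
      have : (z + a) ^ (0 + 2) - z ^ (0 + 2) - ((0 : ℕ) + 2) * z ^ (0 + 1) * a = a ^ 2 := by push_cast; ring
      rw [this, abs_of_nonneg (sq_nonneg a)]; simp⟩
  | succ n ih =>
    obtain ⟨C, hC, h⟩ := ih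
    refine ⟨C + (n + 2), by positivity, fun z a => ?_⟩
    have e : (z + a) ^ (n + 1 + 2) - z ^ (n + 1 + 2) - ((n + 1 : ℕ) + 2) * z ^ (n + 1 + 1) * a
        = (z + a) * ((z + a) ^ (n + 2) - z ^ (n + 2) - (n + 2) * z ^ (n + 1) * a)
          + (n + 2) * (z ^ (n + 1) * a ^ 2) := by push_cast; ring
    rw [e]
    refine (abs_add_le _ _).trans ?_
    rw [abs_mul, abs_mul, abs_mul, abs_pow z, abs_of_nonneg (sq_nonneg a),
      abs_of_nonneg (by positivity : (0 : ℝ) ≤ n + 2)]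
    have h1 : |z + a| ≤ |z| + |a| := abs_add_le _ _
    have h2 : |z| ^ (n + 1) ≤ (|z| + |a|) ^ (n + 1) :=
      pow_le_pow_left₀ (abs_nonneg _) (by linarith [abs_nonneg a]) _
    calc _ ≤ (|z| + |a|) * (C * a ^ 2 * (|z| + |a|) ^ n) + (n + 2) * ((|z| + |a|) ^ (n + 1) * a ^ 2) := by
          gcongr; exact h z a
      _ = _ := by ring

lemma step_ineq (n : ℕ) (S : ℝ) (hS : 0 ≤ S) : ∃ K : ℝ, 0 ≤ K ∧ ∀ z D M s : ℝ, 0 ≤ s → s ≤ S →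
    (z + s ^ 2 * D + s * M) ^ (n + 2) ≤ z ^ (n + 2) + (n + 2) * z ^ (n + 1) * (s * M)
      + K * s ^ 2 * (|z| ^ (n + 2) + |D| ^ (n + 2) + |M| ^ (n + 2)) := by
  obtain ⟨C, hC, h⟩ := pow_expand n
  refine ⟨((n + 2) + C * (S + 1) ^ 2 * (1 + S * (S + 1)) ^ n) * 4 ^ (n + 2), by positivity,
    fun z D M s hs hsS => ?_⟩
  set b := |z| + |D| + |M| with hb
  have hb0 : 0 ≤ b := by positivity
  have ha : |s ^ 2 * D + s * M| ≤ s * (S + 1) * b := by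
    calc _ ≤ |s ^ 2 * D| + |s * M| := abs_add_le _ _
      _ = s * (s * |D| + |M|) := by rw [abs_mul, abs_mul, abs_of_nonneg hs, abs_of_nonneg (sq_nonneg s)]; ring
      _ ≤ s * (S * |D| + |M|) := by gcongr
      _ ≤ s * ((S + 1) * b) := by
          gcongr
          have := abs_nonneg D; have := abs_nonneg z; have := abs_nonneg M
          rw [hb]; nlinarith [mul_nonneg hS (abs_nonneg z), mul_nonneg hS (abs_nonneg M)]
      _ = _ := by ring
  have h1 := (abs_le.1 (h z (s ^ 2 * D + s * M))).2
  have hz : |z| ≤ b := by have := abs_nonneg D; have := abs_nonneg M; linarith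
  have hDb : |D| ≤ b := by have := abs_nonneg z; have := abs_nonneg M; linarith
  have h2 : C * (s ^ 2 * D + s * M) ^ 2 * (|z| + |s ^ 2 * D + s * M|) ^ n
      ≤ C * (S + 1) ^ 2 * (1 + S * (S + 1)) ^ n * s ^ 2 * b ^ (n + 2) := by
    calc _ = C * |s ^ 2 * D + s * M| ^ 2 * (|z| + |s ^ 2 * D + s * M|) ^ n := by rw [sq_abs]
      _ ≤ C * (s * (S + 1) * b) ^ 2 * (b + S * (S + 1) * b) ^ n := by
          gcongr
          exact ha.trans (by gcongr)
      _ = C * (s * (S + 1) * b) ^ 2 * ((1 + S * (S + 1)) * b) ^ n := by ring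
      _ = _ := by rw [mul_pow (1 + S * (S + 1))]; ring
  have h3 : z ^ (n + 1) * D ≤ b ^ (n + 2) := by
    calc _ ≤ |z ^ (n + 1) * D| := le_abs_self _
      _ = |z| ^ (n + 1) * |D| := by rw [abs_mul, abs_pow]
      _ ≤ b ^ (n + 1) * b := by gcongr
      _ = _ := by ring
  have h4 : b ^ (n + 2) ≤ 4 ^ (n + 2) * (|z| ^ (n + 2) + |D| ^ (n + 2) + |M| ^ (n + 2)) := by
    have e1 := add_pow_le2 (by positivity : 0 ≤ |z| + |D|) (abs_nonneg M) (n + 2)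
    have e2 := add_pow_le2 (abs_nonneg z) (abs_nonneg D) (n + 2)
    have e3 : (1 : ℝ) ≤ 2 ^ (n + 2) := one_le_pow₀ (by norm_num)
    have e4 : (4 : ℝ) ^ (n + 2) = 2 ^ (n + 2) * 2 ^ (n + 2) := by rw [← mul_pow]; norm_num
    calc _ ≤ 2 ^ (n + 2) * ((|z| + |D|) ^ (n + 2) + |M| ^ (n + 2)) := e1
      _ ≤ 2 ^ (n + 2) * (2 ^ (n + 2) * (|z| ^ (n + 2) + |D| ^ (n + 2)) + 2 ^ (n + 2) * |M| ^ (n + 2)) := by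
          gcongr
          exact le_mul_of_one_le_left (by positivity) e3
      _ = _ := by rw [e4]; ring
  have h5 : (n + 2 : ℝ) * s ^ 2 * (z ^ (n + 1) * D) ≤ (n + 2) * s ^ 2 * b ^ (n + 2) := by gcongr
  calc _ = (z + (s ^ 2 * D + s * M)) ^ (n + 2) := by ring
    _ ≤ z ^ (n + 2) + (n + 2) * z ^ (n + 1) * (s * M) + ((n + 2) * s ^ 2 * (z ^ (n + 1) * D)
        + C * (s ^ 2 * D + s * M) ^ 2 * (|z| + |s ^ 2 * D + s * M|) ^ n) := by linarith
    _ ≤ z ^ (n + 2) + (n + 2) * z ^ (n + 1) * (s * M) + ((n + 2) * s ^ 2 * b ^ (n + 2)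
        + C * (S + 1) ^ 2 * (1 + S * (S + 1)) ^ n * s ^ 2 * b ^ (n + 2)) := by gcongr
    _ = z ^ (n + 2) + (n + 2) * z ^ (n + 1) * (s * M) + ((n + 2) + C * (S + 1) ^ 2 * (1 + S * (S + 1)) ^ n) * s ^ 2
        * b ^ (n + 2) := by ring
    _ ≤ z ^ (n + 2) + (n + 2) * z ^ (n + 1) * (s * M) + ((n + 2) + C * (S + 1) ^ 2 * (1 + S * (S + 1)) ^ n) * s ^ 2
        * (4 ^ (n + 2) * (|z| ^ (n + 2) + |D| ^ (n + 2) + |M| ^ (n + 2))) := by gcongr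
    _ = _ := by ring

/-- A time grid with `N` steps of length `s²` and a filtration. -/
structure Grid (T : ℝ) where
  P : PS
  N : ℕ
  hN : 1 ≤ N
  s : ℝ
  hs : 0 < s
  hT : N * s ^ 2 = T
  F : ℕ → MeasurableSpace P.Ω
  F_le : ∀ n, F n ≤ P.ms
  F_mono : Monotone F

lemma Grid.s_le {T : ℝ} (G : Grid T) : G.s ≤ Real.sqrt T := by
  refine Real.le_sqrt_of_sq_le ?_
  have h := G.hT
  have : (1 : ℝ) ≤ G.N := by exact_mod_cast G.hN
  nlinarith [sq_nonneg G.s]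

abbrev Steps {T : ℝ} {C : Type*} (G : C → Grid T) := Σ c, Fin (G c).N
abbrev Times {T : ℝ} {C : Type*} (G : C → Grid T) := Σ c, Fin ((G c).N + 1)

/-- Bounds relative to a reference family `e` -/
def Rel {ι : Type*} (P : ι → PS) (s : ι → ℝ) {H : Type*} [NormedAddCommGroup H]
    (e : ∀ i, (P i).Ω → H) (a b : ℕ) {E : Type*} [NormedAddCommGroup E]
    [MeasurableSpace E] (Y : ∀ i, (P i).Ω → E) : Prop :=
  Bd P (fun q i => (s i ^ b) ^ q * (∫ ω, ‖e i ω‖ ^ q ∂(P i).μ + (s i ^ a) ^ q)) Y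

lemma IsO.rel {ι : Type*} {P : ι → PS} {s : ι → ℝ} (hs : ∀ i, 0 < s i) {H : Type*} [NormedAddCommGroup H]
    (e : ∀ i, (P i).Ω → H) (a b : ℕ) {E : Type*} [NormedAddCommGroup E]
    [MeasurableSpace E] {Y : ∀ i, (P i).Ω → E} {c : ℕ} (hY : IsO P s c Y) (hc : c = a + b) : Rel P s e a b Y := by
  subst hc
  refine Bd.mono_B hY fun q => ⟨1, zero_le_one, fun i => ?_⟩
  have h1 : 0 ≤ ∫ ω, ‖e i ω‖ ^ q ∂(P i).μ := integral_nonneg fun _ => by positivity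
  have := hs i
  rw [pow_add, mul_pow, one_mul, mul_comm]
  gcongr
  linarith

lemma pi_norm_pow_le {d : ℕ} (x : Fin d → ℝ) (q : ℕ) : ‖x‖ ^ (q + 1) ≤ ∑ i, |x i| ^ (q + 1) := by
  by_cases hd : Nonempty (Fin d)
  · obtain ⟨i, hi⟩ : ∃ i, ‖x‖ = ‖x i‖ := by
      obtain ⟨i, -, hi⟩ := Finset.exists_mem_eq_sup' (Finset.univ_nonempty (α := Fin d)) (fun i => ‖x i‖)
      refine ⟨i, le_antisymm ((pi_norm_le_iff_of_nonneg (norm_nonneg _)).2 fun j => ?_) (norm_le_pi_norm x i)⟩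
      rw [← hi]; exact Finset.le_sup' (fun i => ‖x i‖) (Finset.mem_univ j)
    rw [hi, Real.norm_eq_abs]
    exact Finset.single_le_sum (f := fun i => |x i| ^ (q + 1)) (fun i _ => by positivity) (Finset.mem_univ i)
  · rw [not_nonempty_iff] at hd
    have : x = 0 := Subsingleton.elim _ _
    simp [this]

theorem propagation {T : ℝ} {C : Type*} (G : C → Grid T) {d : ℕ} (a : ℕ)
    (e : ∀ c, ℕ → (G c).P.Ω → Fin d → ℝ)
    (D M : ∀ x : Steps G, (G x.1).P.Ω → Fin d → ℝ)
    (he : ∀ c n, n ≤ (G c).N → AllMom (G c).P (e c n))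
    (hF : ∀ c n, n ≤ (G c).N → Measurable[(G c).F n] (e c n))
    (K0 : ℝ) (hK0 : 0 ≤ K0) (h0 : ∀ c ω, ‖e c 0 ω‖ ≤ K0 * (G c).s ^ a)
    (hstep : ∀ (x : Steps G) ω, e x.1 (x.2 + 1) ω = e x.1 x.2 ω + D x ω + M x ω)
    (hD : Rel (fun x : Steps G => (G x.1).P) (fun x => (G x.1).s) (fun x => e x.1 x.2) a 2 D)
    (hM : Rel (fun x : Steps G => (G x.1).P) (fun x => (G x.1).s) (fun x => e x.1 x.2) a 1 M)
    (hMZ : ∀ (x : Steps G) i, MZ (G x.1).P ((G x.1).F x.2) (fun ω => M x ω i)) :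
    IsO (fun y : Times G => (G y.1).P) (fun y => (G y.1).s) a (fun y => e y.1 y.2) := by
  have key : ∀ k : ℕ, ∃ K : ℝ, 0 ≤ K ∧ ∀ c n, n ≤ (G c).N →
      ∫ ω, ‖e c n ω‖ ^ (2 * k + 2) ∂(G c).P.μ ≤ K * ((G c).s ^ a) ^ (2 * k + 2) := by
    intro k
    obtain ⟨A, hA, h1⟩ := hD.2 (2 * k + 2)
    obtain ⟨A', hA', h2⟩ := hM.2 (2 * k + 2)
    obtain ⟨K, hK, hineq⟩ := step_ineq (2 * k) (Real.sqrt T) (Real.sqrt_nonneg T)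
    set K' := K * (1 + d * (A + A')) with hK'
    have hK'0 : 0 ≤ K' := by positivity
    refine ⟨Real.exp (K' * T) * (d * K0 ^ (2 * k + 2) + 1), by positivity, fun c n hn => ?_⟩
    set q := 2 * k + 2 with hq
    have hqe : Even q := ⟨k + 1, by omega⟩
    set s := (G c).s with hs
    have hs0 : 0 < s := (G c).hs
    set r := (s ^ a) ^ q with hr
    have hr0 : 0 < r := by positivity
    set μ := (G c).P.μ with hμ
    set V : ℕ → ℝ := fun n => ∑ i, ∫ ω, |e c n ω i| ^ q ∂μ with hV
    have hIntg : ∀ n ≤ (G c).N, ∀ i, Integrable (fun ω => |e c n ω i| ^ q) μ := fun n hn i =>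
      ((he c n hn).apply i).int_pow q
    have hVnorm : ∀ n ≤ (G c).N, ∫ ω, ‖e c n ω‖ ^ q ∂μ ≤ V n := by
      intro n hn
      rw [hV]
      simp only
      rw [← integral_finsetSum _ (fun i _ => hIntg n hn i)]
      exact integral_mono ((he c n hn).int_pow q) (integrable_finsetSum _ fun i _ => hIntg n hn i)
        (fun ω => pi_norm_pow_le _ _)
    have hstepV : ∀ n < (G c).N, V (n + 1) + r ≤ (1 + K' * s ^ 2) * (V n + r) := by
      intro n hn
      set x : Steps G := ⟨c, ⟨n, hn⟩⟩ with hx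
      have hcomp : ∀ i, ∫ ω, |e c (n + 1) ω i| ^ q ∂μ ≤ ∫ ω, |e c n ω i| ^ q ∂μ +
          K * s ^ 2 * (∫ ω, |e c n ω i| ^ q ∂μ + A * (V n + r) + A' * (V n + r)) := by
        intro i
        have hDm : AllMom (G c).P (fun ω => D x ω i) := (hD.allMom x).apply i
        have hMm : AllMom (G c).P (fun ω => M x ω i) := (hM.allMom x).apply i
        have hem : AllMom (G c).P (fun ω => e c n ω i) := (he c n hn.le).apply i
        have hD' : AllMom (G c).P (fun ω => (s ^ 2)⁻¹ * D x ω i) := (AllMom.const _).mul hDm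
        have hM' : AllMom (G c).P (fun ω => s⁻¹ * M x ω i) := (AllMom.const _).mul hMm
        have hpt : ∀ ω, |e c (n + 1) ω i| ^ q ≤ |e c n ω i| ^ q + (2 * k + 2) * (e c n ω i ^ (2 * k + 1) * M x ω i)
            + K * s ^ 2 * (|e c n ω i| ^ q + |(s ^ 2)⁻¹ * D x ω i| ^ q + |s⁻¹ * M x ω i| ^ q) := by
          intro ω
          have h := hineq (e c n ω i) ((s ^ 2)⁻¹ * D x ω i) (s⁻¹ * M x ω i) s hs0.le (G c).s_le
          have e1 : s ^ 2 * ((s ^ 2)⁻¹ * D x ω i) = D x ω i := by field_simp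
          have e2 : s * (s⁻¹ * M x ω i) = M x ω i := by field_simp
          have e3 : e c (n + 1) ω i = e c n ω i + D x ω i + M x ω i := congrFun (hstep x ω) i
          rw [e1, e2, ← e3] at h
          rw [hqe.pow_abs (e c (n + 1) ω i)]
          have e4 : |e c n ω i| ^ q = e c n ω i ^ q := hqe.pow_abs _
          rw [e4]
          rw [e4] at h
          refine h.trans (le_of_eq ?_)
          push_cast; ring
        have i1 := hIntg n hn.le i
        have i2 : Integrable (fun ω => e c n ω i ^ (2 * k + 1) * M x ω i) μ := ((hem.pow _).mul hMm).int
        have i3 : Integrable (fun ω => |(s ^ 2)⁻¹ * D x ω i| ^ q) μ := hD'.int_pow q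
        have i4 : Integrable (fun ω => |s⁻¹ * M x ω i| ^ q) μ := hM'.int_pow q
        have hz : ∫ ω, e c n ω i ^ (2 * k + 1) * M x ω i ∂μ = 0 :=
          (hMZ x i).2 _ (((measurable_pi_apply i).comp (hF c n hn.le)).pow_const _) (hem.pow _)
        have hb1 : ∫ ω, |(s ^ 2)⁻¹ * D x ω i| ^ q ∂μ ≤ A * (V n + r) := by
          have := (h1 x).2
          calc _ = ((s ^ 2)⁻¹) ^ q * ∫ ω, |D x ω i| ^ q ∂μ := by
                rw [← integral_const_mul]; congr 1; ext ω
                rw [abs_mul, mul_pow, abs_of_nonneg (by positivity : 0 ≤ (s ^ 2)⁻¹)]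
            _ ≤ ((s ^ 2)⁻¹) ^ q * ∫ ω, ‖D x ω‖ ^ q ∂μ := by
                gcongr
                · exact hDm.int_pow q
                · exact (h1 x).1
                · intro ω
                  exact pow_le_pow_left₀ (abs_nonneg (D x ω i)) (norm_le_pi_norm (D x ω) i) q
            _ ≤ ((s ^ 2)⁻¹) ^ q * (A * ((s ^ 2) ^ q * (∫ ω, ‖e c n ω‖ ^ q ∂μ + r))) := by gcongr
            _ = A * (∫ ω, ‖e c n ω‖ ^ q ∂μ + r) := by
                rw [inv_pow]; field_simp
            _ ≤ _ := by gcongr; exact hVnorm n hn.le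
        have hb2 : ∫ ω, |s⁻¹ * M x ω i| ^ q ∂μ ≤ A' * (V n + r) := by
          have := (h2 x).2
          calc _ = (s⁻¹) ^ q * ∫ ω, |M x ω i| ^ q ∂μ := by
                rw [← integral_const_mul]; congr 1; ext ω
                rw [abs_mul, mul_pow, abs_of_nonneg (by positivity : 0 ≤ s⁻¹)]
            _ ≤ (s⁻¹) ^ q * ∫ ω, ‖M x ω‖ ^ q ∂μ := by
                gcongr
                · exact hMm.int_pow q
                · exact (h2 x).1
                · intro ω
                  exact pow_le_pow_left₀ (abs_nonneg (M x ω i)) (norm_le_pi_norm (M x ω) i) q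
            _ ≤ (s⁻¹) ^ q * (A' * ((s ^ 1) ^ q * (∫ ω, ‖e c n ω‖ ^ q ∂μ + r))) := by gcongr
            _ = A' * (∫ ω, ‖e c n ω‖ ^ q ∂μ + r) := by
                rw [inv_pow, pow_one]; field_simp
            _ ≤ _ := by gcongr; exact hVnorm n hn.le
        calc _ ≤ ∫ ω, (|e c n ω i| ^ q + (2 * k + 2) * (e c n ω i ^ (2 * k + 1) * M x ω i)
            + K * s ^ 2 * (|e c n ω i| ^ q + |(s ^ 2)⁻¹ * D x ω i| ^ q + |s⁻¹ * M x ω i| ^ q)) ∂μ :=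
              integral_mono (hIntg (n + 1) hn i)
                ((i1.add (i2.const_mul _)).add (((i1.add i3).add i4).const_mul _)) hpt
          _ = ∫ ω, |e c n ω i| ^ q ∂μ + (2 * k + 2) * ∫ ω, e c n ω i ^ (2 * k + 1) * M x ω i ∂μ
            + K * s ^ 2 * (∫ ω, |e c n ω i| ^ q ∂μ + ∫ ω, |(s ^ 2)⁻¹ * D x ω i| ^ q ∂μ
              + ∫ ω, |s⁻¹ * M x ω i| ^ q ∂μ) := by
              have j1 : Integrable (fun ω => |e c n ω i| ^ q + (2 * k + 2) * (e c n ω i ^ (2 * k + 1) * M x ω i)) μ :=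
                i1.add (i2.const_mul _)
              have j2 : Integrable (fun ω => |e c n ω i| ^ q + |(s ^ 2)⁻¹ * D x ω i| ^ q) μ := i1.add i3
              have j3 : Integrable (fun ω => |e c n ω i| ^ q + |(s ^ 2)⁻¹ * D x ω i| ^ q + |s⁻¹ * M x ω i| ^ q) μ :=
                j2.add i4
              rw [integral_add j1 (j3.const_mul _),
                integral_add i1 (i2.const_mul _), integral_const_mul, integral_const_mul,
                integral_add j2 i4, integral_add i1 i3]
          _ ≤ _ := by
              rw [hz, mul_zero, add_zero]
              gcongr
      have hsum : V (n + 1) ≤ V n + K * s ^ 2 * (V n + d * (A * (V n + r)) + d * (A' * (V n + r))) := by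
        calc V (n + 1) ≤ ∑ i, (∫ ω, |e c n ω i| ^ q ∂μ +
          K * s ^ 2 * (∫ ω, |e c n ω i| ^ q ∂μ + A * (V n + r) + A' * (V n + r))) :=
              Finset.sum_le_sum fun i _ => hcomp i
          _ = _ := by
              rw [Finset.sum_add_distrib, ← Finset.mul_sum, Finset.sum_add_distrib, Finset.sum_add_distrib]
              simp [hV]
      rw [hK']
      have : 0 ≤ K * s ^ 2 * r := by positivity
      nlinarith
    have hV0 : V 0 + r ≤ (d * K0 ^ q + 1) * r := by
      have : V 0 ≤ ∑ _i : Fin d, K0 ^ q * r := by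
        refine Finset.sum_le_sum fun i _ => ?_
        calc _ ≤ ∫ _ω, K0 ^ q * r ∂μ := by
              refine integral_mono (hIntg 0 (Nat.zero_le _) i) (integrable_const _) fun ω => ?_
              simp only
              rw [hr, ← mul_pow]
              exact pow_le_pow_left₀ (abs_nonneg _) ((norm_le_pi_norm (e c 0 ω) i).trans (h0 c ω)) q
          _ = _ := by simp
      simp at this
      linarith
    have hgr : ∀ n ≤ (G c).N, V n + r ≤ (1 + K' * s ^ 2) ^ n * ((d * K0 ^ q + 1) * r) := by
      intro n
      induction n with
      | zero => intro _; simpa using hV0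
      | succ n ih =>
        intro hn
        calc _ ≤ (1 + K' * s ^ 2) * (V n + r) := hstepV n hn
          _ ≤ (1 + K' * s ^ 2) * ((1 + K' * s ^ 2) ^ n * ((d * K0 ^ q + 1) * r)) := by
              gcongr; exact ih (by omega)
          _ = _ := by ring
    have hexp : (1 + K' * s ^ 2) ^ n ≤ Real.exp (K' * T) := by
      calc _ ≤ (Real.exp (K' * s ^ 2)) ^ n := by
            gcongr; rw [add_comm]; exact Real.add_one_le_exp _
        _ = Real.exp (n * (K' * s ^ 2)) := by rw [← Real.exp_nat_mul]
        _ ≤ _ := by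
            apply Real.exp_le_exp.2
            rw [← (G c).hT]
            have : (n : ℝ) ≤ (G c).N := by exact_mod_cast hn
            have : (n : ℝ) * (K' * s ^ 2) ≤ (G c).N * (K' * s ^ 2) := by gcongr
            linarith
    calc _ ≤ V n := hVnorm n hn
      _ ≤ V n + r := by linarith
      _ ≤ _ := hgr n hn
      _ ≤ Real.exp (K' * T) * ((d * K0 ^ q + 1) * r) := by gcongr
      _ = _ := by ring
  refine ⟨fun y => (he y.1 y.2 (Nat.lt_succ_iff.1 y.2.2)).meas, fun q => ?_⟩
  obtain ⟨K, hK, h⟩ := key q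
  refine ⟨1 + K, by positivity, fun y => ?_⟩
  have hy := he y.1 y.2 (Nat.lt_succ_iff.1 y.2.2)
  have h := h y.1 y.2 (Nat.lt_succ_iff.1 y.2.2)
  refine ⟨hy.int_pow q, ?_⟩
  set r := (G y.1).s ^ a with hr
  have hr0 : 0 < r := pow_pos (G y.1).hs _
  have hpt : ∀ ω, ‖e y.1 y.2 ω‖ ^ q ≤ r ^ q * (1 + (r⁻¹) ^ (2 * q + 2) * ‖e y.1 y.2 ω‖ ^ (2 * q + 2)) := by
    intro ω
    set u := ‖e y.1 y.2 ω‖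
    have hu : 0 ≤ u := norm_nonneg _
    have h1 : (r⁻¹ * u) ^ q ≤ 1 + (r⁻¹ * u) ^ (2 * q + 2) := by
      have hv : 0 ≤ r⁻¹ * u := by positivity
      rcases le_total (r⁻¹ * u) 1 with h | h
      · have := pow_le_one₀ hv h (n := q); have := pow_nonneg hv (2 * q + 2); linarith
      · have := pow_le_pow_right₀ h (by omega : q ≤ 2 * q + 2); linarith
    calc u ^ q = r ^ q * (r⁻¹ * u) ^ q := by rw [← mul_pow]; field_simp
      _ ≤ r ^ q * (1 + (r⁻¹ * u) ^ (2 * q + 2)) := by gcongr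
      _ = _ := by rw [mul_pow]
  calc _ ≤ ∫ ω, r ^ q * (1 + (r⁻¹) ^ (2 * q + 2) * ‖e y.1 y.2 ω‖ ^ (2 * q + 2)) ∂(G y.1).P.μ :=
        integral_mono (hy.int_pow q)
          (((integrable_const _).add ((hy.int_pow _).const_mul _)).const_mul _) hpt
    _ = r ^ q * (1 + (r⁻¹) ^ (2 * q + 2) * ∫ ω, ‖e y.1 y.2 ω‖ ^ (2 * q + 2) ∂(G y.1).P.μ) := by
        rw [integral_const_mul, integral_add (integrable_const _) ((hy.int_pow _).const_mul _),
          integral_const_mul]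
        simp
    _ ≤ r ^ q * (1 + (r⁻¹) ^ (2 * q + 2) * (K * r ^ (2 * q + 2))) := by gcongr
    _ = _ := by rw [inv_pow]; field_simp; rw [hr]

end AM

namespace AM

lemma even_pow_tangent {k : ℕ} (hk : Even k) (x y : ℝ) : x ^ k + k * x ^ (k - 1) * (y - x) ≤ y ^ k := by
  have hc : ConvexOn ℝ Set.univ (fun x : ℝ => x ^ k) := hk.convexOn_pow
  have hd : HasDerivAt (fun x : ℝ => x ^ k) (k * x ^ (k - 1)) x := by simpa using hasDerivAt_pow k x
  rcases lt_trichotomy x y with h | h | h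
  · have := hc.le_slope_of_hasDerivAt (Set.mem_univ _) (Set.mem_univ _) h hd
    rw [slope_def_field, le_div_iff₀ (by linarith)] at this
    linarith
  · subst h; simp
  · have := hc.slope_le_of_hasDerivAt (Set.mem_univ _) (Set.mem_univ _) h hd
    rw [slope_def_field, div_le_iff₀ (by linarith)] at this
    linarith

/-- running maximum of `|S|^k` (started at zero) -/
noncomputable def runMax {Ω : Type} (S : ℕ → Ω → ℝ) (k : ℕ) : ℕ → Ω → ℝ
  | 0 => fun _ => 0
  | n + 1 => fun ω => max (runMax S k n ω) (|S (n + 1) ω| ^ k)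

lemma runMax_nonneg {Ω : Type} (S : ℕ → Ω → ℝ) (k n : ℕ) (ω : Ω) : 0 ≤ runMax S k n ω := by
  induction n with
  | zero => exact le_rfl
  | succ n ih => exact le_max_of_le_left ih

lemma runMax_succ {Ω : Type} (S : ℕ → Ω → ℝ) (k n : ℕ) (ω : Ω) :
    runMax S k (n + 1) ω = max (runMax S k n ω) (|S (n + 1) ω| ^ k) := rfl

theorem doob (Q : PS) (F : ℕ → MeasurableSpace Q.Ω) (hFm : Monotone F)
    (S : ℕ → Q.Ω → ℝ) (N : ℕ) (hS : ∀ n ≤ N, AllMom Q (S n)) (hSF : ∀ n ≤ N, Measurable[F n] (S n))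
    (hMZ : ∀ n < N, MZ Q (F n) (fun ω => S (n + 1) ω - S n ω)) (h0 : ∀ ω, S 0 ω = 0)
    (k : ℕ) (hk : Even k) (hk0 : k ≠ 0) :
    ∃ A : Q.Ω → ℝ, AllMom Q A ∧ (∀ n ≤ N, ∀ ω, |S n ω| ^ k ≤ A ω) ∧
      ∫ ω, A ω ^ 2 ∂Q.μ ≤ 4 * ∫ ω, |S N ω| ^ (2 * k) ∂Q.μ := by
  set A := runMax S k with hA
  have hAF : ∀ n ≤ N, Measurable[F n] (A n) := by
    intro n
    induction n with
    | zero => intro _; exact measurable_const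
    | succ n ih =>
      intro hn
      have h1 : Measurable[F (n + 1)] (A n) := (ih (by omega)).mono (hFm (Nat.le_succ n)) le_rfl
      have h2 : Measurable[F (n + 1)] (fun ω => |S (n + 1) ω| ^ k) := by
        have := hSF (n + 1) hn
        exact ((@measurable_norm ℝ _ _ _).comp this).pow_const k
      exact Measurable.max h1 h2
  have hAM : ∀ n ≤ N, AllMom Q (A n) := by
    intro n
    induction n with
    | zero => intro _; exact AllMom.const 0
    | succ n ih =>
      intro hn
      have h1 := ih (by omega)
      have h2 : AllMom Q (fun ω => |S (n + 1) ω| ^ k) := (hS (n + 1) hn).norm.pow k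
      refine (h1.add h2).of_le (h1.meas.max h2.meas) 1 zero_le_one fun ω => ?_
      have e1 : 0 ≤ A n ω := runMax_nonneg S k n ω
      have e2 : 0 ≤ |S (n + 1) ω| ^ k := by positivity
      rw [Real.norm_of_nonneg (runMax_nonneg S k (n + 1) ω), Real.norm_of_nonneg (by positivity), one_mul]
      exact max_le (by linarith) (by linarith)
  have hdom : ∀ n, ∀ j ≤ n, ∀ ω, |S j ω| ^ k ≤ A n ω := by
    intro n
    induction n with
    | zero =>
      intro j hj ω
      obtain rfl : j = 0 := by omega
      rw [h0 ω]; simp [hk0, hA, runMax]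
    | succ n ih =>
      intro j hj ω
      rcases Nat.lt_or_ge n j with h | h
      · obtain rfl : j = n + 1 := by omega
        exact le_max_right _ _
      · exact (ih j h ω).trans (le_max_left _ _)
  refine ⟨A N, hAM N le_rfl, fun n hn ω => hdom N n hn ω, ?_⟩
  -- orthogonality
  have horth : ∀ l ≤ N, ∀ B : Q.Ω → ℝ, Measurable[F l] B → AllMom Q B →
      ∫ ω, B ω * (S N ω - S l ω) ∂Q.μ = 0 := by
    intro l hl B hB hB'
    have : MZ Q (F l) (fun ω => ∑ j ∈ Finset.Ico l N, (S (j + 1) ω - S j ω)) :=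
      MZ.sum _ fun j hj => by
        rw [Finset.mem_Ico] at hj
        exact (hMZ j hj.2).mono (hFm hj.1)
    have h := this.2 B hB hB'
    rw [← h]
    congr 1; ext ω
    have e := Finset.sum_Ico_sub (fun j => S j ω) hl
    show B ω * (S N ω - S l ω) = B ω * ∑ j ∈ Finset.Ico l N, (S (j + 1) ω - S j ω)
    rw [e]
  have hmain : ∀ n ≤ N, ∫ ω, A n ω ^ 2 ∂Q.μ ≤ 2 * ∫ ω, |S N ω| ^ k * A n ω ∂Q.μ := by
    intro n
    induction n with
    | zero => intro _; simp [hA, runMax]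
    | succ n ih =>
      intro hn
      have ih := ih (by omega)
      have hS1 := hS (n + 1) hn
      have hSN := hS N le_rfl
      have hA1 := hAM (n + 1) hn
      have hA0 := hAM n (by omega)
      have hdA : AllMom Q (fun ω => A (n + 1) ω - A n ω) := hA1.sub hA0
      set B : Q.Ω → ℝ := fun ω => (k * S (n + 1) ω ^ (k - 1)) * (A (n + 1) ω - A n ω) with hB
      have hBF : Measurable[F (n + 1)] B := by
        have e1 := hSF (n + 1) hn
        have e2 := hAF (n + 1) hn
        have e3 : Measurable[F (n + 1)] (A n) := (hAF n (by omega)).mono (hFm (Nat.le_succ n)) le_rfl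
        exact ((e1.pow_const (k - 1)).const_mul (k : ℝ)).mul (e2.sub e3)
      have hBM : AllMom Q B := ((AllMom.const (k : ℝ)).mul (hS1.pow (k - 1))).mul hdA
      have hpt : ∀ ω, A (n + 1) ω ^ 2 ≤ A n ω ^ 2 + 2 * (|S N ω| ^ k * A (n + 1) ω) - 2 * (|S N ω| ^ k * A n ω)
          - 2 * (B ω * (S N ω - S (n + 1) ω)) := by
        intro ω
        have t := even_pow_tangent hk (S (n + 1) ω) (S N ω)
        have hmono : A n ω ≤ A (n + 1) ω := le_max_left _ _
        have hsq : A (n + 1) ω ^ 2 - A n ω ^ 2 ≤ 2 * (S (n + 1) ω ^ k * (A (n + 1) ω - A n ω)) := by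
          have e : A (n + 1) ω = max (A n ω) (|S (n + 1) ω| ^ k) := rfl
          rw [hk.pow_abs] at e
          rcases le_total (A n ω) (S (n + 1) ω ^ k) with h | h
          · rw [max_eq_right h] at e
            rw [e]; nlinarith [sq_nonneg (A n ω - S (n + 1) ω ^ k)]
          · rw [max_eq_left h] at e
            rw [e]; simp
        have t2 := mul_le_mul_of_nonneg_right t (sub_nonneg.2 hmono)
        rw [hk.pow_abs, hB]
        simp only
        nlinarith
      have i1 : Integrable (fun ω => A n ω ^ 2) Q.μ := (hA0.pow 2).int
      have i2 : Integrable (fun ω => |S N ω| ^ k * A (n + 1) ω) Q.μ := ((hSN.norm.pow k).mul hA1).int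
      have i3 : Integrable (fun ω => |S N ω| ^ k * A n ω) Q.μ := ((hSN.norm.pow k).mul hA0).int
      have i4 : Integrable (fun ω => B ω * (S N ω - S (n + 1) ω)) Q.μ := (hBM.mul (hSN.sub hS1)).int
      have j1 : Integrable (fun ω => A n ω ^ 2 + 2 * (|S N ω| ^ k * A (n + 1) ω)) Q.μ := i1.add (i2.const_mul 2)
      have j2 : Integrable (fun ω => A n ω ^ 2 + 2 * (|S N ω| ^ k * A (n + 1) ω) - 2 * (|S N ω| ^ k * A n ω)) Q.μ :=
        j1.sub (i3.const_mul 2)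
      have := integral_mono (hA1.pow 2).int (j2.sub (i4.const_mul 2)) hpt
      have e : ∫ ω, (A n ω ^ 2 + 2 * (|S N ω| ^ k * A (n + 1) ω) - 2 * (|S N ω| ^ k * A n ω)
          - 2 * (B ω * (S N ω - S (n + 1) ω))) ∂Q.μ = ∫ ω, A n ω ^ 2 ∂Q.μ + 2 * ∫ ω, |S N ω| ^ k * A (n + 1) ω ∂Q.μ
          - 2 * ∫ ω, |S N ω| ^ k * A n ω ∂Q.μ - 2 * ∫ ω, B ω * (S N ω - S (n + 1) ω) ∂Q.μ := by
        rw [integral_sub j2 (i4.const_mul 2), integral_sub j1 (i3.const_mul 2), integral_add i1 (i2.const_mul 2)]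
        simp only [integral_const_mul]
      have h3 := horth (n + 1) hn B hBF hBM
      have this : ∫ ω, A (n + 1) ω ^ 2 ∂Q.μ ≤ _ := this.trans_eq e
      rw [h3] at this
      linarith
  have hfin := hmain N le_rfl
  have hAN := hAM N le_rfl
  have hSN := hS N le_rfl
  have i1 : Integrable (fun ω => |S N ω| ^ (2 * k)) Q.μ := hSN.int_pow _
  have i2 : Integrable (fun ω => A N ω ^ 2) Q.μ := (hAN.pow 2).int
  have h2 : 2 * ∫ ω, |S N ω| ^ k * A N ω ∂Q.μ ≤ 2 * ∫ ω, |S N ω| ^ (2 * k) ∂Q.μ + 2⁻¹ * ∫ ω, A N ω ^ 2 ∂Q.μ := by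
    rw [← integral_const_mul, ← integral_const_mul, ← integral_const_mul,
      ← integral_add (i1.const_mul _) (i2.const_mul _)]
    refine integral_mono (((hSN.norm.pow k).mul hAN).int.const_mul 2) ((i1.const_mul _).add (i2.const_mul _)) fun ω => ?_
    simp only
    rw [pow_mul']
    nlinarith [sq_nonneg (2 * |S N ω| ^ k - A N ω)]
  linarith

lemma Rel.of_prod {ι : Type*} {P : ι → PS} {s : ι → ℝ} (hs : ∀ i, 0 < s i) {H : Type*} [NormedAddCommGroup H]
    [MeasurableSpace H] [OpensMeasurableSpace H]
    {e : ∀ i, (P i).Ω → H} {a b : ℕ} {E : Type*} [NormedAddCommGroup E]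
    [MeasurableSpace E] [OpensMeasurableSpace E] {Y : ∀ i, (P i).Ω → E} {ξ : ∀ i, (P i).Ω → ℝ}
    (𝓑 𝓦 : ∀ i, MeasurableSpace (P i).Ω) (hB : ∀ i, 𝓑 i ≤ (P i).ms) (hW : ∀ i, 𝓦 i ≤ (P i).ms)
    (hind : ∀ i, Indep (𝓦 i) (𝓑 i) (P i).μ) (heB : ∀ i, Measurable[𝓑 i] (e i)) (heM : ∀ i, AllMom (P i) (e i))
    (hξW : ∀ i, Measurable[𝓦 i] (ξ i)) (hξ : IsO P s b ξ) (hY : ∀ i, Measurable[(P i).ms] (Y i))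
    (K : ℝ) (hK : 0 ≤ K) (hle : ∀ i ω, ‖Y i ω‖ ≤ K * ((‖e i ω‖ + s i ^ a) * ‖ξ i ω‖)) : Rel P s e a b Y := by
  have hBd : Rel P s e a b (fun i ω => (‖e i ω‖ + s i ^ a) * ‖ξ i ω‖) := by
    have hm : ∀ i, AllMom (P i) (fun ω => ‖e i ω‖ + s i ^ a) := fun i => (heM i).norm.add (AllMom.const _)
    have hx : ∀ i, AllMom (P i) (ξ i) := fun i => hξ.allMom i
    refine ⟨fun i => ((hm i).mul (hx i).norm).meas, fun q => ?_⟩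
    obtain ⟨C, hC, h⟩ := hξ.2 q
    refine ⟨2 ^ q * C, by positivity, fun i => ⟨((hm i).mul (hx i).norm).int_pow q, ?_⟩⟩
    have hsi := hs i
    have e1 : ∫ ω, ‖(‖e i ω‖ + s i ^ a) * ‖ξ i ω‖‖ ^ q ∂(P i).μ
        = (∫ ω, (‖e i ω‖ + s i ^ a) ^ q ∂(P i).μ) * ∫ ω, ‖ξ i ω‖ ^ q ∂(P i).μ := by
      rw [← indep_integral_mul (A := fun ω => (‖e i ω‖ + s i ^ a) ^ q) (Y := fun ω => ‖ξ i ω‖ ^ q) (hB i) (hW i) (hind i)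
        ((((measurable_norm).comp (heB i)).add_const _).pow_const q) (((measurable_norm).comp (hξW i)).pow_const q)]
      congr 1; ext ω
      rw [Real.norm_of_nonneg (by positivity), mul_pow]
    have e2 : ∫ ω, (‖e i ω‖ + s i ^ a) ^ q ∂(P i).μ ≤ 2 ^ q * (∫ ω, ‖e i ω‖ ^ q ∂(P i).μ + (s i ^ a) ^ q) := by
      calc _ ≤ ∫ ω, 2 ^ q * (‖e i ω‖ ^ q + (s i ^ a) ^ q) ∂(P i).μ :=
            integral_mono ((hm i).pow q).int ((((heM i).int_pow q).add (integrable_const _)).const_mul _)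
              (fun ω => add_pow_le2 (norm_nonneg _) (by positivity) q)
        _ = _ := by rw [integral_const_mul, integral_add ((heM i).int_pow q) (integrable_const _)]; simp
    have e3 : 0 ≤ ∫ ω, ‖e i ω‖ ^ q ∂(P i).μ := integral_nonneg fun _ => by positivity
    rw [e1]
    calc _ ≤ (2 ^ q * (∫ ω, ‖e i ω‖ ^ q ∂(P i).μ + (s i ^ a) ^ q)) * (C * (s i ^ b) ^ q) := by
          gcongr
          · exact (h i).2
      _ = _ := by ring
  refine hBd.of_le hY K hK fun i ω => (hle i ω).trans (le_of_eq ?_)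
  have h1 : 0 ≤ (‖e i ω‖ + s i ^ a) * ‖ξ i ω‖ := by have := hs i; positivity
  rw [Real.norm_of_nonneg h1]
end AM

namespace AM

section calc2
variable {E F : Type*} [NormedAddCommGroup E] [NormedSpace ℝ E] [NormedAddCommGroup F] [NormedSpace ℝ F]

lemma c2_lip {φ : E → F} {C : ℝ} (hφ : ContDiff ℝ 2 φ) (h1 : ∀ x, ‖fderiv ℝ φ x‖ ≤ C) (x y : E) :
    ‖φ y - φ x‖ ≤ C * ‖y - x‖ :=
  convex_univ.norm_image_sub_le_of_norm_fderiv_le (𝕜 := ℝ)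
    (fun z _ => (hφ.differentiable (by norm_num)).differentiableAt) (fun z _ => h1 z) trivial trivial

lemma c2_dlip {φ : E → F} {C : ℝ} (hφ : ContDiff ℝ 2 φ) (h2 : ∀ x, ‖iteratedFDeriv ℝ 2 φ x‖ ≤ C) (x y : E) :
    ‖fderiv ℝ φ y - fderiv ℝ φ x‖ ≤ C * ‖y - x‖ := by
  have hc : ContDiff ℝ 1 (fderiv ℝ φ) := hφ.fderiv_right (by norm_num)
  refine convex_univ.norm_image_sub_le_of_norm_fderiv_le (𝕜 := ℝ)
    (fun z _ => (hc.differentiable (by norm_num)).differentiableAt) (fun z _ => ?_) trivial trivial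
  rw [← norm_iteratedFDeriv_one, norm_iteratedFDeriv_fderiv]
  exact h2 z

lemma c2_taylor {φ : E → F} {C : ℝ} (hC : 0 ≤ C) (hφ : ContDiff ℝ 2 φ) (h2 : ∀ x, ‖iteratedFDeriv ℝ 2 φ x‖ ≤ C) (x y : E) :
    ‖φ y - φ x - fderiv ℝ φ x (y - x)‖ ≤ C * ‖y - x‖ ^ 2 := by
  have := (convex_segment x y).norm_image_sub_le_of_norm_fderiv_le' (𝕜 := ℝ) (f := φ) (φ := fderiv ℝ φ x)
    (C := C * ‖y - x‖)
    (fun z _ => (hφ.differentiable (by norm_num)).differentiableAt) (fun z hz => ?_)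
    (left_mem_segment ℝ x y) (right_mem_segment ℝ x y)
  · calc _ ≤ _ := this
      _ = _ := by ring
  · refine (c2_dlip hφ h2 x z).trans ?_
    gcongr
    rw [segment_eq_image'] at hz
    obtain ⟨t, ht, rfl⟩ := hz
    simp only [add_sub_cancel_left, norm_smul, Real.norm_eq_abs, abs_of_nonneg ht.1]
    nlinarith [norm_nonneg (y - x), ht.2]

lemma c2_sym {φ : E → F} {C : ℝ} (hC : 0 ≤ C) (hφ : ContDiff ℝ 2 φ) (h2 : ∀ x, ‖iteratedFDeriv ℝ 2 φ x‖ ≤ C) (x y : E) :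
    ‖φ x + φ y - (2 : ℝ) • φ ((2⁻¹ : ℝ) • (x + y))‖ ≤ C * ‖x - y‖ ^ 2 := by
  set z := (2⁻¹ : ℝ) • (x + y) with hz
  have e1 : x - z = (2⁻¹ : ℝ) • (x - y) := by rw [hz]; module
  have e2 : y - z = -((2⁻¹ : ℝ) • (x - y)) := by rw [hz]; module
  have t1 := c2_taylor hC hφ h2 z x
  have t2 := c2_taylor hC hφ h2 z y
  have n1 : ‖(2⁻¹ : ℝ) • (x - y)‖ = 2⁻¹ * ‖x - y‖ := by rw [norm_smul]; norm_num
  rw [e1, n1] at t1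
  rw [e2, norm_neg, n1, map_neg] at t2
  have e : φ x + φ y - (2 : ℝ) • φ z = (φ x - φ z - fderiv ℝ φ z ((2⁻¹ : ℝ) • (x - y)))
    + (φ y - φ z - - fderiv ℝ φ z ((2⁻¹ : ℝ) • (x - y))) := by rw [two_smul]; abel
  rw [e]
  refine (norm_add_le _ _).trans ?_
  nlinarith [mul_nonneg hC (sq_nonneg ‖x - y‖)]

lemma c2_T {φ : E → F} {C : ℝ} (hC : 0 ≤ C) (hφ : ContDiff ℝ 2 φ) (h1 : ∀ x, ‖fderiv ℝ φ x‖ ≤ C)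
    (h2 : ∀ x, ‖iteratedFDeriv ℝ 2 φ x‖ ≤ C) (x y u : E) :
    ‖φ y - φ x - fderiv ℝ φ x u‖ ≤ C * (‖y - x‖ ^ 2 + ‖y - x - u‖) := by
  have e : φ y - φ x - fderiv ℝ φ x u = (φ y - φ x - fderiv ℝ φ x (y - x)) + fderiv ℝ φ x (y - x - u) := by
    rw [map_sub _ (y - x) u]; abel
  rw [e, mul_add]
  refine (norm_add_le _ _).trans (add_le_add (c2_taylor hC hφ h2 x y) ?_)
  exact ((fderiv ℝ φ x).le_opNorm _).trans (by gcongr; exact h1 x)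
end calc2

variable {d m : ℕ}

/-- matrix times vector -/
def mv (G : Fin d → Fin m → ℝ) (w : Fin m → ℝ) : Fin d → ℝ := fun i => ∑ j, G i j * w j

lemma mv_norm (G : Fin d → Fin m → ℝ) (w : Fin m → ℝ) : ‖mv G w‖ ≤ m * (‖G‖ * ‖w‖) := by
  refine (pi_norm_le_iff_of_nonneg (by positivity)).2 fun i => (norm_sum_le _ _).trans ?_
  calc ∑ j, ‖G i j * w j‖ ≤ ∑ j : Fin m, ‖G‖ * ‖w‖ := by
        refine Finset.sum_le_sum fun j _ => ?_
        rw [norm_mul]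
        exact mul_le_mul ((norm_le_pi_norm (G i) j).trans (norm_le_pi_norm G i)) (norm_le_pi_norm w j) (norm_nonneg _) (norm_nonneg _)
    _ = _ := by simp

lemma mv_add_left (G H : Fin d → Fin m → ℝ) (w : Fin m → ℝ) : mv (G + H) w = mv G w + mv H w := by
  ext i; simp [mv, add_mul, Finset.sum_add_distrib]
lemma mv_sub_left (G H : Fin d → Fin m → ℝ) (w : Fin m → ℝ) : mv (G - H) w = mv G w - mv H w := by
  ext i; simp [mv, sub_mul, Finset.sum_sub_distrib]
lemma mv_smul_left (c : ℝ) (G : Fin d → Fin m → ℝ) (w : Fin m → ℝ) : mv (c • G) w = c • mv G w := by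
  ext i; simp [mv, Finset.mul_sum, mul_assoc]
lemma mv_add_right (G : Fin d → Fin m → ℝ) (v w : Fin m → ℝ) : mv G (v + w) = mv G v + mv G w := by
  ext i; simp [mv, mul_add, Finset.sum_add_distrib]

abbrev Ten (m : ℕ) := Fin m → Fin m → ℝ

def tens (u v : Fin m → ℝ) : Ten m := fun j k => u j * v k
noncomputable def comp (δ : ℝ) (w : Fin m → ℝ) : Ten m := fun j k => w j * w k - if j = k then δ else 0

noncomputable def hT (g : (Fin d → ℝ) → Fin d → Fin m → ℝ) (x : Fin d → ℝ) (A : Ten m) : Fin d → ℝ :=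
  fun i => ∑ j, ∑ k, milsteinH g x i j k * A j k

lemma hT_add (g : (Fin d → ℝ) → Fin d → Fin m → ℝ) (x : Fin d → ℝ) (A B : Ten m) : hT g x (A + B) = hT g x A + hT g x B := by
  ext i; simp [hT, mul_add, Finset.sum_add_distrib]
lemma hT_smul (g : (Fin d → ℝ) → Fin d → Fin m → ℝ) (x : Fin d → ℝ) (c : ℝ) (A : Ten m) : hT g x (c • A) = c • hT g x A := by
  ext i; simp only [hT, Pi.smul_apply, smul_eq_mul, Finset.mul_sum]
  refine Finset.sum_congr rfl fun j _ => Finset.sum_congr rfl fun k _ => by ring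

lemma milsteinStep_eq (f : (Fin d → ℝ) → Fin d → ℝ) (g : (Fin d → ℝ) → Fin d → Fin m → ℝ) (dt : ℝ) (x : Fin d → ℝ)
    (w : Fin m → ℝ) : milsteinStep f g dt x w = x + dt • f x + mv (g x) w + hT g x (comp dt w) := by
  ext i
  simp only [milsteinStep, mv, hT, comp, Pi.add_apply, Pi.smul_apply, smul_eq_mul]
  ring

lemma comp_split (δ : ℝ) (v w : Fin m → ℝ) :
    comp (2 * δ) (v + w) = comp δ v + comp δ w + (tens v w + tens w v) := by
  ext j k
  simp only [comp, tens, Pi.add_apply]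
  split_ifs <;> ring

lemma tens_norm (u v : Fin m → ℝ) : ‖tens u v‖ ≤ ‖u‖ * ‖v‖ := by
  refine (pi_norm_le_iff_of_nonneg (by positivity)).2 fun j => (pi_norm_le_iff_of_nonneg (by positivity)).2 fun k => ?_
  rw [tens, norm_mul]
  exact mul_le_mul (norm_le_pi_norm u j) (norm_le_pi_norm v k) (norm_nonneg _) (norm_nonneg _)

lemma comp_norm (δ : ℝ) (hδ : 0 ≤ δ) (w : Fin m → ℝ) : ‖comp δ w‖ ≤ ‖w‖ * ‖w‖ + δ := by
  refine (pi_norm_le_iff_of_nonneg (by positivity)).2 fun j => (pi_norm_le_iff_of_nonneg (by positivity)).2 fun k => ?_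
  refine (norm_sub_le _ _).trans (add_le_add ?_ ?_)
  · rw [norm_mul]
    exact mul_le_mul (norm_le_pi_norm w j) (norm_le_pi_norm w k) (norm_nonneg _) (norm_nonneg _)
  · split_ifs
    · rw [Real.norm_of_nonneg hδ]
    · simpa using hδ

lemma ten_sum_norm (a : Fin d → Fin m → Fin m → ℝ) (A : Ten m) (K : ℝ) (hK : 0 ≤ K) (h : ∀ i j k, |a i j k| ≤ K) :
    ‖(fun i => ∑ j, ∑ k, a i j k * A j k : Fin d → ℝ)‖ ≤ (m * m) * (K * ‖A‖) := by
  refine (pi_norm_le_iff_of_nonneg (by positivity)).2 fun i => (norm_sum_le _ _).trans ?_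
  calc ∑ j, ‖∑ k, a i j k * A j k‖ ≤ ∑ j : Fin m, ∑ k : Fin m, K * ‖A‖ := by
        refine Finset.sum_le_sum fun j _ => (norm_sum_le _ _).trans (Finset.sum_le_sum fun k _ => ?_)
        rw [norm_mul]
        exact mul_le_mul (h i j k) ((norm_le_pi_norm (A j) k).trans (norm_le_pi_norm A j)) (norm_nonneg _) hK
    _ = _ := by simp; ring

/-- What we need to know about the coefficients. -/
structure Coef (f : (Fin d → ℝ) → Fin d → ℝ) (g : (Fin d → ℝ) → Fin d → Fin m → ℝ) (C : ℝ) : Prop where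
  hC : 0 ≤ C
  f_meas : Measurable f
  fd_meas : ∀ l i, Measurable fun x => fderiv ℝ f x (Pi.single l 1) i
  fd_bd : ∀ x, ‖fderiv ℝ f x‖ ≤ C
  g_meas : ∀ i j, Measurable fun x => g x i j
  h_meas : ∀ i j k, Measurable fun x => milsteinH g x i j k
  f_lip : ∀ x y, ‖f x - f y‖ ≤ C * ‖x - y‖
  f_grow : ∀ x, ‖f x‖ ≤ C * (‖x‖ + 1)
  f_S : ∀ x y, ‖f x + f y - (2 : ℝ) • f ((2⁻¹ : ℝ) • (x + y))‖ ≤ C * ‖x - y‖ ^ 2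
  f_T : ∀ x y u, ‖f y - f x - fderiv ℝ f x u‖ ≤ C * (‖y - x‖ ^ 2 + ‖y - x - u‖)
  g_lip : ∀ x y w, ‖mv (g x) w - mv (g y) w‖ ≤ C * (‖x - y‖ * ‖w‖)
  g_grow : ∀ x w, ‖mv (g x) w‖ ≤ C * ((‖x‖ + 1) * ‖w‖)
  g_S : ∀ x y w, ‖mv (g x) w + mv (g y) w - (2 : ℝ) • mv (g ((2⁻¹ : ℝ) • (x + y))) w‖ ≤ C * (‖x - y‖ ^ 2 * ‖w‖)
  g_T : ∀ x y u v, ‖mv (g y) v - mv (g x) v - (2 : ℝ) • hT g x (tens u v)‖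
    ≤ C * ((‖y - x‖ ^ 2 + ‖y - x - mv (g x) u‖) * ‖v‖)
  h_grow : ∀ x A, ‖hT g x A‖ ≤ C * ((‖x‖ + 1) * ‖A‖)
  h_lip : ∀ x y A, ‖hT g x A - hT g y A‖ ≤ C * ((‖x‖ + ‖y‖ + 1) * ‖x - y‖ * ‖A‖)

lemma fderiv_entry {g : (Fin d → ℝ) → Fin d → Fin m → ℝ} (hg : ContDiff ℝ 2 g) (x v : Fin d → ℝ) (i : Fin d) (k : Fin m) :
    fderiv ℝ (fun y => g y i k) x v = fderiv ℝ g x v i k := by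
  have h := (hg.differentiable (by norm_num)).differentiableAt (x := x) |>.hasFDerivAt
  have h1 := hasFDerivAt_pi'.1 h i
  have h2 := hasFDerivAt_pi'.1 h1 k
  rw [h2.fderiv]; rfl

lemma milsteinH_eq {g : (Fin d → ℝ) → Fin d → Fin m → ℝ} (hg : ContDiff ℝ 2 g) (x : Fin d → ℝ) (i : Fin d) (j k : Fin m) :
    milsteinH g x i j k = 1 / 2 * fderiv ℝ g x (fun l => g x l j) i k := by
  rw [milsteinH]
  congr 1
  have : (fun l => g x l j) = ∑ l, g x l j • (Pi.single l 1 : Fin d → ℝ) := by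
    ext l; simp [Finset.sum_apply, Pi.single_apply]
  rw [this, map_sum]
  simp only [Finset.sum_apply, map_smul, Pi.smul_apply, smul_eq_mul, fderiv_entry hg]

lemma two_hT_tens {g : (Fin d → ℝ) → Fin d → Fin m → ℝ} (hg : ContDiff ℝ 2 g) (x : Fin d → ℝ) (u v : Fin m → ℝ) :
    (2 : ℝ) • hT g x (tens u v) = mv (fderiv ℝ g x (mv (g x) u)) v := by
  have : mv (g x) u = ∑ j, u j • (fun l => g x l j) := by
    ext l; simp [mv, mul_comm]
  ext i
  rw [this, map_sum]
  simp only [hT, mv, tens, milsteinH_eq hg, Pi.smul_apply, smul_eq_mul, map_smul, Finset.sum_apply, Finset.sum_mul, Finset.mul_sum]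
  rw [Finset.sum_comm]
  refine Finset.sum_congr rfl fun j _ => Finset.sum_congr rfl fun k _ => by ring

theorem exists_coef (f : (Fin d → ℝ) → Fin d → ℝ) (g : (Fin d → ℝ) → Fin d → Fin m → ℝ)
    (hf : ContDiff ℝ 2 f) (hg : ContDiff ℝ 2 g) (Cfg : ℝ)
    (hf1 : ∀ x, ‖fderiv ℝ f x‖ ≤ Cfg) (hf2 : ∀ x, ‖iteratedFDeriv ℝ 2 f x‖ ≤ Cfg)
    (hg1 : ∀ x, ‖fderiv ℝ g x‖ ≤ Cfg) (hg2 : ∀ x, ‖iteratedFDeriv ℝ 2 g x‖ ≤ Cfg) :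
    ∃ C, Coef f g C := by
  have hc : 0 ≤ Cfg := (norm_nonneg _).trans (hf1 0)
  set B := Cfg + ‖f 0‖ + ‖g 0‖ with hB
  have hB0 : 0 ≤ B := by positivity
  have hcB : Cfg ≤ B := by rw [hB]; linarith [norm_nonneg (f 0), norm_nonneg (g 0)]
  have hfB : ‖f 0‖ ≤ B := by rw [hB]; linarith [norm_nonneg (f 0), norm_nonneg (g 0)]
  have hgB : ‖g 0‖ ≤ B := by rw [hB]; linarith [norm_nonneg (f 0), norm_nonneg (g 0)]
  have hf1 : ∀ x, ‖fderiv ℝ f x‖ ≤ B := fun x => (hf1 x).trans hcB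
  have hf2 : ∀ x, ‖iteratedFDeriv ℝ 2 f x‖ ≤ B := fun x => (hf2 x).trans hcB
  have hg1 : ∀ x, ‖fderiv ℝ g x‖ ≤ B := fun x => (hg1 x).trans hcB
  have hg2 : ∀ x, ‖iteratedFDeriv ℝ 2 g x‖ ≤ B := fun x => (hg2 x).trans hcB
  have grow : ∀ {E : Type} [NormedAddCommGroup E] [NormedSpace ℝ E] (φ : (Fin d → ℝ) → E), ContDiff ℝ 2 φ →
      (∀ x, ‖fderiv ℝ φ x‖ ≤ B) → ‖φ 0‖ ≤ B → ∀ x, ‖φ x‖ ≤ B * (‖x‖ + 1) := by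
    intro E _ _ φ h1 h2 h3 x
    have := c2_lip h1 h2 0 x
    have e : φ x = (φ x - φ 0) + φ 0 := by abel
    rw [e]
    rw [sub_zero] at this
    linarith [norm_add_le (φ x - φ 0) (φ 0)]
  have gg := grow g hg hg1 hgB
  have hent : ∀ (G : Fin d → Fin m → ℝ) i k, |G i k| ≤ ‖G‖ := fun G i k =>
    (norm_le_pi_norm (G i) k).trans (norm_le_pi_norm G i)
  have hcol : ∀ (G : Fin d → Fin m → ℝ) j, ‖(fun l => G l j)‖ ≤ ‖G‖ := fun G j =>
    (pi_norm_le_iff_of_nonneg (norm_nonneg _)).2 fun l => hent G l j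
  have hHb : ∀ x i j k, |milsteinH g x i j k| ≤ B * (B * (‖x‖ + 1)) := by
    intro x i j k
    rw [milsteinH_eq hg, abs_mul]
    have h1 : |fderiv ℝ g x (fun l => g x l j) i k| ≤ B * (B * (‖x‖ + 1)) := by
      refine (hent _ i k).trans (((fderiv ℝ g x).le_opNorm _).trans ?_)
      gcongr
      · exact hg1 x
      · exact (hcol _ j).trans (gg x)
    rw [abs_of_pos (by norm_num : (0:ℝ) < 1/2)]
    linarith [abs_nonneg (fderiv ℝ g x (fun l => g x l j) i k)]
  have hHl : ∀ x y i j k, |milsteinH g x i j k - milsteinH g y i j k| ≤ B * (B * ((‖x‖ + ‖y‖ + 1) * ‖x - y‖)) + B * (B * ‖x - y‖) := by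
    intro x y i j k
    rw [milsteinH_eq hg, milsteinH_eq hg, ← mul_sub, abs_mul]
    have e : fderiv ℝ g x (fun l => g x l j) i k - fderiv ℝ g y (fun l => g y l j) i k
      = (fderiv ℝ g x - fderiv ℝ g y) (fun l => g x l j) i k + fderiv ℝ g y (fun l => (g x - g y) l j) i k := by
      have : (fun l => (g x - g y) l j) = (fun l => g x l j) - (fun l => g y l j) := rfl
      rw [this, map_sub]
      simp
    rw [e]
    have h1 : |(fderiv ℝ g x - fderiv ℝ g y) (fun l => g x l j) i k| ≤ (B * ‖x - y‖) * (B * (‖x‖ + 1)) := by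
      refine (hent _ i k).trans (((fderiv ℝ g x - fderiv ℝ g y).le_opNorm _).trans ?_)
      gcongr
      · exact c2_dlip hg hg2 y x
      · exact (hcol _ j).trans (gg x)
    have h2 : |fderiv ℝ g y (fun l => (g x - g y) l j) i k| ≤ B * (B * ‖x - y‖) := by
      refine (hent _ i k).trans (((fderiv ℝ g y).le_opNorm _).trans ?_)
      gcongr
      · exact hg1 y
      · exact (hcol _ j).trans (c2_lip hg hg1 y x)
    have h3 := abs_add_le ((fderiv ℝ g x - fderiv ℝ g y) (fun l => g x l j) i k) (fderiv ℝ g y (fun l => (g x - g y) l j) i k)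
    have h4 : (B * ‖x - y‖) * (B * (‖x‖ + 1)) ≤ B * (B * ((‖x‖ + ‖y‖ + 1) * ‖x - y‖)) := by
      have : (B * ‖x - y‖) * (B * (‖x‖ + 1)) = B * (B * ((‖x‖ + 1) * ‖x - y‖)) := by ring
      rw [this]; gcongr; linarith [norm_nonneg y]
    rw [abs_of_pos (by norm_num : (0:ℝ) < 1/2)]
    linarith [abs_nonneg ((fderiv ℝ g x - fderiv ℝ g y) (fun l => g x l j) i k + fderiv ℝ g y (fun l => (g x - g y) l j) i k)]
  set C := B + m * B + (m * m) * (2 * (B * B)) with hC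
  have hBC : B ≤ C := by rw [hC]; have : 0 ≤ m * B + (m * m) * (2 * (B * B)) := by positivity
                         linarith
  have hmC : m * B ≤ C := by rw [hC]; have : 0 ≤ B + (m * m) * (2 * (B * B)) := by positivity
                             linarith
  have hmmC : (m * m) * (2 * (B * B)) ≤ C := by rw [hC]; have : 0 ≤ B + m * B := by positivity
                                                linarith
  have hfdc : Continuous (fderiv ℝ f) := hf.continuous_fderiv (by norm_num)
  have hgdc : Continuous (fderiv ℝ g) := hg.continuous_fderiv (by norm_num)
  have hgc := hg.continuous
  refine ⟨C, ⟨hB0.trans hBC, hf.continuous.measurable, fun l i => ?_, fun x => (hf1 x).trans hBC, fun i j => ?_, fun i j k => ?_,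
    fun x y => (c2_lip hf hf1 y x).trans (by gcongr), fun x => (grow f hf hf1 hfB x).trans (by gcongr),
    fun x y => (c2_sym hB0 hf hf2 x y).trans (by gcongr), fun x y u => (c2_T hB0 hf hf1 hf2 x y u).trans (by gcongr),
    fun x y w => ?_, fun x w => ?_, fun x y w => ?_, fun x y u v => ?_, fun x A => ?_, fun x y A => ?_⟩⟩
  · exact Continuous.measurable (by fun_prop)
  · exact Continuous.measurable (by fun_prop)
  · simp only [milsteinH_eq hg]
    exact Continuous.measurable (by fun_prop)
  · rw [← mv_sub_left]
    refine (mv_norm _ _).trans ?_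
    calc _ ≤ m * (B * ‖x - y‖ * ‖w‖) := by gcongr; exact c2_lip hg hg1 y x
      _ = (m * B) * (‖x - y‖ * ‖w‖) := by ring
      _ ≤ _ := by gcongr
  · refine (mv_norm _ _).trans ?_
    calc _ ≤ m * (B * (‖x‖ + 1) * ‖w‖) := by gcongr; exact gg x
      _ = (m * B) * ((‖x‖ + 1) * ‖w‖) := by ring
      _ ≤ _ := by gcongr
  · rw [← mv_add_left, ← mv_smul_left, ← mv_sub_left]
    refine (mv_norm _ _).trans ?_
    calc _ ≤ m * (B * ‖x - y‖ ^ 2 * ‖w‖) := by gcongr; exact c2_sym hB0 hg hg2 x y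
      _ = (m * B) * (‖x - y‖ ^ 2 * ‖w‖) := by ring
      _ ≤ _ := by gcongr
  · rw [two_hT_tens hg, ← mv_sub_left, ← mv_sub_left]
    refine (mv_norm _ _).trans ?_
    calc _ ≤ m * (B * (‖y - x‖ ^ 2 + ‖y - x - mv (g x) u‖) * ‖v‖) := by gcongr; exact c2_T hB0 hg hg1 hg2 x y _
      _ = (m * B) * ((‖y - x‖ ^ 2 + ‖y - x - mv (g x) u‖) * ‖v‖) := by ring
      _ ≤ _ := by gcongr
  · refine (ten_sum_norm _ A (B * (B * (‖x‖ + 1))) (by positivity) (hHb x)).trans ?_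
    calc _ ≤ m * m * (2 * (B * (B * (‖x‖ + 1))) * ‖A‖) := by
            have : 0 ≤ B * (B * (‖x‖ + 1)) := by positivity
            exact mul_le_mul_of_nonneg_left (mul_le_mul_of_nonneg_right (by linarith) (norm_nonneg _)) (by positivity)
      _ = (m * m * (2 * (B * B))) * ((‖x‖ + 1) * ‖A‖) := by ring
      _ ≤ _ := by gcongr
  · have e : hT g x A - hT g y A = fun i => ∑ j, ∑ k, (milsteinH g x i j k - milsteinH g y i j k) * A j k := by
      ext i; simp [hT, sub_mul, Finset.sum_sub_distrib]
    rw [e]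
    refine (ten_sum_norm _ A _ (by positivity) (hHl x y)).trans ?_
    calc _ ≤ m * m * ((2 * (B * (B * ((‖x‖ + ‖y‖ + 1) * ‖x - y‖)))) * ‖A‖) := by
            gcongr
            rw [two_mul]
            gcongr
            nlinarith [norm_nonneg (x - y), norm_nonneg x, norm_nonneg y, mul_nonneg (add_nonneg (norm_nonneg x) (norm_nonneg y)) (norm_nonneg (x - y))]
      _ = (m * m * (2 * (B * B))) * ((‖x‖ + ‖y‖ + 1) * ‖x - y‖ * ‖A‖) := by ring
      _ ≤ _ := by gcongr

end AM

namespace AM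

section gen
variable {ι : Type*} {P : ι → PS} {B : ℕ → ι → ℝ} {s : ι → ℝ} {a b : ℕ}
variable {E F H : Type*} [NormedAddCommGroup E] [MeasurableSpace E] [NormedAddCommGroup F]
  [MeasurableSpace F] [NormedAddCommGroup H] [MeasurableSpace H]

lemma IsO.of_mul_le [OpensMeasurableSpace E] [OpensMeasurableSpace F] [OpensMeasurableSpace H] (hs : ∀ i, 0 < s i)
    {Y : ∀ i, (P i).Ω → E} {Z : ∀ i, (P i).Ω → F} {X : ∀ i, (P i).Ω → H}
    (hY : IsO P s a Y) (hZ : IsO P s b Z) (hX : ∀ i, Measurable (X i)) (K : ℝ) (hK : 0 ≤ K)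
    (h : ∀ i ω, ‖X i ω‖ ≤ K * (‖Y i ω‖ * ‖Z i ω‖)) : IsO P s (a + b) X :=
  Bd.of_le (IsO.mul hs (Bd.norm hY) (Bd.norm hZ)) hX K hK (fun i ω => (h i ω).trans_eq (by simp))

lemma IsO.of_le' [OpensMeasurableSpace E] {Y : ∀ i, (P i).Ω → E} {Z : ∀ i, (P i).Ω → F} (hZ : IsO P s a Z)
    (hY : ∀ i, Measurable (Y i)) (K : ℝ) (hK : 0 ≤ K) (h : ∀ i ω, ‖Y i ω‖ ≤ K * ‖Z i ω‖) : IsO P s a Y :=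
  Bd.of_le hZ hY K hK h

lemma IsO.add [OpensMeasurableSpace E] [MeasurableAdd₂ E] {Y Z : ∀ i, (P i).Ω → E}
    (hY : IsO P s a Y) (hZ : IsO P s a Z) : IsO P s a (fun i ω => Y i ω + Z i ω) := Bd.add hY hZ
lemma IsO.sub [OpensMeasurableSpace E] [MeasurableAdd₂ E] [MeasurableNeg E] {Y Z : ∀ i, (P i).Ω → E}
    (hY : IsO P s a Y) (hZ : IsO P s a Z) : IsO P s a (fun i ω => Y i ω - Z i ω) := Bd.sub hY hZ
lemma IsO.smul [OpensMeasurableSpace E] [NormedSpace ℝ E] [MeasurableConstSMul ℝ E] {Y : ∀ i, (P i).Ω → E}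
    (c : ℝ) (hY : IsO P s a Y) : IsO P s a (fun i ω => c • Y i ω) := Bd.smul c hY
lemma IsO.norm [OpensMeasurableSpace E] {Y : ∀ i, (P i).Ω → E} (hY : IsO P s a Y) :
    IsO P s a (fun i ω => ‖Y i ω‖) := Bd.norm hY
lemma IsO.change {s' : ι → ℝ} {Y : ∀ i, (P i).Ω → E} (hY : IsO P s 0 Y) : IsO P s' 0 Y := by
  simpa [IsO] using hY
lemma IsO.allMom {Y : ∀ i, (P i).Ω → E} (hY : IsO P s a Y) (i : ι) : AllMom (P i) (Y i) := Bd.allMom hY i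
lemma IsO.meas {Y : ∀ i, (P i).Ω → E} (hY : IsO P s a Y) (i : ι) : Measurable (Y i) := hY.1 i

lemma IsO.pi {κ : Type*} [Fintype κ] {E' : Type*} [NormedAddCommGroup E'] [MeasurableSpace E'] [BorelSpace E'] [SecondCountableTopology E'] (hs : ∀ i, 0 < s i)
    {Y : ∀ i, (P i).Ω → κ → E'} (h : ∀ j, IsO P s a (fun i ω => Y i ω j)) : IsO P s a Y := by
  classical
  have hsum : ∀ t : Finset κ, IsO P s a (fun i ω => ∑ j ∈ t, ‖Y i ω j‖) := by
    intro t
    induction t using Finset.induction_on with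
    | empty =>
      simp only [Finset.sum_empty]
      refine ⟨fun i => measurable_const, fun q => ⟨1, zero_le_one, fun i => ⟨integrable_const _, ?_⟩⟩⟩
      rcases Nat.eq_zero_or_pos q with rfl | hq
      · simp
      · simp [hq.ne']
        rw [← pow_mul]
        have := hs i
        positivity
    | insert k t hk ih =>
      simp only [Finset.sum_insert hk]
      exact (h k).norm.add ih
  refine (hsum Finset.univ).of_le' (fun i => measurable_pi_lambda _ fun j => (h j).meas i) 1 zero_le_one fun i ω => ?_
  rw [one_mul, Real.norm_of_nonneg (Finset.sum_nonneg fun _ _ => norm_nonneg _)]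
  exact pi_norm_le_iff_of_nonneg (Finset.sum_nonneg fun _ _ => norm_nonneg _) |>.2 fun j =>
    Finset.single_le_sum (f := fun j => ‖Y i ω j‖) (fun _ _ => norm_nonneg _) (Finset.mem_univ j)

lemma IsO.one_add [OpensMeasurableSpace E] {Y : ∀ i, (P i).Ω → E} (hY : IsO P s 0 Y) : IsO P s 0 (fun i ω => ‖Y i ω‖ + 1) :=
  hY.norm.add (IsO.const (fun _ => (1 : ℝ)) 1 zero_le_one (by simp))

lemma AllMom.pi {Q : PS} {κ : Type*} [Fintype κ] {Y : Q.Ω → κ → ℝ} (h : ∀ j, AllMom Q (fun ω => Y ω j)) : AllMom Q Y :=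
  IsO.pi (a := 0) (fun _ => one_pos) h
end gen

variable {d m : ℕ} {f : (Fin d → ℝ) → Fin d → ℝ} {g : (Fin d → ℝ) → Fin d → Fin m → ℝ} {C : ℝ}

lemma Coef.mv_meas (hc : Coef f g C) {Ω : Type*} {_ : MeasurableSpace Ω} {x : Ω → Fin d → ℝ} {w : Ω → Fin m → ℝ}
    (hx : Measurable x) (hw : Measurable w) : Measurable (fun ω => mv (g (x ω)) (w ω)) := by
  refine measurable_pi_lambda _ fun i => Finset.measurable_sum _ fun j _ => ?_
  exact ((hc.g_meas i j).comp hx).mul ((measurable_pi_apply j).comp hw)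

lemma Coef.hT_meas (hc : Coef f g C) {Ω : Type*} {_ : MeasurableSpace Ω} {x : Ω → Fin d → ℝ} {A : Ω → Ten m}
    (hx : Measurable x) (hA : Measurable A) : Measurable (fun ω => hT g (x ω) (A ω)) := by
  refine measurable_pi_lambda _ fun i => Finset.measurable_sum _ fun j _ => Finset.measurable_sum _ fun k _ => ?_
  exact ((hc.h_meas i j k).comp hx).mul ((measurable_pi_apply k).comp ((measurable_pi_apply j).comp hA))

lemma comp_meas (δ : ℝ) : Measurable (comp δ : (Fin m → ℝ) → Ten m) := by
  refine measurable_pi_lambda _ fun j => measurable_pi_lambda _ fun k => ?_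
  exact ((measurable_pi_apply j).mul (measurable_pi_apply k)).sub_const _

lemma tens_meas {Ω : Type*} {_ : MeasurableSpace Ω} {u v : Ω → Fin m → ℝ} (hu : Measurable u) (hv : Measurable v) :
    Measurable (fun ω => tens (u ω) (v ω)) := by
  refine measurable_pi_lambda _ fun j => measurable_pi_lambda _ fun k => ?_
  exact ((measurable_pi_apply j).comp hu).mul ((measurable_pi_apply k).comp hv)

lemma Coef.step_meas (hc : Coef f g C) {Ω : Type*} {_ : MeasurableSpace Ω} {x : Ω → Fin d → ℝ} {w : Ω → Fin m → ℝ}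
    (hx : Measurable x) (hw : Measurable w) (δ : ℝ) : Measurable (fun ω => milsteinStep f g δ (x ω) (w ω)) := by
  simp only [milsteinStep_eq]
  exact ((hx.add ((hc.f_meas.comp hx).const_smul δ)).add (hc.mv_meas hx hw)).add (hc.hT_meas hx ((comp_meas δ).comp hw))

/-- a centred noise with covariance `δ I`, independent of `𝓑`. -/
structure Noise (Q : PS) (𝓑 : MeasurableSpace Q.Ω) (δ : ℝ) (w : Q.Ω → Fin m → ℝ) : Prop where
  B_le : 𝓑 ≤ Q.ms
  ind : Indep (MeasurableSpace.comap w inferInstance) 𝓑 Q.μ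
  mom : AllMom Q w
  mean : ∀ j, ∫ ω, w ω j ∂Q.μ = 0
  cov : ∀ j k, ∫ ω, w ω j * w ω k ∂Q.μ = if j = k then δ else 0

section noise
variable {Q : PS} {𝓑 : MeasurableSpace Q.Ω} {δ : ℝ} {w : Q.Ω → Fin m → ℝ}

lemma Noise.comap_le (hw : Noise Q 𝓑 δ w) : MeasurableSpace.comap w inferInstance ≤ Q.ms := hw.mom.meas.comap_le

lemma Noise.mz_lin (hw : Noise Q 𝓑 δ w) (j : Fin m) : MZ Q 𝓑 (fun ω => w ω j) :=
  MZ.of_indep hw.B_le hw.comap_le hw.ind ((measurable_pi_apply j).comp (comap_measurable w)) (hw.mom.apply j) (hw.mean j)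

lemma Noise.mz_comp (hw : Noise Q 𝓑 δ w) (j k : Fin m) : MZ Q 𝓑 (fun ω => comp δ (w ω) j k) := by
  have hm : AllMom Q (fun ω => w ω j * w ω k) := (hw.mom.apply j).mul (hw.mom.apply k)
  refine MZ.of_indep hw.B_le hw.comap_le hw.ind (((measurable_pi_apply k).comp ((measurable_pi_apply j).comp (comp_meas δ))).comp (comap_measurable w))
    (hm.sub (AllMom.const _)) ?_
  simp only [comp]
  rw [integral_sub hm.int (integrable_const _), hw.cov]
  simp

lemma Coef.g_allMom (hc : Coef f g C) {x : Q.Ω → Fin d → ℝ} (hx : AllMom Q x) (i : Fin d) (j : Fin m) :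
    AllMom Q (fun ω => g (x ω) i j) := by
  refine (hx.norm.add (AllMom.const 1)).of_le ((hc.g_meas i j).comp hx.meas) C hc.hC fun ω => ?_
  have h := (norm_le_pi_norm _ i).trans (hc.g_grow (x ω) (Pi.single j 1))
  have e : mv (g (x ω)) (Pi.single j 1) i = g (x ω) i j := by simp [mv, Pi.single_apply]
  rw [e, Pi.norm_single] at h
  rw [Real.norm_of_nonneg (by positivity : 0 ≤ ‖x ω‖ + 1)]
  simpa using h

lemma Coef.h_allMom (hc : Coef f g C) {x : Q.Ω → Fin d → ℝ} (hx : AllMom Q x) (i : Fin d) (j k : Fin m) :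
    AllMom Q (fun ω => milsteinH g (x ω) i j k) := by
  refine (hx.norm.add (AllMom.const 1)).of_le ((hc.h_meas i j k).comp hx.meas) C hc.hC fun ω => ?_
  have h := (norm_le_pi_norm _ i).trans (hc.h_grow (x ω) (Pi.single j (Pi.single k 1)))
  have e : hT g (x ω) (Pi.single j (Pi.single k 1)) i = milsteinH g (x ω) i j k := by
    rw [hT, Finset.sum_eq_single j, Finset.sum_eq_single k]
    · simp
    · intro b _ hb; simp [hb]
    · simp
    · intro b _ hb; simp [hb]
    · simp
  rw [e, Pi.norm_single, Pi.norm_single] at h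
  rw [Real.norm_of_nonneg (by positivity : 0 ≤ ‖x ω‖ + 1)]
  simpa using h

lemma Coef.f_allMom (hc : Coef f g C) {x : Q.Ω → Fin d → ℝ} (hx : AllMom Q x) : AllMom Q (fun ω => f (x ω)) := by
  refine (hx.norm.add (AllMom.const 1)).of_le (hc.f_meas.comp hx.meas) C hc.hC fun ω => ?_
  rw [Real.norm_of_nonneg (by positivity : 0 ≤ ‖x ω‖ + 1)]
  exact hc.f_grow _

lemma Noise.mz_mv (hw : Noise Q 𝓑 δ w) (hc : Coef f g C) {x : Q.Ω → Fin d → ℝ} (hx : Measurable[𝓑] x) (hx' : AllMom Q x) (i : Fin d) :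
    MZ Q 𝓑 (fun ω => mv (g (x ω)) (w ω) i) :=
  MZ.sum _ fun j _ => MZ.mul_left ((hc.g_meas i j).comp hx) (hc.g_allMom hx' i j) (hw.mz_lin j)

lemma Noise.mz_hT (hw : Noise Q 𝓑 δ w) (hc : Coef f g C) {x : Q.Ω → Fin d → ℝ} (hx : Measurable[𝓑] x) (hx' : AllMom Q x) (i : Fin d) :
    MZ Q 𝓑 (fun ω => hT g (x ω) (comp δ (w ω)) i) :=
  MZ.sum _ fun j _ => MZ.sum _ fun k _ => MZ.mul_left ((hc.h_meas i j k).comp hx) (hc.h_allMom hx' i j k) (hw.mz_comp j k)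

lemma Noise.mz_fd (hB : 𝓑 ≤ Q.ms) (hc : Coef f g C) {x u : Q.Ω → Fin d → ℝ} (hx : Measurable[𝓑] x) (hu : ∀ l, MZ Q 𝓑 (fun ω => u ω l)) (i : Fin d) :
    MZ Q 𝓑 (fun ω => fderiv ℝ f (x ω) (u ω) i) := by
  have e : (fun ω => fderiv ℝ f (x ω) (u ω) i) = fun ω => ∑ l, fderiv ℝ f (x ω) (Pi.single l 1) i * u ω l := by
    ext ω
    have : u ω = ∑ l, u ω l • (Pi.single l 1 : Fin d → ℝ) := by ext l; simp [Finset.sum_apply, Pi.single_apply]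
    conv_lhs => rw [this, map_sum]
    simp [mul_comm]
  rw [e]
  refine MZ.sum _ fun l _ => MZ.mul_left ((hc.fd_meas l i).comp hx) ?_ (hu l)
  refine (AllMom.const (1 : ℝ)).of_le ((hc.fd_meas l i).comp (hx.mono hB le_rfl)) C hc.hC fun ω => ?_
  refine (norm_le_pi_norm _ i).trans (((fderiv ℝ f (x ω)).le_opNorm _).trans ?_)
  rw [Pi.norm_single]
  simpa using hc.fd_bd (x ω)

lemma Noise.mv_allMom (hw : Noise Q 𝓑 δ w) (hc : Coef f g C) {x : Q.Ω → Fin d → ℝ} (hx : Measurable[𝓑] x) (hx' : AllMom Q x) :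
    AllMom Q (fun ω => mv (g (x ω)) (w ω)) := AllMom.pi fun i => (hw.mz_mv hc hx hx' i).1
lemma Noise.hT_allMom (hw : Noise Q 𝓑 δ w) (hc : Coef f g C) {x : Q.Ω → Fin d → ℝ} (hx : Measurable[𝓑] x) (hx' : AllMom Q x) :
    AllMom Q (fun ω => hT g (x ω) (comp δ (w ω))) := AllMom.pi fun i => (hw.mz_hT hc hx hx' i).1

lemma Noise.step_allMom (hw : Noise Q 𝓑 δ w) (hc : Coef f g C) {x : Q.Ω → Fin d → ℝ} (hx : Measurable[𝓑] x) (hx' : AllMom Q x) :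
    AllMom Q (fun ω => milsteinStep f g δ (x ω) (w ω)) := by
  simp only [milsteinStep_eq]
  have h1 : AllMom Q (fun ω => δ • f (x ω)) := Bd.smul δ (hc.f_allMom hx')
  exact ((hx'.add h1).add (hw.mv_allMom hc hx hx')).add (hw.hT_allMom hc hx hx')
end noise

section fam
variable {ι : Type*} {P : ι → PS} {s : ι → ℝ} {a b : ℕ} {w : ∀ i, (P i).Ω → Fin m → ℝ} {x y : ∀ i, (P i).Ω → Fin d → ℝ}

lemma IsO.comp' (hs : ∀ i, 0 < s i) (hw : IsO P s 1 w) {δ : ι → ℝ} (h0 : ∀ i, 0 ≤ δ i) (hδ : ∀ i, δ i ≤ s i ^ 2) :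
    IsO P s 2 (fun i ω => comp (δ i) (w i ω)) := by
  have h1 : IsO P s 2 (fun i ω => ‖w i ω‖ * ‖w i ω‖ + δ i) :=
    (hw.norm.mul hs hw.norm).add (IsO.const δ 1 zero_le_one fun i => by
      rw [Real.norm_of_nonneg (h0 i), one_mul]; exact hδ i)
  refine h1.of_le' (fun i => (comp_meas _).comp (hw.meas i)) 1 zero_le_one fun i ω => ?_
  rw [one_mul]
  exact (comp_norm _ (h0 i) _).trans (le_abs_self _)

lemma IsO.hT' (hs : ∀ i, 0 < s i) (hc : Coef f g C) (hx : IsO P s 0 x) {A : ∀ i, (P i).Ω → Ten m} (hA : IsO P s a A) :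
    IsO P s a (fun i ω => hT g (x i ω) (A i ω)) := by
  refine (IsO.of_mul_le hs hx.one_add hA (fun i => hc.hT_meas (hx.meas i) (hA.meas i)) C hc.hC fun i ω => ?_).congr_exp (zero_add a)
  rw [Real.norm_of_nonneg (by positivity : 0 ≤ ‖x i ω‖ + 1)]
  exact hc.h_grow _ _

lemma IsO.mv' (hs : ∀ i, 0 < s i) (hc : Coef f g C) (hx : IsO P s 0 x) (hw : IsO P s a w) :
    IsO P s a (fun i ω => mv (g (x i ω)) (w i ω)) := by
  refine (IsO.of_mul_le hs hx.one_add hw (fun i => hc.mv_meas (hx.meas i) (hw.meas i)) C hc.hC fun i ω => ?_).congr_exp (zero_add a)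
  rw [Real.norm_of_nonneg (by positivity : 0 ≤ ‖x i ω‖ + 1)]
  exact hc.g_grow _ _

lemma IsO.f' (hc : Coef f g C) (hx : IsO P s 0 x) : IsO P s 0 (fun i ω => f (x i ω)) := by
  refine hx.one_add.of_le' (fun i => hc.f_meas.comp (hx.meas i)) C hc.hC fun i ω => ?_
  rw [Real.norm_of_nonneg (by positivity : 0 ≤ ‖x i ω‖ + 1)]
  exact hc.f_grow _

lemma IsO.hT_sub (hs : ∀ i, 0 < s i) (hc : Coef f g C) (hx : IsO P s 0 x) (hy : IsO P s 0 y)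
    (hxy : IsO P s a (fun i ω => x i ω - y i ω)) {A : ∀ i, (P i).Ω → Ten m} (hA : IsO P s b A) :
    IsO P s (a + b) (fun i ω => hT g (x i ω) (A i ω) - hT g (y i ω) (A i ω)) := by
  have h1 : IsO P s a (fun i ω => (‖x i ω‖ + ‖y i ω‖ + 1) * ‖x i ω - y i ω‖) :=
    (IsO.mul hs ((hx.norm.add hy.norm).add (IsO.const (fun _ => (1 : ℝ)) 1 zero_le_one (by simp))) hxy.norm).congr_exp (zero_add a)
  refine IsO.of_mul_le hs h1 hA (fun i => (hc.hT_meas (hx.meas i) (hA.meas i)).sub (hc.hT_meas (hy.meas i) (hA.meas i))) C hc.hC fun i ω => ?_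
  rw [Real.norm_of_nonneg (by positivity : 0 ≤ (‖x i ω‖ + ‖y i ω‖ + 1) * ‖x i ω - y i ω‖)]
  exact hc.h_lip _ _ _

lemma IsO.mv_sub (hs : ∀ i, 0 < s i) (hc : Coef f g C) (hx : ∀ i, Measurable (x i)) (hy : ∀ i, Measurable (y i))
    (hxy : IsO P s a (fun i ω => x i ω - y i ω)) (hw : IsO P s b w) :
    IsO P s (a + b) (fun i ω => mv (g (x i ω)) (w i ω) - mv (g (y i ω)) (w i ω)) :=
  IsO.of_mul_le hs hxy hw (fun i => (hc.mv_meas (hx i) (hw.meas i)).sub (hc.mv_meas (hy i) (hw.meas i))) C hc.hC fun _ _ => hc.g_lip _ _ _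
end fam

/-- a Milstein chain on a grid -/
structure Chain (T : ℝ) (f : (Fin d → ℝ) → Fin d → ℝ) (g : (Fin d → ℝ) → Fin d → Fin m → ℝ) (x₀ : Fin d → ℝ) where
  G : Grid T
  X : ℕ → G.P.Ω → Fin d → ℝ
  w : Fin G.N → G.P.Ω → Fin m → ℝ
  noise : ∀ n : Fin G.N, Noise G.P (G.F n) (G.s ^ 2) (w n)
  wF : ∀ n : Fin G.N, Measurable[G.F (n + 1)] (w n)
  X0 : ∀ ω, X 0 ω = x₀
  step : ∀ (n : Fin G.N) ω, X (n + 1) ω = milsteinStep f g (G.s ^ 2) (X n ω) (w n ω)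

section chain
variable {T : ℝ} {x₀ : Fin d → ℝ}

lemma Chain.XF (ch : Chain T f g x₀) (hc : Coef f g C) : ∀ n, n ≤ ch.G.N → Measurable[ch.G.F n] (ch.X n) := by
  intro n
  induction n with
  | zero => intro _; rw [show ch.X 0 = fun _ => x₀ from funext ch.X0]; exact measurable_const
  | succ n ih =>
    intro hn
    have h1 := (ih (by omega)).mono (ch.G.F_mono (Nat.le_succ n)) le_rfl
    rw [show ch.X (n + 1) = _ from funext (ch.step ⟨n, hn⟩)]
    exact hc.step_meas h1 (ch.wF ⟨n, hn⟩) _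

lemma Chain.XM (ch : Chain T f g x₀) (hc : Coef f g C) : ∀ n, n ≤ ch.G.N → AllMom ch.G.P (ch.X n) := by
  intro n
  induction n with
  | zero => intro _; rw [show ch.X 0 = fun _ => x₀ from funext ch.X0]; exact AllMom.const _
  | succ n ih =>
    intro hn
    rw [show ch.X (n + 1) = _ from funext (ch.step ⟨n, hn⟩)]
    exact (ch.noise ⟨n, hn⟩).step_allMom hc (ch.XF hc n (by omega)) (ih (by omega))

theorem stage1 {I : Type*} (ch : I → Chain T f g x₀) (hc : Coef f g C)
    (hw : IsO (fun x : Steps (fun c => (ch c).G) => (ch x.1).G.P) (fun x => (ch x.1).G.s) 1 (fun x => (ch x.1).w x.2)) :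
    IsO (fun x : Times (fun c => (ch c).G) => (ch x.1).G.P) (fun x => (ch x.1).G.s) 0 (fun x => (ch x.1).X x.2) := by
  have hs : ∀ x : Steps (fun c => (ch c).G), 0 < (ch x.1).G.s := fun x => (ch x.1).G.hs
  have hXM : ∀ x : Steps (fun c => (ch c).G), AllMom (ch x.1).G.P ((ch x.1).X x.2) := fun x => (ch x.1).XM hc x.2 x.2.2.le
  have hXF : ∀ x : Steps (fun c => (ch c).G), Measurable[(ch x.1).G.F x.2] ((ch x.1).X x.2) := fun x => (ch x.1).XF hc x.2 x.2.2.le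
  refine propagation (fun c => (ch c).G) 0 (fun c => (ch c).X)
    (fun x ω => (ch x.1).G.s ^ 2 • f ((ch x.1).X x.2 ω))
    (fun x ω => mv (g ((ch x.1).X x.2 ω)) ((ch x.1).w x.2 ω) + hT g ((ch x.1).X x.2 ω) (comp ((ch x.1).G.s ^ 2) ((ch x.1).w x.2 ω)))
    (fun c n hn => (ch c).XM hc n hn) (fun c n hn => (ch c).XF hc n hn) ‖x₀‖ (norm_nonneg _) (fun c ω => by simp [(ch c).X0])
    (fun x ω => ?_) ?_ ?_ ?_
  · rw [(ch x.1).step, milsteinStep_eq]; abel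
  · refine Rel.of_prod (ξ := fun x ω => (ch x.1).G.s ^ 2) hs (fun x => (ch x.1).G.F x.2) (fun x => ⊥) (fun x => (ch x.1).G.F_le _) (fun x => bot_le)
      (fun x => indep_bot_left _) hXF hXM (fun x => measurable_const) ?_ ?_ C hc.hC ?_
    · exact IsO.const _ 1 zero_le_one (fun x => by simp)
    · intro x
      have h := hc.f_meas.comp (hXM x).meas
      exact h.const_smul ((ch x.1).G.s ^ 2)
    · intro x ω
      rw [norm_smul, pow_zero, mul_comm, ← mul_assoc]
      gcongr
      exact hc.f_grow _
  · refine Rel.of_prod (ξ := fun x ω => ‖(ch x.1).w x.2 ω‖ + ‖comp ((ch x.1).G.s ^ 2) ((ch x.1).w x.2 ω)‖) hs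
      (fun x => (ch x.1).G.F x.2) (fun x => MeasurableSpace.comap ((ch x.1).w x.2) inferInstance) (fun x => (ch x.1).G.F_le _) (fun x => ((ch x.1).noise x.2).comap_le)
      (fun x => ((ch x.1).noise x.2).ind) hXF hXM ?_ ?_ ?_ C hc.hC ?_
    · intro x
      have h1 : Measurable[MeasurableSpace.comap ((ch x.1).w x.2) inferInstance] ((ch x.1).w x.2) := comap_measurable _
      exact (measurable_norm.comp h1).add (measurable_norm.comp ((comp_meas _).comp h1))
    · refine hw.norm.add (IsO.weaken hs (Real.sqrt T) (fun x => (ch x.1).G.s_le) (by norm_num : 1 ≤ 2) ?_)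
      exact (IsO.comp' hs hw (fun x => by positivity) fun x => le_rfl).norm
    · exact fun x => (hc.mv_meas (hXM x).meas (hw.meas x)).add (hc.hT_meas (hXM x).meas ((comp_meas _).comp (hw.meas x)))
    · intro x ω
      refine (norm_add_le _ _).trans ((add_le_add (hc.g_grow _ _) (hc.h_grow _ _)).trans_eq ?_)
      rw [Real.norm_of_nonneg (by positivity)]
      ring
  · intro x i
    exact ((((ch x.1).noise x.2).mz_mv hc (hXF x) (hXM x) i)).add (((ch x.1).noise x.2).mz_hT hc (hXF x) (hXM x) i)
end chain
end AM

namespace AM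
variable {d m : ℕ}

/-- one instance of the antithetic setting; `X false` is the fine path, `X true` the antithetic one. -/
structure Config (T : ℝ) (f : (Fin d → ℝ) → Fin d → ℝ) (g : (Fin d → ℝ) → Fin d → Fin m → ℝ) (x₀ : Fin d → ℝ) where
  Q : PS
  N : ℕ
  hN : 1 ≤ N
  T_pos : 0 < T
  W : Fin N → Bool → Q.Ω → Fin m → ℝ
  X : Bool → ℕ → Q.Ω → Fin d → ℝ
  Xc : ℕ → Q.Ω → Fin d → ℝ
  W_meas : ∀ n b j, Measurable fun ω => W n b ω j
  W_law : ∀ n b j, Q.μ.map (fun ω => W n b ω j) = gaussianReal 0 (Real.toNNReal (T / N / 2))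
  W_ind : iIndepFun (fun q : Fin N × Bool × Fin m => fun ω => W q.1 q.2.1 ω q.2.2) Q.μ
  X0 : ∀ b ω, X b 0 ω = x₀
  Xc0 : ∀ ω, Xc 0 ω = x₀
  step1 : ∀ b (n : Fin N) ω, X b (2 * (n : ℕ) + 1) ω = milsteinStep f g (T / N / 2) (X b (2 * (n : ℕ)) ω) (W n b ω)
  step2 : ∀ b (n : Fin N) ω, X b (2 * (n : ℕ) + 2) ω = milsteinStep f g (T / N / 2) (X b (2 * (n : ℕ) + 1) ω) (W n (!b) ω)
  stepc : ∀ (n : Fin N) ω, Xc ((n : ℕ) + 1) ω = milsteinStep f g (T / N) (Xc (n : ℕ) ω) (W n false ω + W n true ω)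

namespace Config
variable {T : ℝ} {f : (Fin d → ℝ) → Fin d → ℝ} {g : (Fin d → ℝ) → Fin d → Fin m → ℝ} {x₀ : Fin d → ℝ} {C : ℝ}
variable (c : Config T f g x₀)

lemma dt_pos : 0 < T / c.N := by
  have := c.T_pos
  have : (1 : ℝ) ≤ c.N := by exact_mod_cast c.hN
  positivity

noncomputable def s : ℝ := Real.sqrt (T / c.N)
lemma s_pos : 0 < c.s := Real.sqrt_pos.2 c.dt_pos
lemma s_sq : c.s ^ 2 = T / c.N := Real.sq_sqrt c.dt_pos.le

@[reducible] def sig (S : Set (Fin c.N × Bool × Fin m)) : MeasurableSpace c.Q.Ω :=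
  ⨆ q ∈ S, MeasurableSpace.comap (fun ω => c.W q.1 q.2.1 ω q.2.2) inferInstance

lemma sig_le (S : Set (Fin c.N × Bool × Fin m)) : c.sig S ≤ c.Q.ms :=
  iSup₂_le fun q _ => (c.W_meas q.1 q.2.1 q.2.2).comap_le

lemma sig_mono {S S' : Set (Fin c.N × Bool × Fin m)} (h : S ⊆ S') : c.sig S ≤ c.sig S' :=
  biSup_mono h

lemma sig_indep {S S' : Set (Fin c.N × Bool × Fin m)} (h : Disjoint S S') : Indep (c.sig S) (c.sig S') c.Q.μ :=
  indep_iSup_of_disjoint (m := fun q : Fin c.N × Bool × Fin m => MeasurableSpace.comap (fun ω => c.W q.1 q.2.1 ω q.2.2) inferInstance)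
    (fun q => (c.W_meas q.1 q.2.1 q.2.2).comap_le) c.W_ind.iIndep h

lemma W_sig {S : Set (Fin c.N × Bool × Fin m)} (n : Fin c.N) (b : Bool) (h : ∀ j, (n, b, j) ∈ S) : Measurable[c.sig S] (c.W n b) := by
  refine @measurable_pi_lambda _ _ _ (c.sig S) _ _ fun j => ?_
  refine Measurable.of_comap_le ?_
  exact le_iSup₂_of_le (f := fun q (_ : q ∈ S) => MeasurableSpace.comap (fun ω => c.W q.1 q.2.1 ω q.2.2) inferInstance) (n, b, j) (h j) le_rfl

lemma W_moment_eq (n : Fin c.N) (b : Bool) (j : Fin m) (q : ℕ) :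
    ∫ ω, ‖c.W n b ω j‖ ^ q ∂c.Q.μ = (Real.sqrt (T / c.N / 2)) ^ q * ∫ x, ‖x‖ ^ q ∂(gaussianReal 0 1) := by
  have hδ : 0 ≤ T / c.N / 2 := by have := c.dt_pos; positivity
  have e1 : ∫ ω, ‖c.W n b ω j‖ ^ q ∂c.Q.μ = ∫ x, ‖x‖ ^ q ∂(c.Q.μ.map (fun ω => c.W n b ω j)) := by
    rw [integral_map (c.W_meas n b j).aemeasurable (by fun_prop)]
  have e2 : gaussianReal 0 (Real.toNNReal (T / c.N / 2)) = (gaussianReal 0 1).map (fun x => Real.sqrt (T / c.N / 2) * x) := by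
    rw [gaussianReal_map_const_mul]
    congr 1
    · simp
    · ext
      rw [Real.coe_toNNReal _ hδ, mul_one]
      exact (Real.sq_sqrt hδ).symm
  rw [e1, c.W_law, e2, integral_map (by fun_prop) (by fun_prop), ← integral_const_mul]
  congr 1; ext x
  rw [norm_mul, mul_pow, Real.norm_of_nonneg (Real.sqrt_nonneg _)]

lemma W_allMom (n : Fin c.N) (b : Bool) (j : Fin m) : AllMom c.Q (fun ω => c.W n b ω j) := by
  refine allMom_iff.2 ⟨c.W_meas n b j, fun q => ?_⟩
  have h : MemLp (id : ℝ → ℝ) q (gaussianReal 0 (Real.toNNReal (T / c.N / 2))) := by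
    exact_mod_cast memLp_id_gaussianReal (q : NNReal)
  have h2 : Integrable (fun x : ℝ => ‖x‖ ^ q) (c.Q.μ.map (fun ω => c.W n b ω j)) := by
    rw [c.W_law]
    exact h.integrable_norm_pow'
  exact h2.comp_measurable (c.W_meas n b j)

lemma W_mean (n : Fin c.N) (b : Bool) (j : Fin m) : ∫ ω, c.W n b ω j ∂c.Q.μ = 0 := by
  have : ∫ ω, c.W n b ω j ∂c.Q.μ = ∫ x, x ∂(c.Q.μ.map (fun ω => c.W n b ω j)) := by
    rw [integral_map (c.W_meas n b j).aemeasurable (by fun_prop)]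
  rw [this, c.W_law, integral_id_gaussianReal]

lemma W_var (n : Fin c.N) (b : Bool) (j : Fin m) : ∫ ω, c.W n b ω j * c.W n b ω j ∂c.Q.μ = T / c.N / 2 := by
  have hδ : 0 ≤ T / c.N / 2 := by have := c.dt_pos; positivity
  have : ∫ ω, c.W n b ω j * c.W n b ω j ∂c.Q.μ = ∫ x, x * x ∂(c.Q.μ.map (fun ω => c.W n b ω j)) := by
    rw [integral_map (c.W_meas n b j).aemeasurable (by fun_prop)]
  rw [this, c.W_law]
  have h := variance_of_integral_eq_zero (μ := gaussianReal 0 (Real.toNNReal (T / c.N / 2))) (X := fun x => x) aemeasurable_id integral_id_gaussianReal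
  have h2 := variance_fun_id_gaussianReal (μ := 0) (v := Real.toNNReal (T / c.N / 2))
  rw [h2] at h
  simp only [← sq]
  rw [← h, Real.coe_toNNReal _ hδ]

lemma W_cov (q r : Fin c.N × Bool × Fin m) :
    ∫ ω, c.W q.1 q.2.1 ω q.2.2 * c.W r.1 r.2.1 ω r.2.2 ∂c.Q.μ = if q = r then T / c.N / 2 else 0 := by
  split_ifs with h
  · subst h; exact c.W_var _ _ _
  · have hi := c.W_ind.indepFun h
    have := hi.integral_fun_mul_eq_mul_integral (c.W_meas _ _ _).aestronglyMeasurable (c.W_meas _ _ _).aestronglyMeasurable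
    rw [this, c.W_mean, zero_mul]

lemma noise_W {S : Set (Fin c.N × Bool × Fin m)} (n : Fin c.N) (b : Bool) (h : ∀ j, (n, b, j) ∉ S) :
    Noise c.Q (c.sig S) (T / c.N / 2) (c.W n b) where
  B_le := c.sig_le S
  ind := by
    refine indep_of_indep_of_le_left (c.sig_indep (S := {q | q.1 = n ∧ q.2.1 = b}) (S' := S) ?_) (c.W_sig n b fun j => by simp).comap_le
    rw [Set.disjoint_left]
    rintro ⟨_, _, j⟩ ⟨rfl, rfl⟩
    exact h j
  mom := AllMom.pi fun j => c.W_allMom n b j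
  mean := c.W_mean n b
  cov := fun j k => by
    rw [c.W_cov (n, b, j) (n, b, k)]; simp

lemma noise_Wc {S : Set (Fin c.N × Bool × Fin m)} (n : Fin c.N) (h : ∀ b j, (n, b, j) ∉ S) :
    Noise c.Q (c.sig S) (T / c.N) (fun ω => c.W n false ω + c.W n true ω) where
  B_le := c.sig_le S
  ind := by
    have hm : Measurable[c.sig {q | q.1 = n}] (fun ω => c.W n false ω + c.W n true ω) :=
      (c.W_sig n false fun j => by simp).add (c.W_sig n true fun j => by simp)
    refine indep_of_indep_of_le_left (c.sig_indep (S := {q | q.1 = n}) (S' := S) ?_) hm.comap_le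
    rw [Set.disjoint_left]
    rintro ⟨_, b, j⟩ rfl
    exact h b j
  mom := AllMom.pi fun j => (c.W_allMom n false j).add (c.W_allMom n true j)
  mean := fun j => by
    simp only [Pi.add_apply]
    rw [integral_add (c.W_allMom n false j).int (c.W_allMom n true j).int, c.W_mean, c.W_mean, add_zero]
  cov := fun j k => by
    have i1 := fun b b' => ((c.W_allMom n b j).mul (c.W_allMom n b' k)).int
    have e : (fun ω => (c.W n false ω + c.W n true ω) j * (c.W n false ω + c.W n true ω) k)
      = fun ω => (c.W n false ω j * c.W n false ω k + c.W n false ω j * c.W n true ω k) + (c.W n true ω j * c.W n false ω k + c.W n true ω j * c.W n true ω k) := by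
      ext ω; simp only [Pi.add_apply]; ring
    have i2 : ∀ b, Integrable (fun ω => c.W n b ω j * c.W n false ω k + c.W n b ω j * c.W n true ω k) c.Q.μ := fun b => (i1 b false).add (i1 b true)
    rw [e, integral_add (i2 _) (i2 _), integral_add (i1 _ _) (i1 _ _), integral_add (i1 _ _) (i1 _ _),
      c.W_cov (n, false, j) (n, false, k), c.W_cov (n, false, j) (n, true, k), c.W_cov (n, true, j) (n, false, k), c.W_cov (n, true, j) (n, true, k)]
    by_cases hjk : j = k <;> simp [hjk]

/-- the increments seen before fine time `t` by the path using order `b` -/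
def past (b : Bool) (t : ℕ) : Set (Fin c.N × Bool × Fin m) := {q | 2 * (q.1 : ℕ) + (if q.2.1 = b then 0 else 1) < t}
def pastc (n : ℕ) : Set (Fin c.N × Bool × Fin m) := {q | (q.1 : ℕ) < n}

lemma past_even (b : Bool) (n : ℕ) : c.past b (2 * n) = c.pastc n := by
  ext q; simp only [past, pastc, Set.mem_ofPred_eq]; split_ifs <;> omega
lemma past_mono (b : Bool) : Monotone (c.past b) := fun _ _ h _ hq => lt_of_lt_of_le hq h
lemma pastc_mono : Monotone c.pastc := fun _ _ h _ hq => lt_of_lt_of_le hq h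

noncomputable def grid : Grid T where
  P := c.Q
  N := c.N
  hN := c.hN
  s := c.s
  hs := c.s_pos
  hT := by
    have : (1 : ℝ) ≤ c.N := by exact_mod_cast c.hN
    rw [c.s_sq]; field_simp
  F n := c.sig (c.pastc n)
  F_le n := c.sig_le _
  F_mono _ _ h := c.sig_mono (c.pastc_mono h)

noncomputable def chainc : Chain T f g x₀ where
  G := c.grid
  X := c.Xc
  w := fun n ω => c.W n false ω + c.W n true ω
  noise n := by
    show Noise c.Q _ (c.s ^ 2) _
    rw [c.s_sq]
    exact c.noise_Wc n (fun b j => by simp [pastc])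
  wF n := (c.W_sig n false fun j => by simp [grid, pastc]).add (c.W_sig n true fun j => by simp [grid, pastc])
  X0 := c.Xc0
  step n ω := by
    show _ = milsteinStep f g (c.s ^ 2) _ _
    rw [c.s_sq]
    exact c.stepc n ω

noncomputable def gridf (b : Bool) : Grid T where
  P := c.Q
  N := 2 * c.N
  hN := by have := c.hN; omega
  s := Real.sqrt (T / c.N / 2)
  hs := Real.sqrt_pos.2 (by have := c.dt_pos; positivity)
  hT := by
    have : (1 : ℝ) ≤ c.N := by exact_mod_cast c.hN
    rw [Real.sq_sqrt (by have := c.dt_pos; positivity)]; push_cast; field_simp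
  F t := c.sig (c.past b t)
  F_le t := c.sig_le _
  F_mono _ _ h := c.sig_mono (c.past_mono b h)

def wf (b : Bool) (t : Fin (2 * c.N)) : c.Q.Ω → Fin m → ℝ :=
  c.W ⟨t / 2, by have := t.2; omega⟩ (if (t : ℕ) % 2 = 0 then b else !b)

noncomputable def chainf (b : Bool) : Chain T f g x₀ where
  G := c.gridf b
  X := c.X b
  w := c.wf b
  noise t := by
    show Noise c.Q (c.sig (c.past b t)) (Real.sqrt (T / c.N / 2) ^ 2) (c.wf b t)
    rw [Real.sq_sqrt (by have := c.dt_pos; positivity)]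
    refine c.noise_W _ _ (fun j => ?_)
    simp only [past, Set.mem_ofPred_eq]
    split_ifs with h1 h2 h2
    · omega
    · simp at h2
    · simp at h2
    · omega
  wF t := by
    refine c.W_sig _ _ (fun j => ?_)
    simp only [past, Set.mem_ofPred_eq]
    split_ifs with h1 h2 h2
    · omega
    · simp at h2
    · simp at h2
    · omega
  X0 := c.X0 b
  step t ω := by
    show c.X b (t + 1) ω = milsteinStep f g (Real.sqrt (T / c.N / 2) ^ 2) (c.X b t ω) (c.wf b t ω)
    rw [Real.sq_sqrt (by have := c.dt_pos; positivity)]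
    obtain ⟨t, ht⟩ := t
    have ht : t < 2 * c.N := ht
    have hlt : t / 2 < c.N := by omega
    simp only [wf]
    split_ifs with h
    · have := c.step1 b ⟨t / 2, hlt⟩ ω
      simp only at this
      rw [show 2 * (t / 2) = t by omega] at this
      exact this
    · have := c.step2 b ⟨t / 2, hlt⟩ ω
      simp only at this
      rw [show 2 * (t / 2) + 2 = t + 1 by omega, show 2 * (t / 2) + 1 = t by omega] at this
      exact this

end Config

section famC
variable {T : ℝ} {f : (Fin d → ℝ) → Fin d → ℝ} {g : (Fin d → ℝ) → Fin d → Fin m → ℝ} {x₀ : Fin d → ℝ} {C : ℝ}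

abbrev St (T : ℝ) (f : (Fin d → ℝ) → Fin d → ℝ) (g : (Fin d → ℝ) → Fin d → Fin m → ℝ) (x₀ : Fin d → ℝ) :=
  Σ c : Config T f g x₀, Fin c.N
/-- coarse steps -/
abbrev St.P (x : St T f g x₀) : PS := x.1.Q
noncomputable abbrev St.s (x : St T f g x₀) : ℝ := x.1.s
lemma St.s_pos (x : St T f g x₀) : 0 < x.s := x.1.s_pos
lemma St.s_le (x : St T f g x₀) : x.s ≤ Real.sqrt T := x.1.grid.s_le

/-- `W` is of the order of the square root of the step, for any reindexing. -/
lemma W_isO {ι : Type*} (φ : ι → Config T f g x₀) (n : ∀ i, Fin (φ i).N) (b : ι → Bool) :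
    IsO (fun i => (φ i).Q) (fun i => Real.sqrt (T / (φ i).N / 2)) 1 (fun i => (φ i).W (n i) (b i)) := by
  refine IsO.pi (fun i => Real.sqrt_pos.2 (by have := (φ i).dt_pos; positivity)) fun j => ⟨fun i => (φ i).W_meas _ _ _, fun q => ?_⟩
  refine ⟨∫ x, ‖x‖ ^ q ∂(gaussianReal 0 1), integral_nonneg fun _ => by positivity, fun i => ⟨((φ i).W_allMom _ _ _).int_pow q, ?_⟩⟩
  rw [(φ i).W_moment_eq, mul_comm]
  simp only [pow_one, le_refl]

lemma IsO.mono_s {ι : Type*} {P : ι → PS} {s s' : ι → ℝ} {a : ℕ} {E : Type*} [NormedAddCommGroup E] [MeasurableSpace E]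
    {Y : ∀ i, (P i).Ω → E} (hY : IsO P s a Y) (hs : ∀ i, 0 ≤ s i) (h : ∀ i, s i ≤ s' i) : IsO P s' a Y := by
  refine Bd.mono_B hY fun q => ⟨1, zero_le_one, fun i => ?_⟩
  rw [one_mul]
  have := hs i
  gcongr
  exact h i

lemma sqrt_half_le (c : Config T f g x₀) : Real.sqrt (T / c.N / 2) ≤ c.s :=
  Real.sqrt_le_sqrt (by have := c.dt_pos; linarith)

lemma W_O (b : Bool) : IsO St.P St.s 1 (fun x : St T f g x₀ => x.1.W x.2 b) :=
  (W_isO (fun x : St T f g x₀ => x.1) (fun x => x.2) (fun _ => b)).mono_s (fun _ => Real.sqrt_nonneg _) fun x => sqrt_half_le x.1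

lemma Wc_O : IsO St.P St.s 1 (fun (x : St T f g x₀) ω => x.1.W x.2 false ω + x.1.W x.2 true ω) :=
  (W_O false).add (W_O true)

lemma Xc_O (hc : Coef f g C) : IsO St.P St.s 0 (fun (x : St T f g x₀) => x.1.Xc x.2) := by
  have h := stage1 (fun c : Config T f g x₀ => c.chainc) hc Wc_O
  exact (Bd.comp (fun x : St T f g x₀ => (⟨x.1, x.2.castSucc⟩ : Times (fun c : Config T f g x₀ => c.chainc.G))) h)

lemma X_O_aux (hc : Coef f g C) {ι : Type*} (φ : ι → Config T f g x₀) (b : ι → Bool) (t : ι → ℕ) (ht : ∀ i, t i ≤ 2 * (φ i).N) (s : ι → ℝ) :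
    IsO (fun i => (φ i).Q) s 0 (fun i => (φ i).X (b i) (t i)) := by
  have h := stage1 (fun c : Config T f g x₀ × Bool => c.1.chainf c.2) hc
    (W_isO (fun x : Steps (fun c : Config T f g x₀ × Bool => (c.1.chainf c.2).G) => x.1.1) _ _)
  have h2 := (Bd.comp (fun i => (⟨(φ i, b i), ⟨t i, Nat.lt_succ_of_le (ht i)⟩⟩ : Times (fun c : Config T f g x₀ × Bool => (c.1.chainf c.2).G))) h)
  exact IsO.change h2

lemma X_O (hc : Coef f g C) (b : Bool) : IsO St.P St.s 0 (fun (x : St T f g x₀) => x.1.X b (2 * x.2)) :=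
  X_O_aux hc (fun x : St T f g x₀ => x.1) (fun _ => b) (fun x => 2 * x.2) (fun x => by have := x.2.2; omega) _
lemma X1_O (hc : Coef f g C) (b : Bool) : IsO St.P St.s 0 (fun (x : St T f g x₀) => x.1.X b (2 * x.2 + 1)) :=
  X_O_aux hc (fun x : St T f g x₀ => x.1) (fun _ => b) (fun x => 2 * x.2 + 1) (fun x => by have := x.2.2; omega) _

lemma Config.Xc_F (c : Config T f g x₀) (hc : Coef f g C) (n : ℕ) (hn : n ≤ c.N) : Measurable[c.grid.F n] (c.Xc n) := c.chainc.XF hc n hn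
lemma Config.Xc_M (c : Config T f g x₀) (hc : Coef f g C) (n : ℕ) (hn : n ≤ c.N) : AllMom c.Q (c.Xc n) := c.chainc.XM hc n hn
lemma Config.X_F (c : Config T f g x₀) (hc : Coef f g C) (b : Bool) (n : ℕ) (hn : n ≤ c.N) : Measurable[c.grid.F n] (c.X b (2 * n)) := by
  have h := (c.chainf b).XF hc (2 * n) (Nat.mul_le_mul_left 2 hn)
  have e : (c.chainf b).G.F (2 * n) = c.grid.F n := by
    show c.sig (c.past b (2 * n)) = c.sig (c.pastc n)
    rw [c.past_even]
  rw [e] at h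
  exact h
lemma Config.X_M (c : Config T f g x₀) (hc : Coef f g C) (b : Bool) (t : ℕ) (hn : t ≤ 2 * c.N) : AllMom c.Q (c.X b t) := (c.chainf b).XM hc t hn
/-- sigma-algebra at the middle of the coarse step -/
@[reducible] def Config.mid (c : Config T f g x₀) (b : Bool) (n : ℕ) : MeasurableSpace c.Q.Ω := c.sig (c.past b (2 * n + 1))
lemma Config.X1_F (c : Config T f g x₀) (hc : Coef f g C) (b : Bool) (n : Fin c.N) : Measurable[c.mid b n] (c.X b (2 * n + 1)) :=
  (c.chainf b).XF hc (2 * n + 1) (show 2 * (n : ℕ) + 1 ≤ 2 * c.N by have := n.2; omega)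
lemma Config.mid_ge (c : Config T f g x₀) (b : Bool) (n : ℕ) : c.grid.F n ≤ c.mid b n := by
  show c.sig (c.pastc n) ≤ c.sig (c.past b (2 * n + 1))
  rw [← c.past_even b]
  exact c.sig_mono (c.past_mono b (by omega))
lemma Config.noise0 (c : Config T f g x₀) (n : Fin c.N) (b : Bool) : Noise c.Q (c.grid.F n) (T / c.N / 2) (c.W n b) :=
  c.noise_W n b fun j => by simp [Config.grid, Config.pastc]
lemma Config.noisec (c : Config T f g x₀) (n : Fin c.N) : Noise c.Q (c.grid.F n) (T / c.N) (fun ω => c.W n false ω + c.W n true ω) :=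
  c.noise_Wc n fun b j => by simp [Config.grid, Config.pastc]
lemma Config.noise1 (c : Config T f g x₀) (n : Fin c.N) (b : Bool) : Noise c.Q (c.mid b n) (T / c.N / 2) (c.W n (!b)) :=
  c.noise_W n (!b) fun j => by simp [Config.past]
end famC
end AM

namespace AM
variable {d m : ℕ}
variable {T : ℝ} {f : (Fin d → ℝ) → Fin d → ℝ} {g : (Fin d → ℝ) → Fin d → Fin m → ℝ} {x₀ : Fin d → ℝ} {C : ℝ}

namespace St
abbrev xf (b : Bool) (x : St T f g x₀) (ω : x.P.Ω) : Fin d → ℝ := x.1.X b (2 * x.2) ω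
abbrev x1 (b : Bool) (x : St T f g x₀) (ω : x.P.Ω) : Fin d → ℝ := x.1.X b (2 * x.2 + 1) ω
abbrev xc (x : St T f g x₀) (ω : x.P.Ω) : Fin d → ℝ := x.1.Xc x.2 ω
abbrev w (b : Bool) (x : St T f g x₀) (ω : x.P.Ω) : Fin m → ℝ := x.1.W x.2 b ω
abbrev wc (x : St T f g x₀) (ω : x.P.Ω) : Fin m → ℝ := x.1.W x.2 false ω + x.1.W x.2 true ω
noncomputable abbrev dt (x : St T f g x₀) : ℝ := T / x.1.N
noncomputable abbrev A (b : Bool) (x : St T f g x₀) (ω : x.P.Ω) : Ten m := comp (x.dt / 2) (x.w b ω)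
noncomputable abbrev Ac (x : St T f g x₀) (ω : x.P.Ω) : Ten m := comp x.dt (x.wc ω)
noncomputable abbrev t (b : Bool) (x : St T f g x₀) (ω : x.P.Ω) : Ten m := tens (x.w b ω) (x.w (!b) ω)
/-- martingale part of the first half step -/
noncomputable abbrev u (b : Bool) (x : St T f g x₀) (ω : x.P.Ω) : Fin d → ℝ := mv (g (x.xf b ω)) (x.w b ω) + hT g (x.xf b ω) (x.A b ω)
noncomputable abbrev du (b : Bool) (x : St T f g x₀) (ω : x.P.Ω) : Fin d → ℝ := fderiv ℝ f (x.xf b ω) (x.u b ω)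
noncomputable abbrev xb (x : St T f g x₀) (ω : x.P.Ω) : Fin d → ℝ := (2⁻¹ : ℝ) • (x.xf false ω + x.xf true ω)

lemma dt_pos (x : St T f g x₀) : 0 < x.dt := x.1.dt_pos
lemma dt_eq (x : St T f g x₀) : x.dt = x.s ^ 2 := x.1.s_sq.symm

lemma wc_eq (b : Bool) (x : St T f g x₀) (ω : x.P.Ω) : x.wc ω = x.w b ω + x.w (!b) ω := by
  cases b
  · rfl
  · exact add_comm _ _

lemma Ac_eq (x : St T f g x₀) (ω : x.P.Ω) : x.Ac ω = x.A false ω + x.A true ω + (x.t false ω + x.t true ω) := by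
  have := comp_split (x.dt / 2) (x.w false ω) (x.w true ω)
  rw [mul_div_cancel₀ _ (two_ne_zero' ℝ)] at this
  exact this

lemma x1_eq (b : Bool) (x : St T f g x₀) (ω : x.P.Ω) : x.x1 b ω = x.xf b ω + (x.dt / 2) • f (x.xf b ω) + x.u b ω := by
  have := x.1.step1 b x.2 ω
  rw [milsteinStep_eq] at this
  rw [x1, this, add_assoc]

lemma x2_eq (b : Bool) (x : St T f g x₀) (ω : x.P.Ω) : x.1.X b (2 * (x.2 + 1)) ω = x.x1 b ω + (x.dt / 2) • f (x.x1 b ω)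
    + mv (g (x.x1 b ω)) (x.w (!b) ω) + hT g (x.x1 b ω) (x.A (!b) ω) := by
  have := x.1.step2 b x.2 ω
  rw [milsteinStep_eq] at this
  exact this

lemma xc_eq (x : St T f g x₀) (ω : x.P.Ω) : x.1.Xc (x.2 + 1) ω = x.xc ω + x.dt • f (x.xc ω)
    + mv (g (x.xc ω)) (x.wc ω) + hT g (x.xc ω) (x.Ac ω) := by
  have := x.1.stepc x.2 ω
  rw [milsteinStep_eq] at this
  exact this

lemma dt_O : IsO P s 2 (fun (x : St T f g x₀) _ => x.dt) :=
  IsO.const _ 1 zero_le_one fun x => by rw [Real.norm_of_nonneg x.dt_pos.le, dt_eq, one_mul]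

lemma dt_smul {a : ℕ} {Y : ∀ x : St T f g x₀, x.P.Ω → Fin d → ℝ} (hY : IsO P s a Y) : IsO P s (2 + a) (fun x ω => x.dt • Y x ω) :=
  IsO.of_mul_le s_pos dt_O hY (fun x => by
    have h := hY.meas x
    exact h.const_smul x.dt) 1 zero_le_one (fun x ω => by rw [norm_smul, one_mul])

lemma half_dt_smul {a : ℕ} {Y : ∀ x : St T f g x₀, x.P.Ω → Fin d → ℝ} (hY : IsO P s a Y) : IsO P s (2 + a) (fun x ω => (x.dt / 2) • Y x ω) := by
  have h := (dt_smul hY).smul (2⁻¹ : ℝ)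
  have e : (fun (x : St T f g x₀) (ω : x.P.Ω) => (x.dt / 2) • Y x ω) = fun x ω => (2⁻¹ : ℝ) • (x.dt • Y x ω) := by
    funext x ω; module
  rw [e]; exact h

lemma wk {a b : ℕ} {E : Type*} [NormedAddCommGroup E] [MeasurableSpace E] {Y : ∀ x : St T f g x₀, x.P.Ω → E} (hY : IsO P s b Y) (h : a ≤ b) : IsO P s a Y :=
  IsO.weaken s_pos (Real.sqrt T) s_le h hY

lemma A_O (b : Bool) : IsO P s 2 (A b : ∀ x : St T f g x₀, x.P.Ω → Ten m) :=
  IsO.comp' s_pos (W_O b) (fun x => by have := x.dt_pos; positivity) fun x => by rw [← dt_eq]; linarith [x.dt_pos]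
lemma Ac_O : IsO P s 2 (Ac : ∀ x : St T f g x₀, x.P.Ω → Ten m) :=
  IsO.comp' s_pos Wc_O (fun x => x.dt_pos.le) fun x => by rw [← dt_eq]
lemma t_O (b : Bool) : IsO P s 2 (t b : ∀ x : St T f g x₀, x.P.Ω → Ten m) :=
  IsO.of_mul_le s_pos (W_O b) (W_O (!b)) (fun x => tens_meas ((W_O b).meas x) ((W_O (!b)).meas x)) 1 zero_le_one
    fun x ω => by rw [one_mul]; exact tens_norm _ _

lemma d1_O (hc : Coef f g C) (b : Bool) : IsO P s 1 (fun (x : St T f g x₀) ω => x.x1 b ω - x.xf b ω) := by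
  have e : (fun (x : St T f g x₀) (ω : x.P.Ω) => x.x1 b ω - x.xf b ω) = fun x ω => (x.dt / 2) • f (x.xf b ω) + (mv (g (x.xf b ω)) (x.w b ω) + hT g (x.xf b ω) (x.A b ω)) := by
    funext x ω; rw [x1_eq]; abel
  rw [e]
  exact (wk (half_dt_smul (IsO.f' hc (X_O hc b))) (by norm_num)).add
    ((IsO.mv' s_pos hc (X_O hc b) (W_O b)).add (wk (IsO.hT' s_pos hc (X_O hc b) (A_O b)) (by norm_num)))

lemma d2_O (hc : Coef f g C) (b : Bool) : IsO P s 2 (fun (x : St T f g x₀) ω => x.x1 b ω - x.xf b ω - mv (g (x.xf b ω)) (x.w b ω)) := by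
  have e : (fun (x : St T f g x₀) (ω : x.P.Ω) => x.x1 b ω - x.xf b ω - mv (g (x.xf b ω)) (x.w b ω)) = fun x ω => (x.dt / 2) • f (x.xf b ω) + hT g (x.xf b ω) (x.A b ω) := by
    funext x ω; rw [x1_eq]; simp only [u]; abel
  rw [e]
  exact (half_dt_smul (IsO.f' hc (X_O hc b))).add (IsO.hT' s_pos hc (X_O hc b) (A_O b))

lemma d3_O (hc : Coef f g C) (b : Bool) : IsO P s 2 (fun (x : St T f g x₀) ω => x.x1 b ω - x.xf b ω - x.u b ω) := by
  have e : (fun (x : St T f g x₀) (ω : x.P.Ω) => x.x1 b ω - x.xf b ω - x.u b ω) = fun x ω => (x.dt / 2) • f (x.xf b ω) := by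
    funext x ω; rw [x1_eq]; abel
  rw [e]
  exact half_dt_smul (IsO.f' hc (X_O hc b))

lemma xf_F (hc : Coef f g C) (b : Bool) (x : St T f g x₀) : Measurable[x.1.grid.F x.2] (x.xf b) := x.1.X_F hc b x.2 x.2.2.le
lemma xc_F (hc : Coef f g C) (x : St T f g x₀) : Measurable[x.1.grid.F x.2] x.xc := x.1.Xc_F hc x.2 x.2.2.le
lemma F_le (x : St T f g x₀) : x.1.grid.F x.2 ≤ x.P.ms := x.1.grid.F_le _

/- martingale-type facts -/
lemma mz0 (hc : Coef f g C) (b : Bool) (x : St T f g x₀) (i : Fin d) : MZ x.P (x.1.grid.F x.2) (fun ω => mv (g (x.xf b ω)) (x.w b ω) i) :=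
  (x.1.noise0 x.2 b).mz_mv hc (x.xf_F hc b) ((X_O hc b).allMom x) i
lemma mz0h (hc : Coef f g C) (b : Bool) (x : St T f g x₀) (i : Fin d) : MZ x.P (x.1.grid.F x.2) (fun ω => hT g (x.xf b ω) (x.A b ω) i) :=
  (x.1.noise0 x.2 b).mz_hT hc (x.xf_F hc b) ((X_O hc b).allMom x) i
lemma mz1 (hc : Coef f g C) (b : Bool) (x : St T f g x₀) (i : Fin d) : MZ x.P (x.1.grid.F x.2) (fun ω => mv (g (x.x1 b ω)) (x.w (!b) ω) i) :=
  ((x.1.noise1 x.2 b).mz_mv hc (x.1.X1_F hc b x.2) ((X1_O hc b).allMom x) i).mono (x.1.mid_ge b _)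
lemma mz1h (hc : Coef f g C) (b : Bool) (x : St T f g x₀) (i : Fin d) : MZ x.P (x.1.grid.F x.2) (fun ω => hT g (x.x1 b ω) (x.A (!b) ω) i) :=
  ((x.1.noise1 x.2 b).mz_hT hc (x.1.X1_F hc b x.2) ((X1_O hc b).allMom x) i).mono (x.1.mid_ge b _)
lemma mzc (hc : Coef f g C) (x : St T f g x₀) (i : Fin d) : MZ x.P (x.1.grid.F x.2) (fun ω => mv (g (x.xc ω)) (x.wc ω) i) :=
  (x.1.noisec x.2).mz_mv hc (x.xc_F hc) ((Xc_O hc).allMom x) i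
lemma mzch (hc : Coef f g C) (x : St T f g x₀) (i : Fin d) : MZ x.P (x.1.grid.F x.2) (fun ω => hT g (x.xc ω) (x.Ac ω) i) :=
  (x.1.noisec x.2).mz_hT hc (x.xc_F hc) ((Xc_O hc).allMom x) i
lemma mzd (hc : Coef f g C) (b : Bool) (x : St T f g x₀) (i : Fin d) : MZ x.P (x.1.grid.F x.2) (fun ω => x.du b ω i) :=
  Noise.mz_fd x.F_le hc (x.xf_F hc b) (fun l => (x.mz0 hc b l).add (x.mz0h hc b l)) i
lemma du_meas (hc : Coef f g C) (b : Bool) (x : St T f g x₀) : Measurable (x.du b) :=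
  (AllMom.pi fun i => (x.mzd hc b i).1).meas

/-- the generic relative bound for `mv (g y) wc - mv (g xc) wc` -/
lemma rel_mv (hc : Coef f g C) (a : ℕ) {y : ∀ x : St T f g x₀, x.P.Ω → Fin d → ℝ} (hyF : ∀ x, Measurable[x.1.grid.F x.2] (y x)) (hy : ∀ x, AllMom x.P (y x)) :
    Rel P s (fun x ω => y x ω - x.xc ω) a 1 (fun (x : St T f g x₀) ω => mv (g (y x ω)) (x.wc ω) - mv (g (x.xc ω)) (x.wc ω)) := by
  refine Rel.of_prod (ξ := fun x ω => ‖x.wc ω‖) s_pos (fun x => x.1.grid.F x.2) (fun x => MeasurableSpace.comap x.wc inferInstance) F_le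
    (fun x => (x.1.noisec x.2).comap_le) (fun x => (x.1.noisec x.2).ind) (fun x => (hyF x).sub (x.xc_F hc)) (fun x => (hy x).sub ((Xc_O hc).allMom x))
    (fun x => ?_) Wc_O.norm (fun x => ?_) C hc.hC fun x ω => ?_
  · have h1 : Measurable[MeasurableSpace.comap x.wc inferInstance] x.wc := comap_measurable _
    exact measurable_norm.comp h1
  · exact (hc.mv_meas (hy x).meas (Wc_O.meas x)).sub (hc.mv_meas ((Xc_O hc).meas x) (Wc_O.meas x))
  · refine (hc.g_lip _ _ _).trans ?_
    rw [norm_norm]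
    have := hc.hC
    have := x.s_pos
    gcongr
    have : 0 ≤ x.s ^ a := by positivity
    linarith

lemma rel_f (hc : Coef f g C) (a : ℕ) {y : ∀ x : St T f g x₀, x.P.Ω → Fin d → ℝ} (hyF : ∀ x, Measurable[x.1.grid.F x.2] (y x)) (hy : ∀ x, AllMom x.P (y x)) :
    Rel P s (fun x ω => y x ω - x.xc ω) a 2 (fun (x : St T f g x₀) ω => x.dt • (f (y x ω) - f (x.xc ω))) := by
  refine Rel.of_prod (ξ := fun x ω => x.dt) s_pos (fun x => x.1.grid.F x.2) (fun x => ⊥) F_le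
    (fun x => bot_le) (fun x => indep_bot_left _) (fun x => (hyF x).sub (x.xc_F hc)) (fun x => (hy x).sub ((Xc_O hc).allMom x))
    (fun x => measurable_const) dt_O (fun x => ?_) C hc.hC fun x ω => ?_
  · have h := (hc.f_meas.comp (hy x).meas).sub (hc.f_meas.comp ((Xc_O hc).meas x))
    exact h.const_smul x.dt
  · rw [norm_smul, mul_comm, ← mul_assoc]
    refine mul_le_mul_of_nonneg_right ((hc.f_lip _ _).trans ?_) (norm_nonneg _)
    have := hc.hC
    have := x.s_pos
    have : 0 ≤ x.s ^ a := by positivity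
    gcongr
    linarith

noncomputable def D2 (b : Bool) (x : St T f g x₀) (ω : x.P.Ω) : Fin d → ℝ :=
  (x.dt / 2) • (f (x.xf b ω) + f (x.x1 b ω)) - x.dt • f (x.xc ω)
noncomputable def M2 (b : Bool) (x : St T f g x₀) (ω : x.P.Ω) : Fin d → ℝ :=
  mv (g (x.xf b ω)) (x.w b ω) + hT g (x.xf b ω) (x.A b ω) + (mv (g (x.x1 b ω)) (x.w (!b) ω) + hT g (x.x1 b ω) (x.A (!b) ω))
    - (mv (g (x.xc ω)) (x.wc ω) + hT g (x.xc ω) (x.Ac ω))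

lemma step2_eq (b : Bool) (x : St T f g x₀) (ω : x.P.Ω) :
    x.1.X b (2 * (x.2 + 1)) ω - x.1.Xc (x.2 + 1) ω = (xf b x ω - xc x ω) + D2 b x ω + M2 b x ω := by
  rw [x2_eq b x, xc_eq x]
  simp only [D2, M2]
  have h1 := x1_eq b x ω
  generalize f (x1 b x ω) = y1
  generalize mv (g (x1 b x ω)) (x.w (!b) ω) = y2
  generalize hT g (x1 b x ω) (x.A (!b) ω) = y3
  rw [h1]
  module

lemma start2 (b : Bool) (c : Config T f g x₀) (ω : c.Q.Ω) : ‖c.X b (2 * 0) ω - c.Xc 0 ω‖ ≤ 0 * c.s ^ 1 := by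
  rw [Nat.mul_zero, c.X0, c.Xc0]; simp

theorem stage2 (hc : Coef f g C) (b : Bool) : IsO P s 1 (fun (x : St T f g x₀) ω => x.xf b ω - x.xc ω) := by
  have h := propagation (fun c : Config T f g x₀ => c.grid) 1 (fun c n ω => c.X b (2 * n) ω - c.Xc n ω) (D2 b) (M2 b)
    (fun c n hn => (c.X_M hc b (2 * n) (Nat.mul_le_mul_left 2 hn)).sub (c.Xc_M hc n hn))
    (fun c n hn => (c.X_F hc b n hn).sub (c.Xc_F hc n hn)) 0 le_rfl (start2 b) (step2_eq b) ?_ ?_ ?_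
  · exact (Bd.comp (fun x : St T f g x₀ => (⟨x.1, x.2.castSucc⟩ : Times (fun c : Config T f g x₀ => c.grid))) h)
  · have e : (D2 b : ∀ x : St T f g x₀, x.P.Ω → Fin d → ℝ) = fun x ω => x.dt • (f (x.xf b ω) - f (x.xc ω)) + (x.dt / 2) • (f (x.x1 b ω) - f (x.xf b ω)) := by
      funext x ω; simp only [D2]; module
    rw [e]
    refine Bd.add (rel_f hc 1 (xf_F hc b) (fun x => (X_O hc b).allMom x)) ?_
    refine IsO.rel s_pos _ 1 2 (half_dt_smul (a := 1) ?_) rfl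
    exact (d1_O hc b).of_le' (fun x => (hc.f_meas.comp ((X1_O hc b).meas x)).sub (hc.f_meas.comp ((X_O hc b).meas x))) C hc.hC fun x ω => hc.f_lip _ _
  · have e : (M2 b : ∀ x : St T f g x₀, x.P.Ω → Fin d → ℝ) = fun x ω => (mv (g (x.xf b ω)) (x.wc ω) - mv (g (x.xc ω)) (x.wc ω)) +
        ((mv (g (x.x1 b ω)) (x.w (!b) ω) - mv (g (x.xf b ω)) (x.w (!b) ω)) + (hT g (x.xf b ω) (x.A b ω) + hT g (x.x1 b ω) (x.A (!b) ω) - hT g (x.xc ω) (x.Ac ω))) := by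
      funext x ω; simp only [M2]
      have : mv (g (x.xf b ω)) (x.wc ω) = mv (g (x.xf b ω)) (x.w b ω) + mv (g (x.xf b ω)) (x.w (!b) ω) := by rw [x.wc_eq b ω, mv_add_right]
      rw [this]; abel
    rw [e]
    refine Bd.add (rel_mv hc 1 (xf_F hc b) (fun x => (X_O hc b).allMom x)) ?_
    refine IsO.rel s_pos _ 1 1 (c := 2) (IsO.add ?_ (IsO.sub (IsO.add ?_ ?_) ?_)) rfl
    · exact IsO.mv_sub s_pos hc (X1_O hc b).meas (X_O hc b).meas (d1_O hc b) (W_O (!b))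
    · exact IsO.hT' s_pos hc (X_O hc b) (A_O b)
    · exact IsO.hT' s_pos hc (X1_O hc b) (A_O (!b))
    · exact IsO.hT' s_pos hc (Xc_O hc) Ac_O
  · intro x i
    exact (((mz0 hc b x i).add (mz0h hc b x i)).add ((mz1 hc b x i).add (mz1h hc b x i))).sub ((mzc hc x i).add (mzch hc x i))
end St
end AM

namespace AM
variable {d m : ℕ}
variable {T : ℝ} {f : (Fin d → ℝ) → Fin d → ℝ} {g : (Fin d → ℝ) → Fin d → Fin m → ℝ} {x₀ : Fin d → ℝ} {C : ℝ}

namespace St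
/-- martingale part of path `b` -/
noncomputable def Mb (b : Bool) (x : St T f g x₀) (ω : x.P.Ω) : Fin d → ℝ :=
  x.u b ω + (mv (g (x.x1 b ω)) (x.w (!b) ω) + hT g (x.x1 b ω) (x.A (!b) ω)) + (x.dt / 2) • x.du b ω
noncomputable def Db (b : Bool) (x : St T f g x₀) (ω : x.P.Ω) : Fin d → ℝ :=
  (x.dt / 2) • (f (x.xf b ω) + f (x.x1 b ω)) - (x.dt / 2) • x.du b ω
noncomputable def M3 (x : St T f g x₀) (ω : x.P.Ω) : Fin d → ℝ :=
  (2⁻¹ : ℝ) • (x.Mb false ω + x.Mb true ω) - (mv (g (x.xc ω)) (x.wc ω) + hT g (x.xc ω) (x.Ac ω))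
noncomputable def D3 (x : St T f g x₀) (ω : x.P.Ω) : Fin d → ℝ :=
  (2⁻¹ : ℝ) • (x.Db false ω + x.Db true ω) - x.dt • f (x.xc ω)

lemma x2_eq' (b : Bool) (x : St T f g x₀) (ω : x.P.Ω) : x.1.X b (2 * (x.2 + 1)) ω = x.xf b ω + x.Db b ω + x.Mb b ω := by
  rw [x2_eq b x]
  simp only [Db, Mb]
  have h1 := x1_eq b x ω
  generalize f (x1 b x ω) = y1
  generalize mv (g (x1 b x ω)) (x.w (!b) ω) = y2
  generalize hT g (x1 b x ω) (x.A (!b) ω) = y3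
  rw [h1]
  module

lemma step3_eq (x : St T f g x₀) (ω : x.P.Ω) :
    (2⁻¹ : ℝ) • (x.1.X false (2 * (x.2 + 1)) ω + x.1.X true (2 * (x.2 + 1)) ω) - x.1.Xc (x.2 + 1) ω = (xb x ω - xc x ω) + D3 x ω + M3 x ω := by
  rw [x2_eq' false x, x2_eq' true x, xc_eq x]
  simp only [D3, M3, xb]
  module

lemma mz3b (hc : Coef f g C) (b : Bool) (x : St T f g x₀) (i : Fin d) : MZ x.P (x.1.grid.F x.2) (fun ω => x.Mb b ω i) :=
  (((mz0 hc b x i).add (mz0h hc b x i)).add ((mz1 hc b x i).add (mz1h hc b x i))).add ((mzd hc b x i).const_mul (x.dt / 2))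
lemma mz3 (hc : Coef f g C) (x : St T f g x₀) (i : Fin d) : MZ x.P (x.1.grid.F x.2) (fun ω => x.M3 ω i) :=
  ((((mz3b hc false x i).add (mz3b hc true x i)).const_mul 2⁻¹)).sub ((mzc hc x i).add (mzch hc x i))

/-- the remainder terms in the martingale part -/
noncomputable def Rb (b : Bool) (x : St T f g x₀) (ω : x.P.Ω) : Fin d → ℝ :=
  (mv (g (x.x1 b ω)) (x.w (!b) ω) - mv (g (x.xf b ω)) (x.w (!b) ω) - (2 : ℝ) • hT g (x.xf b ω) (x.t b ω))
  + (hT g (x.xf b ω) (x.A b ω) - hT g (x.xc ω) (x.A b ω))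
  + (hT g (x.x1 b ω) (x.A (!b) ω) - hT g (x.xc ω) (x.A (!b) ω))
  + (2 : ℝ) • (hT g (x.xf b ω) (x.t b ω) - hT g (x.xc ω) (x.t b ω))
  + (x.dt / 2) • x.du b ω

lemma M3_eq (x : St T f g x₀) (ω : x.P.Ω) : x.M3 ω = (mv (g (x.xb ω)) (x.wc ω) - mv (g (x.xc ω)) (x.wc ω))
    + ((2⁻¹ : ℝ) • (mv (g (x.xf false ω)) (x.wc ω) + mv (g (x.xf true ω)) (x.wc ω) - (2 : ℝ) • mv (g (x.xb ω)) (x.wc ω))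
      + (2⁻¹ : ℝ) • (x.Rb false ω + x.Rb true ω)) := by
  have h1 : ∀ b, mv (g (x.xf b ω)) (x.wc ω) = mv (g (x.xf b ω)) (x.w b ω) + mv (g (x.xf b ω)) (x.w (!b) ω) := fun b => by
    rw [x.wc_eq b ω, mv_add_right]
  simp only [M3, Mb, Rb, u]
  rw [h1 false, h1 true, Ac_eq, hT_add, hT_add, hT_add]
  simp only [Bool.not_false, Bool.not_true]
  module

lemma D3_eq (x : St T f g x₀) (ω : x.P.Ω) : x.D3 ω = x.dt • (f (x.xb ω) - f (x.xc ω))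
    + ((x.dt / 2) • (f (x.xf false ω) + f (x.xf true ω) - (2 : ℝ) • f (x.xb ω))
      + (2⁻¹ : ℝ) • ((x.dt / 2) • (f (x.x1 false ω) - f (x.xf false ω) - x.du false ω) + (x.dt / 2) • (f (x.x1 true ω) - f (x.xf true ω) - x.du true ω))) := by
  simp only [D3, Db]
  module

lemma X1c_O (hc : Coef f g C) (b : Bool) : IsO P s 1 (fun (x : St T f g x₀) ω => x.x1 b ω - x.xc ω) := by
  have e : (fun (x : St T f g x₀) (ω : x.P.Ω) => x.x1 b ω - x.xc ω) = fun x ω => (x.x1 b ω - x.xf b ω) + (x.xf b ω - x.xc ω) := by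
    funext x ω; abel
  rw [e]; exact (d1_O hc b).add (stage2 hc b)
lemma anti_O (hc : Coef f g C) : IsO P s 1 (fun (x : St T f g x₀) ω => x.xf false ω - x.xf true ω) := by
  have e : (fun (x : St T f g x₀) (ω : x.P.Ω) => x.xf false ω - x.xf true ω) = fun x ω => (x.xf false ω - x.xc ω) - (x.xf true ω - x.xc ω) := by
    funext x ω; abel
  rw [e]; exact (stage2 hc false).sub (stage2 hc true)

lemma sq_O {a : ℕ} {Y : ∀ x : St T f g x₀, x.P.Ω → Fin d → ℝ} (hY : IsO P s a Y) : IsO P s (a + a) (fun x ω => ‖Y x ω‖ ^ 2) := by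
  have e : (fun (x : St T f g x₀) (ω : x.P.Ω) => ‖Y x ω‖ ^ 2) = fun x ω => ‖Y x ω‖ * ‖Y x ω‖ := by
    funext x ω; ring
  rw [e]; exact hY.norm.mul s_pos hY.norm

lemma du_O (hc : Coef f g C) (b : Bool) : IsO P s 1 (du b : ∀ x : St T f g x₀, x.P.Ω → Fin d → ℝ) := by
  have hu : IsO P s 1 (u b : ∀ x : St T f g x₀, x.P.Ω → Fin d → ℝ) :=
    (IsO.mv' s_pos hc (X_O hc b) (W_O b)).add (wk (IsO.hT' s_pos hc (X_O hc b) (A_O b)) (by norm_num))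
  refine hu.of_le' (du_meas hc b) C hc.hC fun x ω => ?_
  exact (ContinuousLinearMap.le_opNorm _ _).trans (mul_le_mul_of_nonneg_right (hc.fd_bd _) (norm_nonneg _))

lemma Rb_O (hc : Coef f g C) (b : Bool) : IsO P s 3 (Rb b : ∀ x : St T f g x₀, x.P.Ω → Fin d → ℝ) := by
  refine IsO.add (IsO.add (IsO.add (IsO.add ?_ ?_) ?_) (IsO.smul 2 ?_)) ?_
  · have h1 : IsO P s 2 (fun (x : St T f g x₀) ω => ‖x.x1 b ω - x.xf b ω‖ ^ 2 + ‖x.x1 b ω - x.xf b ω - mv (g (x.xf b ω)) (x.w b ω)‖) :=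
      (sq_O (d1_O hc b)).add (d2_O hc b).norm
    refine IsO.of_mul_le s_pos h1 (W_O (!b)) (fun x => ?_) C hc.hC fun x ω => ?_
    · exact ((hc.mv_meas ((X1_O hc b).meas x) ((W_O (!b)).meas x)).sub (hc.mv_meas ((X_O hc b).meas x) ((W_O (!b)).meas x))).sub
        ((hc.hT_meas ((X_O hc b).meas x) ((t_O b).meas x)).const_smul (2 : ℝ))
    · rw [Real.norm_of_nonneg (by positivity : 0 ≤ ‖x.x1 b ω - x.xf b ω‖ ^ 2 + ‖x.x1 b ω - x.xf b ω - mv (g (x.xf b ω)) (x.w b ω)‖)]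
      exact hc.g_T _ _ _ _
  · exact IsO.hT_sub s_pos hc (X_O hc b) (Xc_O hc) (stage2 hc b) (A_O b)
  · exact IsO.hT_sub s_pos hc (X1_O hc b) (Xc_O hc) (X1c_O hc b) (A_O (!b))
  · exact IsO.hT_sub s_pos hc (X_O hc b) (Xc_O hc) (stage2 hc b) (t_O b)
  · exact half_dt_smul (du_O hc b)

lemma xb_O (hc : Coef f g C) : IsO P s 0 (xb : ∀ x : St T f g x₀, x.P.Ω → Fin d → ℝ) :=
  ((X_O hc false).add (X_O hc true)).smul 2⁻¹
lemma xb_F (hc : Coef f g C) (x : St T f g x₀) : Measurable[x.1.grid.F x.2] x.xb :=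
  ((xf_F hc false x).add (xf_F hc true x)).const_smul (2⁻¹ : ℝ)

lemma gS_O (hc : Coef f g C) : IsO P s 3 (fun (x : St T f g x₀) ω =>
    mv (g (x.xf false ω)) (x.wc ω) + mv (g (x.xf true ω)) (x.wc ω) - (2 : ℝ) • mv (g (x.xb ω)) (x.wc ω)) := by
  refine IsO.of_mul_le s_pos (sq_O (anti_O hc)) Wc_O (fun x => ?_) C hc.hC fun x ω => ?_
  · exact ((hc.mv_meas ((X_O hc false).meas x) (Wc_O.meas x)).add (hc.mv_meas ((X_O hc true).meas x) (Wc_O.meas x))).sub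
      ((hc.mv_meas ((xb_O hc).meas x) (Wc_O.meas x)).const_smul (2 : ℝ))
  · rw [norm_pow, norm_norm]
    exact hc.g_S _ _ _
lemma fS_O (hc : Coef f g C) : IsO P s 2 (fun (x : St T f g x₀) ω => f (x.xf false ω) + f (x.xf true ω) - (2 : ℝ) • f (x.xb ω)) := by
  refine (sq_O (anti_O hc)).of_le' (fun x => ?_) C hc.hC fun x ω => ?_
  · exact ((hc.f_meas.comp ((X_O hc false).meas x)).add (hc.f_meas.comp ((X_O hc true).meas x))).sub
      ((hc.f_meas.comp ((xb_O hc).meas x)).const_smul (2 : ℝ))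
  · rw [norm_pow, norm_norm]
    exact hc.f_S _ _
lemma fT_O (hc : Coef f g C) (b : Bool) : IsO P s 2 (fun (x : St T f g x₀) ω => f (x.x1 b ω) - f (x.xf b ω) - x.du b ω) := by
  have h1 : IsO P s 2 (fun (x : St T f g x₀) ω => ‖x.x1 b ω - x.xf b ω‖ ^ 2 + ‖x.x1 b ω - x.xf b ω - x.u b ω‖) :=
      (sq_O (d1_O hc b)).add (d3_O hc b).norm
  refine h1.of_le' (fun x => ?_) C hc.hC fun x ω => ?_
  · exact ((hc.f_meas.comp ((X1_O hc b).meas x)).sub (hc.f_meas.comp ((X_O hc b).meas x))).sub (du_meas hc b x)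
  · rw [Real.norm_of_nonneg (by positivity : 0 ≤ ‖x.x1 b ω - x.xf b ω‖ ^ 2 + ‖x.x1 b ω - x.xf b ω - x.u b ω‖)]
    exact hc.f_T _ _ _

lemma D3_rel (hc : Coef f g C) : Rel P s (fun (x : St T f g x₀) ω => x.xb ω - x.xc ω) 2 2 (D3 : ∀ x : St T f g x₀, x.P.Ω → Fin d → ℝ) := by
  rw [show (D3 : ∀ x : St T f g x₀, x.P.Ω → Fin d → ℝ) = _ from funext fun x => funext fun ω => D3_eq x ω]
  refine Bd.add (rel_f hc 2 (xb_F hc) (fun x => (xb_O hc).allMom x)) ?_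
  refine IsO.rel s_pos _ 2 2 (c := 4) (IsO.add ?_ (IsO.smul _ (IsO.add ?_ ?_))) rfl
  · exact half_dt_smul (fS_O hc)
  · exact half_dt_smul (fT_O hc false)
  · exact half_dt_smul (fT_O hc true)

lemma M3_rel (hc : Coef f g C) : Rel P s (fun (x : St T f g x₀) ω => x.xb ω - x.xc ω) 2 1 (M3 : ∀ x : St T f g x₀, x.P.Ω → Fin d → ℝ) := by
  rw [show (M3 : ∀ x : St T f g x₀, x.P.Ω → Fin d → ℝ) = _ from funext fun x => funext fun ω => M3_eq x ω]
  refine Bd.add (rel_mv hc 2 (xb_F hc) (fun x => (xb_O hc).allMom x)) ?_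
  exact IsO.rel s_pos _ 2 1 (c := 3) (IsO.add (IsO.smul _ (gS_O hc)) (IsO.smul _ (IsO.add (Rb_O hc false) (Rb_O hc true)))) rfl

lemma start3 (c : Config T f g x₀) (ω : c.Q.Ω) : ‖(2⁻¹ : ℝ) • (c.X false (2 * 0) ω + c.X true (2 * 0) ω) - c.Xc 0 ω‖ ≤ 0 * c.s ^ 2 := by
  rw [Nat.mul_zero, c.X0, c.X0, c.Xc0, show (2⁻¹ : ℝ) • (x₀ + x₀) - x₀ = 0 by module]; simp

lemma e_M (hc : Coef f g C) (c : Config T f g x₀) (n : ℕ) (hn : n ≤ c.N) :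
    AllMom c.Q (fun ω => (2⁻¹ : ℝ) • (c.X false (2 * n) ω + c.X true (2 * n) ω) - c.Xc n ω) := by
  have h1 := (c.X_M hc false (2 * n) (Nat.mul_le_mul_left 2 hn)).add (c.X_M hc true (2 * n) (Nat.mul_le_mul_left 2 hn))
  have h2 : AllMom c.Q (fun ω => (2⁻¹ : ℝ) • (c.X false (2 * n) ω + c.X true (2 * n) ω)) := Bd.smul (2⁻¹ : ℝ) h1
  exact h2.sub (c.Xc_M hc n hn)

theorem stage3 (hc : Coef f g C) : IsO P s 2 (fun (x : St T f g x₀) ω => x.xb ω - x.xc ω) := by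
  have h := propagation (fun c : Config T f g x₀ => c.grid) 2 (fun c n ω => (2⁻¹ : ℝ) • (c.X false (2 * n) ω + c.X true (2 * n) ω) - c.Xc n ω) D3 M3
    (fun c n hn => e_M hc c n hn)
    (fun c n hn => (((c.X_F hc false n hn).add (c.X_F hc true n hn)).const_smul (2⁻¹ : ℝ)).sub (c.Xc_F hc n hn)) 0 le_rfl start3 step3_eq
    (D3_rel hc) (M3_rel hc) (mz3 hc)
  exact (Bd.comp (fun x : St T f g x₀ => (⟨x.1, x.2.castSucc⟩ : Times (fun c : Config T f g x₀ => c.grid))) h)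

lemma of_rel {E : Type*} [NormedAddCommGroup E] [MeasurableSpace E] {Y : ∀ x : St T f g x₀, x.P.Ω → E} {e : ∀ x : St T f g x₀, x.P.Ω → Fin d → ℝ} {a b k : ℕ}
    (he : IsO P s a e) (hY : Rel P s e a b Y) (hk : k = a + b) : IsO P s k Y := by
  subst hk
  refine Bd.mono_B hY fun q => ?_
  obtain ⟨K, hK, h⟩ := he.2 q
  refine ⟨K + 1, by positivity, fun x => ?_⟩
  have h1 := (h x).2
  have := x.s_pos
  calc (x.s ^ b) ^ q * (∫ ω, ‖e x ω‖ ^ q ∂x.P.μ + (x.s ^ a) ^ q) ≤ (x.s ^ b) ^ q * (K * (x.s ^ a) ^ q + (x.s ^ a) ^ q) := by gcongr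
    _ = (K + 1) * (x.s ^ (a + b)) ^ q := by rw [pow_add, mul_pow]; ring

lemma D3_O (hc : Coef f g C) : IsO P s 4 (D3 : ∀ x : St T f g x₀, x.P.Ω → Fin d → ℝ) := of_rel (stage3 hc) (D3_rel hc) rfl
lemma M3_O (hc : Coef f g C) : IsO P s 3 (M3 : ∀ x : St T f g x₀, x.P.Ω → Fin d → ℝ) := of_rel (stage3 hc) (M3_rel hc) rfl
end St
end AM

namespace AM
variable {d m : ℕ}
variable {T : ℝ} {f : (Fin d → ℝ) → Fin d → ℝ} {g : (Fin d → ℝ) → Fin d → Fin m → ℝ} {x₀ : Fin d → ℝ} {C : ℝ}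

lemma fd_meas_gen (hc : Coef f g C) {Ω : Type} (𝓑 : MeasurableSpace Ω) {x u : Ω → Fin d → ℝ} (hx : Measurable x) (hu : Measurable u) :
    Measurable (fun ω => fderiv ℝ f (x ω) (u ω)) := by
  refine measurable_pi_lambda _ fun i => ?_
  have e : (fun ω => fderiv ℝ f (x ω) (u ω) i) = fun ω => ∑ l, fderiv ℝ f (x ω) (Pi.single l 1) i * u ω l := by
    ext ω
    have : u ω = ∑ l, u ω l • (Pi.single l 1 : Fin d → ℝ) := by ext l; simp [Finset.sum_apply, Pi.single_apply]
    conv_lhs => rw [this, map_sum]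
    simp [mul_comm]
  rw [e]
  refine Finset.measurable_sum _ fun l _ => ?_
  exact ((hc.fd_meas l i).comp hx).mul ((measurable_pi_apply l).comp hu)

namespace Config
variable (c : Config T f g x₀)

lemma mid_le (b : Bool) (n : ℕ) : c.mid b n ≤ c.grid.F (n + 1) := by
  show c.sig (c.past b (2 * n + 1)) ≤ c.sig (c.pastc (n + 1))
  rw [← c.past_even b]
  exact c.sig_mono (c.past_mono b (by omega))

/-- the error of the averaged path -/
noncomputable def err (n : ℕ) (ω : c.Q.Ω) : Fin d → ℝ := (2⁻¹ : ℝ) • (c.X false (2 * n) ω + c.X true (2 * n) ω) - c.Xc n ω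
noncomputable def Dt (j : ℕ) (ω : c.Q.Ω) : Fin d → ℝ := if h : j < c.N then St.D3 (⟨c, ⟨j, h⟩⟩ : St T f g x₀) ω else 0
noncomputable def Mt (j : ℕ) (ω : c.Q.Ω) : Fin d → ℝ := if h : j < c.N then St.M3 (⟨c, ⟨j, h⟩⟩ : St T f g x₀) ω else 0
noncomputable def S (n : ℕ) (ω : c.Q.Ω) : Fin d → ℝ := ∑ j ∈ Finset.range n, c.Mt j ω

lemma Dt_of (j : Fin c.N) (ω : c.Q.Ω) : c.Dt j ω = St.D3 (⟨c, j⟩ : St T f g x₀) ω := by simp [Dt]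
lemma Mt_of (j : Fin c.N) (ω : c.Q.Ω) : c.Mt j ω = St.M3 (⟨c, j⟩ : St T f g x₀) ω := by simp [Mt]

lemma err_zero (ω : c.Q.Ω) : c.err 0 ω = 0 := by
  rw [err, Nat.mul_zero, c.X0, c.X0, c.Xc0]; module

lemma err_succ (j : ℕ) (hj : j < c.N) (ω : c.Q.Ω) : c.err (j + 1) ω = c.err j ω + c.Dt j ω + c.Mt j ω := by
  rw [c.Dt_of ⟨j, hj⟩, c.Mt_of ⟨j, hj⟩]
  exact St.step3_eq (⟨c, ⟨j, hj⟩⟩ : St T f g x₀) ω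

lemma err_eq (n : ℕ) (hn : n ≤ c.N) (ω : c.Q.Ω) : c.err n ω = ∑ j ∈ Finset.range n, c.Dt j ω + c.S n ω := by
  induction n with
  | zero => rw [err_zero]; simp [S]
  | succ n ih =>
    rw [c.err_succ n (by omega), ih (by omega), S, S, Finset.sum_range_succ, Finset.sum_range_succ]
    abel

lemma err_F (hc : Coef f g C) (n : ℕ) (hn : n ≤ c.N) : Measurable[c.grid.F n] (c.err n) :=
  (((c.X_F hc false n hn).add (c.X_F hc true n hn)).const_smul (2⁻¹ : ℝ)).sub (c.Xc_F hc n hn)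

lemma Db_F (hc : Coef f g C) (b : Bool) (j : Fin c.N) : Measurable[c.grid.F (j + 1)] (St.Db b (⟨c, j⟩ : St T f g x₀)) := by
  have h0 : Measurable[c.grid.F (j + 1)] (St.xf b (⟨c, j⟩ : St T f g x₀)) :=
    (c.X_F hc b j j.2.le).mono (c.grid.F_mono (Nat.le_succ _)) le_rfl
  have h1 : Measurable[c.grid.F (j + 1)] (St.x1 b (⟨c, j⟩ : St T f g x₀)) := (c.X1_F hc b j).mono (c.mid_le b j) le_rfl
  have hf0 : Measurable[c.grid.F (j + 1)] (fun ω => f (St.xf b (⟨c, j⟩ : St T f g x₀) ω)) := hc.f_meas.comp h0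
  have hf1 : Measurable[c.grid.F (j + 1)] (fun ω => f (St.x1 b (⟨c, j⟩ : St T f g x₀) ω)) := hc.f_meas.comp h1
  have hu : Measurable[c.grid.F (j + 1)] (St.u b (⟨c, j⟩ : St T f g x₀)) := by
    have e : (St.u b (⟨c, j⟩ : St T f g x₀)) = fun ω => St.x1 b (⟨c, j⟩ : St T f g x₀) ω - St.xf b (⟨c, j⟩ : St T f g x₀) ω
        - (St.dt (⟨c, j⟩ : St T f g x₀) / 2) • f (St.xf b (⟨c, j⟩ : St T f g x₀) ω) := by
      funext ω; rw [St.x1_eq]; abel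
    rw [e]
    have h2 := hf0.const_smul (St.dt (⟨c, j⟩ : St T f g x₀) / 2)
    exact (h1.sub h0).sub h2
  have hdu : Measurable[c.grid.F (j + 1)] (St.du b (⟨c, j⟩ : St T f g x₀)) := fd_meas_gen hc _ h0 hu
  have h3 := (hf0.add hf1).const_smul (St.dt (⟨c, j⟩ : St T f g x₀) / 2)
  have h4 := hdu.const_smul (St.dt (⟨c, j⟩ : St T f g x₀) / 2)
  exact h3.sub h4

lemma D_F (hc : Coef f g C) (j : Fin c.N) : Measurable[c.grid.F (j + 1)] (c.Dt j) := by
  rw [show c.Dt j = St.D3 (⟨c, j⟩ : St T f g x₀) from funext fun ω => c.Dt_of j ω]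
  have h0 : Measurable[c.grid.F (j + 1)] (St.xc (⟨c, j⟩ : St T f g x₀)) :=
    (c.Xc_F hc j j.2.le).mono (c.grid.F_mono (Nat.le_succ _)) le_rfl
  have hf0 : Measurable[c.grid.F (j + 1)] (fun ω => f (St.xc (⟨c, j⟩ : St T f g x₀) ω)) := hc.f_meas.comp h0
  have h2 := hf0.const_smul (St.dt (⟨c, j⟩ : St T f g x₀))
  exact (((c.Db_F hc false j).add (c.Db_F hc true j)).const_smul (2⁻¹ : ℝ)).sub h2

lemma M_F (hc : Coef f g C) (j : Fin c.N) : Measurable[c.grid.F (j + 1)] (c.Mt j) := by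
  have e : c.Mt j = fun ω => c.err (j + 1) ω - c.err j ω - c.Dt j ω := by
    funext ω; rw [c.err_succ j j.2]; abel
  rw [e]
  exact ((c.err_F hc (j + 1) j.2).sub ((c.err_F hc j j.2.le).mono (c.grid.F_mono (Nat.le_succ _)) le_rfl)).sub (c.D_F hc j)

lemma M_M (hc : Coef f g C) (j : Fin c.N) : AllMom c.Q (c.Mt j) := by
  rw [show c.Mt j = St.M3 (⟨c, j⟩ : St T f g x₀) from funext fun ω => c.Mt_of j ω]
  exact (St.M3_O hc).allMom (⟨c, j⟩ : St T f g x₀)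

lemma S_succ (n : ℕ) (ω : c.Q.Ω) : c.S (n + 1) ω = c.S n ω + c.Mt n ω := Finset.sum_range_succ _ _

lemma S_M (hc : Coef f g C) (n : ℕ) (hn : n ≤ c.N) : AllMom c.Q (c.S n) := by
  induction n with
  | zero => exact AllMom.const 0
  | succ n ih =>
    rw [show c.S (n + 1) = _ from funext (c.S_succ n)]
    exact (ih (by omega)).add (c.M_M hc ⟨n, hn⟩)

lemma S_F (hc : Coef f g C) (n : ℕ) (hn : n ≤ c.N) : Measurable[c.grid.F n] (c.S n) := by
  induction n with
  | zero => exact measurable_const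
  | succ n ih =>
    rw [show c.S (n + 1) = _ from funext (c.S_succ n)]
    exact ((ih (by omega)).mono (c.grid.F_mono (Nat.le_succ _)) le_rfl).add (c.M_F hc ⟨n, hn⟩)

lemma S_zero (ω : c.Q.Ω) : c.S 0 ω = 0 := by simp [S]
end Config

lemma S_step (x : St T f g x₀) (ω : x.P.Ω) : x.1.S (x.2 + 1) ω = x.1.S x.2 ω + 0 + St.M3 x ω := by
  rw [x.1.S_succ, add_zero, x.1.Mt_of]

lemma S_start (c : Config T f g x₀) (ω : c.Q.Ω) : ‖c.S 0 ω‖ ≤ 0 * c.s ^ 2 := by rw [c.S_zero]; simp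

/-- the accumulated martingale part is of order `dt` -/
lemma S_O (hc : Coef f g C) : IsO (fun c : Config T f g x₀ => c.Q) (fun c => c.s) 2 (fun c => c.S c.N) := by
  have h := propagation (fun c : Config T f g x₀ => c.grid) 2 (fun c n => c.S n) (fun _ _ => 0) St.M3
    (fun c n hn => c.S_M hc n hn) (fun c n hn => c.S_F hc n hn) 0 le_rfl S_start S_step
    (IsO.rel St.s_pos _ 2 2 (IsO.const (fun _ => (0 : Fin d → ℝ)) 0 le_rfl (by simp)) rfl)
    (IsO.rel St.s_pos _ 2 1 (St.M3_O hc) rfl) (St.mz3 hc)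
  exact (Bd.comp (fun c : Config T f g x₀ => (⟨c, Fin.last _⟩ : Times (fun c : Config T f g x₀ => c.grid))) h)

/-- a maximal bound, for even powers -/
theorem max_bound (hc : Coef f g C) (k : ℕ) (hk : Even k) (hk0 : k ≠ 0) : ∃ K : ℝ, 0 ≤ K ∧ ∀ c : Config T f g x₀,
    ∃ Z : c.Q.Ω → ℝ, Integrable Z c.Q.μ ∧ (∀ n ≤ c.N, ∀ ω, ‖c.err n ω‖ ^ (2 * k) ≤ Z ω) ∧ ∫ ω, Z ω ∂c.Q.μ ≤ K * (T / c.N) ^ (2 * k) := by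
  obtain ⟨K1, hK1, h1⟩ := (S_O hc (T := T) (x₀ := x₀)).2 (2 * k)
  obtain ⟨K2, hK2, h2⟩ := (St.D3_O hc (T := T) (x₀ := x₀)).2 (2 * k)
  refine ⟨2 ^ (2 * k) * (K2 * |T| ^ (2 * k) + d * (4 * K1)), by positivity, fun c => ?_⟩
  have hA := fun i : Fin d => doob c.Q c.grid.F c.grid.F_mono (fun n ω => c.S n ω i) c.N (fun n hn => (c.S_M hc n hn).apply i)
    (fun n hn => (measurable_pi_apply i).comp (c.S_F hc n hn))
    (fun n hn => by
      have h := St.mz3 hc (⟨c, ⟨n, hn⟩⟩ : St T f g x₀) i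
      have e : (fun ω => c.S (n + 1) ω i - c.S n ω i) = fun ω => St.M3 (⟨c, ⟨n, hn⟩⟩ : St T f g x₀) ω i := by
        funext ω
        rw [c.S_succ, c.Mt_of ⟨n, hn⟩]; simp
      rw [e]; exact h)
    (fun ω => by simp [c.S_zero]) k hk hk0
  choose A hAM hAle hAint using hA
  have hq : 2 * k = 2 * k - 1 + 1 := by omega
  have hs := c.s_pos
  have hTN := c.grid.hT
  have hN : (1 : ℝ) ≤ c.N := by exact_mod_cast c.hN
  have hT0 : 0 < T := c.T_pos
  have hDint : ∀ j ∈ Finset.range c.N, Integrable (fun ω => ‖c.Dt j ω‖ ^ (2 * k)) c.Q.μ := fun j hj => by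
    have := (h2 ⟨c, ⟨j, Finset.mem_range.1 hj⟩⟩).1
    simp only [c.Dt_of ⟨j, Finset.mem_range.1 hj⟩]
    exact this
  have hDbd : ∀ j ∈ Finset.range c.N, ∫ ω, ‖c.Dt j ω‖ ^ (2 * k) ∂c.Q.μ ≤ K2 * (c.s ^ 4) ^ (2 * k) := fun j hj => by
    have := (h2 ⟨c, ⟨j, Finset.mem_range.1 hj⟩⟩).2
    simp only [c.Dt_of ⟨j, Finset.mem_range.1 hj⟩]
    exact this
  refine ⟨fun ω => 2 ^ (2 * k) * ((c.N : ℝ) ^ (2 * k - 1) * ∑ j ∈ Finset.range c.N, ‖c.Dt j ω‖ ^ (2 * k) + ∑ i, A i ω ^ 2), ?_, fun n hn ω => ?_, ?_⟩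
  · refine Integrable.const_mul (Integrable.add (Integrable.const_mul (integrable_finsetSum _ hDint) _) ?_) _
    exact integrable_finsetSum _ fun i _ => ((hAM i).pow 2).int
  · have e1 : ‖c.err n ω‖ ≤ ∑ j ∈ Finset.range c.N, ‖c.Dt j ω‖ + ‖c.S n ω‖ := by
      rw [c.err_eq n hn]
      refine (norm_add_le _ _).trans ?_
      gcongr
      refine (norm_sum_le _ _).trans ?_
      exact Finset.sum_le_sum_of_subset_of_nonneg (Finset.range_subset_range.2 hn) fun _ _ _ => norm_nonneg _
    have e2 := pow_sum_div_card_le_sum_pow (s := Finset.range c.N) (f := fun j => ‖c.Dt j ω‖) (fun _ _ => norm_nonneg _) (2 * k - 1)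
    rw [← hq, Finset.card_range, div_le_iff₀ (by positivity)] at e2
    replace e2 := e2.trans_eq (mul_comm _ _)
    have e3 : ‖c.S n ω‖ ^ (2 * k) ≤ ∑ i, A i ω ^ 2 := by
      have := pi_norm_pow_le (c.S n ω) (2 * k - 1)
      rw [← hq] at this
      refine this.trans (Finset.sum_le_sum fun i _ => ?_)
      rw [mul_comm 2 k, pow_mul]
      exact pow_le_pow_left₀ (by positivity) (hAle i n hn ω) 2
    calc ‖c.err n ω‖ ^ (2 * k) ≤ (∑ j ∈ Finset.range c.N, ‖c.Dt j ω‖ + ‖c.S n ω‖) ^ (2 * k) := by gcongr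
      _ ≤ 2 ^ (2 * k) * ((∑ j ∈ Finset.range c.N, ‖c.Dt j ω‖) ^ (2 * k) + ‖c.S n ω‖ ^ (2 * k)) :=
        add_pow_le2 (Finset.sum_nonneg fun _ _ => norm_nonneg _) (norm_nonneg _) _
      _ ≤ _ := mul_le_mul_of_nonneg_left (add_le_add e2 e3) (by positivity)
  · have i1 : Integrable (fun ω => (c.N : ℝ) ^ (2 * k - 1) * ∑ j ∈ Finset.range c.N, ‖c.Dt j ω‖ ^ (2 * k)) c.Q.μ :=
      Integrable.const_mul (integrable_finsetSum _ hDint) _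
    have i2 : Integrable (fun ω => ∑ i, A i ω ^ 2) c.Q.μ := integrable_finsetSum _ fun i _ => ((hAM i).pow 2).int
    rw [integral_const_mul, integral_add i1 i2, integral_const_mul, integral_finsetSum _ hDint,
      integral_finsetSum _ (fun i _ => ((hAM i).pow 2).int), mul_assoc]
    refine mul_le_mul_of_nonneg_left ?_ (by positivity)
    rw [add_mul]
    refine add_le_add ?_ ?_
    · calc (c.N : ℝ) ^ (2 * k - 1) * ∑ j ∈ Finset.range c.N, ∫ ω, ‖c.Dt j ω‖ ^ (2 * k) ∂c.Q.μ
          ≤ (c.N : ℝ) ^ (2 * k - 1) * ∑ j ∈ Finset.range c.N, K2 * (c.s ^ 4) ^ (2 * k) := by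
            gcongr with j hj
            exact hDbd j hj
        _ = (c.N : ℝ) ^ (2 * k - 1 + 1) * (K2 * (c.s ^ 4) ^ (2 * k)) := by
            rw [Finset.sum_const, Finset.card_range, nsmul_eq_mul, pow_succ]; ring
        _ = K2 * (c.N * c.s ^ 2 * c.s ^ 2) ^ (2 * k) := by rw [← hq, mul_pow, mul_pow, ← pow_mul, ← pow_mul]; ring
        _ = K2 * |T| ^ (2 * k) * (T / c.N) ^ (2 * k) := by
            rw [show (c.N : ℝ) * c.s ^ 2 = T from hTN, c.s_sq, mul_pow, abs_of_pos hT0]; ring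
    · have : ∀ i ∈ (Finset.univ : Finset (Fin d)), ∫ ω, A i ω ^ 2 ∂c.Q.μ ≤ 4 * K1 * (T / c.N) ^ (2 * k) := fun i _ => by
        refine (hAint i).trans ?_
        rw [mul_assoc]
        refine mul_le_mul_of_nonneg_left ?_ (by norm_num)
        have h : ∫ ω, ‖c.S c.N ω‖ ^ (2 * k) ∂c.Q.μ ≤ K1 * (c.s ^ 2) ^ (2 * k) := (h1 c).2
        rw [c.s_sq] at h
        refine le_trans (integral_mono_of_nonneg (Filter.Eventually.of_forall fun ω => by positivity) (h1 c).1 (Filter.Eventually.of_forall fun ω => ?_)) h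
        exact pow_le_pow_left₀ (abs_nonneg _) (norm_le_pi_norm (c.S c.N ω) i) _
      refine (Finset.sum_le_sum this).trans_eq ?_
      simp; ring

theorem max_bound_rpow (hc : Coef f g C) (p : ℝ) (hp : 2 ≤ p) : ∃ K : ℝ, ∀ c : Config T f g x₀,
    ∫ ω, (Finset.range (c.N + 1)).sup' (Finset.nonempty_range_iff.mpr (Nat.succ_ne_zero c.N)) (fun n => ‖c.err n ω‖ ^ p) ∂c.Q.μ
      ≤ K * (T / c.N) ^ p := by
  obtain ⟨K, hK, h⟩ := max_bound (T := T) (x₀ := x₀) hc (2 * (⌈p⌉₊ + 1)) (even_two_mul _) (by omega)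
  set q : ℕ := 2 * (2 * (⌈p⌉₊ + 1)) with hq
  have hpq : p ≤ q := by
    refine (Nat.le_ceil p).trans ?_
    exact_mod_cast (by omega : ⌈p⌉₊ ≤ q)
  refine ⟨1 + K, fun c => ?_⟩
  obtain ⟨Z, hZ, hle, hIntg⟩ := h c
  have hdt := c.dt_pos
  set D := T / (c.N : ℝ) with hD
  have hD0 : 0 < D ^ p := Real.rpow_pos_of_pos hdt p
  have := c.Q.prob
  have hpt : ∀ n ≤ c.N, ∀ ω, ‖c.err n ω‖ ^ p ≤ D ^ p * (1 + Z ω / D ^ q) := fun n hn ω => by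
    have h0 : 0 ≤ ‖c.err n ω‖ / D := by positivity
    have h1 : (‖c.err n ω‖ / D) ^ p ≤ 1 + (‖c.err n ω‖ / D) ^ q := by
      rcases le_total (‖c.err n ω‖ / D) 1 with h | h
      · have : (‖c.err n ω‖ / D) ^ p ≤ 1 := Real.rpow_le_one h0 h (by linarith)
        have : 0 ≤ (‖c.err n ω‖ / D) ^ q := by positivity
        linarith
      · have := Real.rpow_le_rpow_of_exponent_le h hpq
        rw [Real.rpow_natCast] at this
        linarith
    have h2 : ‖c.err n ω‖ ^ p = D ^ p * (‖c.err n ω‖ / D) ^ p := by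
      rw [← Real.mul_rpow hdt.le h0, mul_div_cancel₀ _ hdt.ne']
    rw [h2]
    refine mul_le_mul_of_nonneg_left (h1.trans ?_) hD0.le
    rw [div_pow]
    gcongr
    exact hle n hn ω
  have hI : Integrable (fun ω => D ^ p * (1 + Z ω / D ^ q)) c.Q.μ := ((integrable_const _).add (hZ.div_const _)).const_mul _
  refine (integral_mono_of_nonneg (Filter.Eventually.of_forall fun ω => ?_) hI (Filter.Eventually.of_forall fun ω => ?_)).trans ?_
  · have h0 : (0 : ℝ) ≤ ‖c.err 0 ω‖ ^ p := by positivity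
    exact h0.trans (Finset.le_sup' (fun n => ‖c.err n ω‖ ^ p) (Finset.mem_range.2 (Nat.succ_pos _)))
  · refine Finset.sup'_le _ _ fun n hn => hpt n ?_ ω
    have := Finset.mem_range.1 hn
    omega
  · rw [integral_const_mul, integral_add (integrable_const _) (hZ.div_const _), integral_div, mul_comm]
    refine mul_le_mul_of_nonneg_right ?_ hD0.le
    have : (∫ ω, Z ω ∂c.Q.μ) / D ^ q ≤ K := by
      rw [div_le_iff₀ (by positivity)]; exact hIntg
    simpa using this
end AM

/-- in the antithetic Milstein setting (fine path `Xf` on the fine grid of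
spacing `Δt/2`, with `Xf (2n)` the value at coarse time `n Δt`; antithetic path `Xa` with
the two half-step Brownian increments swapped in each coarse step; `X̄_n = ½(Xf_n + Xa_n)`),
for every `p ≥ 2` there is a constant `K_p`, depending only on `p, T, f, g`, with
`E[max_{0≤n≤N} ‖X̄_n − Xc_n‖^p] ≤ K_p Δt^p` for every `N ≥ 1`, `Δt = T/N`. -/
theorem antithetic_milstein_average_coarse_difference
    {d m : ℕ} (hd : 0 < d) (hm : 0 < m) (T : ℝ) (hT : 0 < T)
    (f : (Fin d → ℝ) → Fin d → ℝ) (g : (Fin d → ℝ) → Fin d → Fin m → ℝ)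
    (hf : ContDiff ℝ 2 f) (hg : ContDiff ℝ 2 g) (Cfg : ℝ)
    (hf1 : ∀ x, ‖fderiv ℝ f x‖ ≤ Cfg) (hf2 : ∀ x, ‖iteratedFDeriv ℝ 2 f x‖ ≤ Cfg)
    (hg1 : ∀ x, ‖fderiv ℝ g x‖ ≤ Cfg) (hg2 : ∀ x, ‖iteratedFDeriv ℝ 2 g x‖ ≤ Cfg)
    (x₀ : Fin d → ℝ) (p : ℝ) (hp : 2 ≤ p) :
    ∃ K : ℝ, ∀ N : ℕ, 1 ≤ N →
      ∀ (Ω : Type) (_ : MeasurableSpace Ω) (μ : Measure Ω), IsProbabilityMeasure μ →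
      ∀ (W : Fin N → Bool → Ω → Fin m → ℝ) (Xf Xa Xc : ℕ → Ω → Fin d → ℝ),
        (∀ n b j, Measurable fun ω => W n b ω j) →
        (∀ n b j, μ.map (fun ω => W n b ω j) = gaussianReal 0 (Real.toNNReal (T / N / 2))) →
        iIndepFun
          (fun q : Fin N × Bool × Fin m => fun ω => W q.1 q.2.1 ω q.2.2) μ →
        (∀ ω, Xf 0 ω = x₀) → (∀ ω, Xa 0 ω = x₀) → (∀ ω, Xc 0 ω = x₀) →
        (∀ (n : Fin N) ω, Xf (2 * (n : ℕ) + 1) ω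
            = milsteinStep f g (T / N / 2) (Xf (2 * (n : ℕ)) ω) (W n false ω)) →
        (∀ (n : Fin N) ω, Xf (2 * (n : ℕ) + 2) ω
            = milsteinStep f g (T / N / 2) (Xf (2 * (n : ℕ) + 1) ω) (W n true ω)) →
        (∀ (n : Fin N) ω, Xa (2 * (n : ℕ) + 1) ω
            = milsteinStep f g (T / N / 2) (Xa (2 * (n : ℕ)) ω) (W n true ω)) →
        (∀ (n : Fin N) ω, Xa (2 * (n : ℕ) + 2) ω
            = milsteinStep f g (T / N / 2) (Xa (2 * (n : ℕ) + 1) ω) (W n false ω)) →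
        (∀ (n : Fin N) ω, Xc ((n : ℕ) + 1) ω
            = milsteinStep f g (T / N) (Xc (n : ℕ) ω) (W n false ω + W n true ω)) →
        (∫ ω, (Finset.range (N + 1)).sup'
            (Finset.nonempty_range_iff.mpr (Nat.succ_ne_zero N))
            (fun n => ‖(2⁻¹ : ℝ) • (Xf (2 * n) ω + Xa (2 * n) ω) - Xc n ω‖ ^ p) ∂μ)
          ≤ K * (T / N) ^ p := by
  obtain ⟨C, hc⟩ := AM.exists_coef f g hf hg Cfg hf1 hf2 hg1 hg2
  obtain ⟨K, hK⟩ := AM.max_bound_rpow (T := T) (x₀ := x₀) hc p hp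
  refine ⟨K, ?_⟩
  intro N hN Ω mΩ μ hμ W Xf Xa Xc hW hlaw hind hf0 ha0 hc0 hfs1 hfs2 has1 has2 hcs
  exact hK
    { Q := ⟨Ω, mΩ, μ, hμ⟩
      N := N
      hN := hN
      T_pos := hT
      W := W
      X := fun b => bif b then Xa else Xf
      Xc := Xc
      W_meas := hW
      W_law := hlaw
      W_ind := hind
      X0 := fun b ω => by cases b; exacts [hf0 ω, ha0 ω]
      Xc0 := hc0
      step1 := fun b n ω => by cases b; exacts [hfs1 n ω, has1 n ω]
      step2 := fun b n ω => by cases b; exacts [hfs2 n ω, has2 n ω]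
      stepc := hcs }
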